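/- arXiv:1906.00326 — 6 statements merged into one kernel-verified Lean document; each statement's English description precedes it below -/
import Mathlib

section
/- Let n ≥ 1 and let d be an integer with 0 < d ≤ n. Then for every multilinear real polynomial p in n variables of degree strictly less than d, there exists x ∈ {-1,1}^n with |p(x) − AND(x)| ≥ 2^{−n}·Σ_{j=0}^{⌊(n−d)/2⌋} C(n,j), i.e., the error is at least the probability that a Binomial(n,1/2) random variable is at most (n−d)/2. -/
open Finset

/-- Map a Boolean vector to the corresponding point of the cube `{-1,1}^n`
(`true ↦ 1`, `false ↦ -1`). -/
def toPM {n : ℕ} (b : Fin n → Bool) : Fin n → ℝ := fun i => if b i then 1 else -1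

/-- Evaluation of the multilinear polynomial with coefficients `c` at `x`. -/
def evalPoly {n : ℕ} (c : Finset (Fin n) → ℝ) (x : Fin n → ℝ) : ℝ :=
  ∑ S : Finset (Fin n), c S * ∏ i ∈ S, x i

/-- `AND : {-1,1}^n → {0,1}` (in Boolean-vector coordinates): 1 iff all inputs are `1`. -/
def andF {n : ℕ} (b : Fin n → Bool) : ℝ := if b = fun _ => true then 1 else 0

/-!
Let `k = ⌊(n - d) / 2⌋`, let `g` be the sum of all monomials of degree at most `k`, and let `χ` be
the full monomial `x₁ ⋯ xₙ`. The signed weight `χ g²` is orthogonal to every polynomial of degree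
less than `n - 2k`, hence to `p`, so pairing it with `AND - p` leaves only the value `g(1, …, 1)²`
at the support of `AND`. Therefore `max |p - AND|` is at least `g(1, …, 1)² / ∑ g²`. By
orthogonality of monomials `∑ g²` is `2 ^ n` times the number of monomials in `g`, while
`g(1, …, 1)` is that number itself.
-/

section Walsh

variable {ι : Type*}

/-- The Walsh function of `S`: the monomial `∏ i ∈ S, x i` on the cube `{-1,1}^ι`, in the Boolean
coordinates of `toPM`. -/
def walsh (S : Finset ι) (b : ι → Bool) : ℝ := ∏ i ∈ S, if b i then 1 else -1

lemma walsh_true (S : Finset ι) : walsh S (fun _ => true) = 1 := by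
  simp [walsh]

lemma abs_walsh (S : Finset ι) (b : ι → Bool) : |walsh S b| = 1 := by
  rw [walsh, abs_prod]
  exact prod_eq_one fun i _ => by split_ifs <;> simp

variable [DecidableEq ι]

lemma walsh_eq_prod_of_subset {S T : Finset ι} (hST : S ⊆ T) (b : ι → Bool) :
    walsh S b = ∏ i ∈ T, if i ∈ S then (if b i then 1 else -1) else 1 := by
  rw [walsh, prod_ite_mem, inter_eq_right.mpr hST]

lemma walsh_mul_walsh (A B : Finset ι) (b : ι → Bool) :
    walsh A b * walsh B b = walsh (symmDiff A B) b := by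
  rw [walsh_eq_prod_of_subset subset_union_left, walsh_eq_prod_of_subset subset_union_right,
    walsh_eq_prod_of_subset symmDiff_subset_union, ← prod_mul_distrib]
  refine prod_congr rfl fun i _ => ?_
  by_cases hA : i ∈ A <;> by_cases hB : i ∈ B <;> cases b i <;> simp [mem_symmDiff, hA, hB]

variable [Fintype ι]

lemma sum_walsh (S : Finset ι) :
    ∑ b, walsh S b = if S = ∅ then 2 ^ Fintype.card ι else 0 := by
  rcases S.eq_empty_or_nonempty with rfl | ⟨i, hi⟩
  · simp [walsh]
  · simp only [walsh_eq_prod_of_subset (subset_univ S), ne_empty_of_mem hi, if_false]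
    rw [← Fintype.prod_sum fun i (v : Bool) => if i ∈ S then (if v then (1 : ℝ) else -1) else 1]
    exact prod_eq_zero (mem_univ i) (by simp [hi])

lemma sum_walsh_mul_walsh (A B : Finset ι) :
    ∑ b, walsh A b * walsh B b = if A = B then 2 ^ Fintype.card ι else 0 := by
  simp only [walsh_mul_walsh, sum_walsh, ← bot_eq_empty, symmDiff_eq_bot]

lemma sum_sq_sum_walsh (F : Finset (Finset ι)) :
    ∑ b, (∑ S ∈ F, walsh S b) ^ 2 = 2 ^ Fintype.card ι * #F := by
  calc ∑ b, (∑ S ∈ F, walsh S b) ^ 2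
      = ∑ A ∈ F, ∑ B ∈ F, ∑ b, walsh A b * walsh B b := by
        simp only [sq, sum_mul_sum]
        rw [sum_comm]
        exact sum_congr rfl fun A _ => sum_comm
    _ = ∑ A ∈ F, 2 ^ Fintype.card ι := by
        refine sum_congr rfl fun A hA => ?_
        simp only [sum_walsh_mul_walsh, sum_ite_eq, hA, if_true]
    _ = 2 ^ Fintype.card ι * #F := by rw [sum_const, nsmul_eq_mul, mul_comm]

end Walsh

section LowDegree

variable {ι : Type*}

variable (ι) in
/-- The functions on the cube `{-1,1}^ι` given by multilinear polynomials of degree at most `k`. -/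
def lowDegree (k : ℕ) : Submodule ℝ ((ι → Bool) → ℝ) :=
  Submodule.span ℝ (walsh '' {S | #S ≤ k})

lemma walsh_mem_lowDegree {k : ℕ} {S : Finset ι} (hS : #S ≤ k) : walsh S ∈ lowDegree ι k :=
  Submodule.subset_span ⟨S, hS, rfl⟩

lemma mul_mem_lowDegree {j k : ℕ} {f g : (ι → Bool) → ℝ} (hf : f ∈ lowDegree ι j)
    (hg : g ∈ lowDegree ι k) : f * g ∈ lowDegree ι (j + k) := by
  classical
  suffices h : lowDegree ι j * lowDegree ι k ≤ lowDegree ι (j + k) from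
    h (Submodule.mul_mem_mul hf hg)
  rw [lowDegree, lowDegree, Submodule.span_mul_span, Submodule.span_le]
  rintro _ ⟨_, ⟨A, hA, rfl⟩, _, ⟨B, hB, rfl⟩, rfl⟩
  have hmul : walsh A * walsh B = walsh (symmDiff A B) := funext (walsh_mul_walsh A B)
  have hcard : #(symmDiff A B) ≤ #A + #B :=
    (card_le_card symmDiff_subset_union).trans (card_union_le A B)
  simp only [hmul, SetLike.mem_coe]
  exact walsh_mem_lowDegree (hcard.trans (add_le_add hA hB))

variable [Fintype ι]

section SumOverCube

variable [DecidableEq ι]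

lemma sum_walsh_univ_mul_eq_zero {k : ℕ} {f : (ι → Bool) → ℝ} (hf : f ∈ lowDegree ι k)
    (hk : k < Fintype.card ι) : ∑ b, walsh univ b * f b = 0 := by
  induction hf using Submodule.span_induction with
  | mem f hf =>
    obtain ⟨S, hS, rfl⟩ := hf
    have hne : univ ≠ S := by
      rintro rfl
      exact hk.not_ge hS
    rw [sum_walsh_mul_walsh, if_neg hne]
  | zero => simp
  | add f g _ _ hf hg => simp only [Pi.add_apply, mul_add, sum_add_distrib, hf, hg, add_zero]
  | smul c f _ hf => simp only [Pi.smul_apply, mul_smul_comm, ← smul_sum, hf, smul_zero]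

lemma abs_sum_walsh_univ_mul_le {j k : ℕ} {q f : (ι → Bool) → ℝ} (hq : q ∈ lowDegree ι j)
    (hf : f ∈ lowDegree ι k) (hjk : j + k < Fintype.card ι) (h : (ι → Bool) → ℝ) :
    |∑ b, walsh univ b * (q b * h b)| ≤ ∑ b, |q b| * |f b - h b| := by
  have horth : ∑ b, walsh univ b * (q b * f b) = 0 :=
    sum_walsh_univ_mul_eq_zero (mul_mem_lowDegree hq hf) hjk
  calc |∑ b, walsh univ b * (q b * h b)|
      = |∑ b, walsh univ b * (q b * (f b - h b))| := by
        simp only [mul_sub, sum_sub_distrib, horth, zero_sub, abs_neg]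
    _ ≤ ∑ b, |walsh univ b * (q b * (f b - h b))| := abs_sum_le_sum_abs _ _
    _ = ∑ b, |q b| * |f b - h b| := by simp only [abs_mul, abs_walsh, one_mul]

lemma sq_le_sum_sq_mul_abs_sub_ite {j k : ℕ} {g f : (ι → Bool) → ℝ} (hg : g ∈ lowDegree ι j)
    (hf : f ∈ lowDegree ι k) (hjk : 2 * j + k < Fintype.card ι) (a : ι → Bool) :
    g a ^ 2 ≤ ∑ b, g b ^ 2 * |f b - if b = a then 1 else 0| := by
  have hgg : g * g ∈ lowDegree ι (2 * j) := two_mul j ▸ mul_mem_lowDegree hg hg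
  simpa [abs_mul, abs_walsh, ← sq] using
    abs_sum_walsh_univ_mul_le hgg hf hjk fun b => if b = a then 1 else 0

end SumOverCube

theorem exists_card_div_two_pow_le_abs_sub_ite {j k : ℕ} {f : (ι → Bool) → ℝ}
    (hf : f ∈ lowDegree ι k) (hjk : 2 * j + k < Fintype.card ι) :
    ∃ b, (#{S : Finset ι | #S ≤ j} : ℝ) / 2 ^ Fintype.card ι ≤
      |f b - if b = fun _ => true then 1 else 0| := by
  classical
  set F : Finset (Finset ι) := {S | #S ≤ j}
  set err : (ι → Bool) → ℝ := fun b => |f b - if b = fun _ => true then 1 else 0|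
  obtain ⟨b, hb⟩ := Finite.exists_max err
  refine ⟨b, ?_⟩
  have hFpos : (0 : ℝ) < #F := by
    exact_mod_cast card_pos.mpr ⟨∅, by simp [F]⟩
  have hkernel : ∑ S ∈ F, walsh S ∈ lowDegree ι j :=
    Submodule.sum_mem _ fun S hS => walsh_mem_lowDegree (mem_filter.mp hS).2
  have hbound : (#F : ℝ) * #F ≤ #F * (err b * 2 ^ Fintype.card ι) :=
    calc (#F : ℝ) * #F = (∑ S ∈ F, walsh S (fun _ => true)) ^ 2 := by simp [walsh_true, sq]
      _ ≤ ∑ c, (∑ S ∈ F, walsh S c) ^ 2 * err c := by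
        simpa only [Finset.sum_apply] using
          sq_le_sum_sq_mul_abs_sub_ite hkernel hf hjk fun _ => true
      _ ≤ ∑ c, (∑ S ∈ F, walsh S c) ^ 2 * err b := by gcongr with c; exact hb c
      _ = #F * (err b * 2 ^ Fintype.card ι) := by rw [← sum_mul, sum_sq_sum_walsh]; ring
  exact (div_le_iff₀ (by positivity)).mpr (le_of_mul_le_mul_left hbound hFpos)

end LowDegree

lemma card_filter_card_le_eq_sum_choose (ι : Type*) [Fintype ι] (k : ℕ) :
    #{S : Finset ι | #S ≤ k} = ∑ j ∈ range (k + 1), (Fintype.card ι).choose j := by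
  have hmaps : Set.MapsTo card (({S : Finset ι | #S ≤ k} : Finset _) : Set (Finset ι))
      (range (k + 1)) := fun S hS => by
    simpa [Nat.lt_succ_iff] using hS
  rw [card_eq_sum_card_fiberwise hmaps]
  refine sum_congr rfl fun j hj => ?_
  rw [← card_univ, ← card_powersetCard]
  congr 1
  ext S
  simp only [mem_range] at hj
  simp only [mem_filter, mem_univ, true_and, mem_powersetCard, subset_univ]
  omega

lemma evalPoly_toPM_mem_lowDegree {n k : ℕ} {p : Finset (Fin n) → ℝ}
    (hp : ∀ S, p S ≠ 0 → #S ≤ k) : (fun b => evalPoly p (toPM b)) ∈ lowDegree (Fin n) k := by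
  have hsum : (fun b => evalPoly p (toPM b)) = ∑ S, p S • walsh S := by
    ext b
    simp only [evalPoly, toPM, Finset.sum_apply, Pi.smul_apply, smul_eq_mul, walsh]
  rw [hsum]
  refine Submodule.sum_mem _ fun S _ => ?_
  by_cases hS : p S = 0
  · simp [hS]
  · exact Submodule.smul_mem _ _ (walsh_mem_lowDegree (hp S hS))

theorem stmt2 (n d : ℕ) (hn : 1 ≤ n) (hd : 0 < d) (hdn : d ≤ n)
    (p : Finset (Fin n) → ℝ) (hdeg : ∀ S : Finset (Fin n), p S ≠ 0 → S.card < d) :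
    ∃ b : Fin n → Bool,
      (∑ j ∈ Finset.range ((n - d) / 2 + 1), (n.choose j : ℝ)) / 2 ^ n ≤
        |evalPoly p (toPM b) - andF b| := by
  have hp : (fun b => evalPoly p (toPM b)) ∈ lowDegree (Fin n) (d - 1) :=
    evalPoly_toPM_mem_lowDegree fun S hS => Nat.le_pred_of_lt (hdeg S hS)
  have hcard : 2 * ((n - d) / 2) + (d - 1) < Fintype.card (Fin n) := by
    rw [Fintype.card_fin]
    omega
  simpa only [card_filter_card_le_eq_sum_choose, Fintype.card_fin, Nat.cast_sum, andF] using
    exists_card_div_two_pow_le_abs_sub_ite hp hcard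
end

section
/- Let n ≥ 1 and let w ∈ ℝ^n be a nonzero vector with nonnegative entries. Then every multilinear real polynomial p of w-weighted degree strictly less than ‖w‖₂/2 satisfies max_{x ∈ {-1,1}^n} |p(x) − AND(x)| ≥ 3/32. In other words, the w-weighted 3/32-approximate degree of AND is at least ‖w‖₂/2. -/
open Finset

/-! Substitute `x i = cos (w i * t)` into `p`. By product-to-sum formulas this gives a combination
`q t` of cosines with frequencies at most the weighted degree `L` of `p`, and averaging over the
product distribution on the cube with mean `x` shows that `q t` approximates
`∏ i, (1 + cos (w i * t)) / 2` as well as `p` approximates AND. That product drops from `1` at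
`t = 0` to at most `1 / 2` at `t = 2 / ‖w‖`. On the other hand Bernstein's inequality bounds the
second derivative of `q - 1 / 2` by `L ^ 2` times its supremum, and since `q` is even it cannot drop
that fast when `L` is small. -/

open Real

section CosSpan

/-- The space of cosine polynomials of type `L`: real linear combinations of the functions
`t ↦ cos (ω * t)` with arbitrary real frequencies `|ω| ≤ L`. It is the class to which Bernstein's
inequality is applied. -/
def cosSpan (L : ℝ) : Submodule ℝ (ℝ → ℝ) :=
  Submodule.span ℝ {f | ∃ ω : ℝ, |ω| ≤ L ∧ f = fun t ↦ cos (ω * t)}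

variable {L : ℝ} {f : ℝ → ℝ}

theorem cos_mem_cosSpan {ω : ℝ} (hω : |ω| ≤ L) : (fun t ↦ cos (ω * t)) ∈ cosSpan L :=
  Submodule.subset_span ⟨ω, hω, rfl⟩

theorem cosSpan_mono {K L : ℝ} (h : K ≤ L) : cosSpan K ≤ cosSpan L :=
  Submodule.span_mono fun _ ⟨ω, hω, hf⟩ ↦ ⟨ω, hω.trans h, hf⟩

theorem const_mem_cosSpan (hL : 0 ≤ L) (c : ℝ) : (fun _ ↦ c) ∈ cosSpan L := by
  have one_mem : (fun t : ℝ ↦ cos (0 * t)) ∈ cosSpan L := cos_mem_cosSpan (by simpa using hL)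
  convert (cosSpan L).smul_mem c one_mem using 1
  ext t
  simp

theorem mul_mem_cosSpan {K : ℝ} {g : ℝ → ℝ} (hf : f ∈ cosSpan K) (hg : g ∈ cosSpan L) :
    f * g ∈ cosSpan (K + L) := by
  suffices cosSpan K * cosSpan L ≤ cosSpan (K + L) from this (Submodule.mul_mem_mul hf hg)
  rw [cosSpan, cosSpan, Submodule.span_mul_span, Submodule.span_le]
  rintro _ ⟨_, ⟨ω, hω, rfl⟩, _, ⟨η, hη, rfl⟩, rfl⟩
  have product_to_sum : (fun t ↦ cos (ω * t)) * (fun t ↦ cos (η * t)) =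
      (1 / 2 : ℝ) • ((fun t ↦ cos ((ω - η) * t)) + fun t ↦ cos ((ω + η) * t)) := by
    ext t
    simp only [Pi.mul_apply, Pi.smul_apply, Pi.add_apply, smul_eq_mul, sub_mul, add_mul, cos_sub,
      cos_add]
    ring
  change _ * _ ∈ cosSpan (K + L)
  rw [product_to_sum]
  exact Submodule.smul_mem _ _ <| Submodule.add_mem _
    (cos_mem_cosSpan <| (abs_sub ω η).trans (add_le_add hω hη))
    (cos_mem_cosSpan <| (abs_add_le ω η).trans (add_le_add hω hη))

theorem prod_cos_mem_cosSpan {ι : Type*} (s : Finset ι) (w : ι → ℝ) :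
    (fun t ↦ ∏ i ∈ s, cos (w i * t)) ∈ cosSpan (∑ i ∈ s, |w i|) := by
  classical
  induction s using Finset.induction_on with
  | empty => simpa using const_mem_cosSpan le_rfl 1
  | insert i s hi ih =>
    simp only [Finset.prod_insert hi, Finset.sum_insert hi]
    exact mul_mem_cosSpan (cos_mem_cosSpan le_rfl) ih

theorem contDiff_of_mem_cosSpan (hf : f ∈ cosSpan L) : ContDiff ℝ 2 f := by
  induction hf using Submodule.span_induction with
  | mem _ hf => obtain ⟨ω, -, rfl⟩ := hf; fun_prop
  | zero => exact contDiff_const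
  | add _ _ _ _ hf hg => exact hf.add hg
  | smul c _ _ hf => exact contDiff_const.smul hf

theorem even_of_mem_cosSpan (hf : f ∈ cosSpan L) : f.Even := by
  induction hf using Submodule.span_induction with
  | mem _ hf => obtain ⟨ω, -, rfl⟩ := hf; intro t; simp
  | zero => exact fun _ ↦ rfl
  | add _ _ _ _ hf hg => exact fun t ↦ congrArg₂ (· + ·) (hf t) (hg t)
  | smul c _ _ hf => exact fun t ↦ congrArg (c * ·) (hf t)

end CosSpan

section Bernstein

variable {L M : ℝ} {f : ℝ → ℝ}

-- Here and below the term `n = 0` vanishes because `1 / 0 = 0`.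
theorem hasSum_alternating_cos_div_sq (hL : 0 < L) {ω : ℝ} (hω : |ω| ≤ L) :
    HasSum (fun n : ℕ ↦ (-1) ^ n / (n : ℝ) ^ 2 * cos (ω * (n * (π / L))))
      (π ^ 2 * (ω ^ 2 / (4 * L ^ 2) - 1 / 12)) := by
  obtain ⟨hω₁, hω₂⟩ := abs_le.mp hω
  have mem_unit : (ω + L) / (2 * L) ∈ Set.Icc (0 : ℝ) 1 :=
    ⟨div_nonneg (by linarith) (by linarith), (div_le_one (by linarith)).mpr (by linarith)⟩
  convert hasSum_one_div_nat_pow_mul_cos one_ne_zero mem_unit using 1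
  · ext n
    have phase : 2 * π * n * ((ω + L) / (2 * L)) = ω * (n * (π / L)) + n * π := by
      field_simp
    rw [phase, cos_add_nat_mul_pi]
    ring
  · rw [← bernoulliFun, mul_one, bernoulliFun_two]
    simp only [Nat.factorial]
    field_simp
    ring

-- M. Riesz's interpolation formula; the total mass of its coefficients is the constant in
-- Bernstein's inequality.
theorem hasSum_iteratedDeriv_two_of_mem_cosSpan (hL : 0 < L) (hf : f ∈ cosSpan L) (t : ℝ) :
    HasSum (fun n : ℕ ↦ (-1) ^ n / (n : ℝ) ^ 2 *
        ((f (t + n * (π / L)) + f (t - n * (π / L))) / 2))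
      (-π ^ 2 * (iteratedDeriv 2 f t / (4 * L ^ 2) + f t / 12)) := by
  induction hf using Submodule.span_induction with
  | mem _ hf =>
    obtain ⟨ω, hω, rfl⟩ := hf
    beta_reduce
    have second_deriv : iteratedDeriv 2 (fun t ↦ cos (ω * t)) t = -(ω ^ 2 * cos (ω * t)) := by
      rw [iteratedDeriv_comp_const_mul contDiff_cos, iteratedDeriv_even_cos 1]
      simp
    convert! (hasSum_alternating_cos_div_sq hL hω).mul_left (cos (ω * t)) using 1
    · ext n
      rw [mul_add, mul_sub, cos_add, cos_sub]
      ring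
    · rw [second_deriv]
      ring
  | zero => simp
  | add f g hf hg ihf ihg =>
    convert ihf.add ihg using 1
    · ext n
      simp only [Pi.add_apply]
      ring
    · rw [iteratedDeriv_add (contDiff_of_mem_cosSpan hf).contDiffAt
        (contDiff_of_mem_cosSpan hg).contDiffAt, Pi.add_apply]
      ring
  | smul c f _ ih =>
    convert! ih.mul_left c using 1
    · ext n
      simp only [Pi.smul_apply, smul_eq_mul]
      ring
    · rw [iteratedDeriv_const_smul_field, Pi.smul_apply, smul_eq_mul, smul_eq_mul]
      ring

theorem abs_iteratedDeriv_two_le_of_mem_cosSpan (hL : 0 < L) (hf : f ∈ cosSpan L)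
    (hM : ∀ t, |f t| ≤ M) (t : ℝ) : |iteratedDeriv 2 f t| ≤ M * L ^ 2 := by
  have term_le (n : ℕ) : ‖(-1) ^ n / (n : ℝ) ^ 2 *
      ((f (t + n * (π / L)) + f (t - n * (π / L))) / 2)‖ ≤ M * (1 / (n : ℝ) ^ 2) := by
    have average_le : |(f (t + n * (π / L)) + f (t - n * (π / L))) / 2| ≤ M := by
      rw [abs_div, abs_two, div_le_iff₀ two_pos, mul_two]
      exact (abs_add_le _ _).trans (add_le_add (hM _) (hM _))
    rw [norm_mul, norm_div, norm_pow, norm_neg, norm_one, one_pow, norm_pow, norm_natCast, mul_comm]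
    gcongr
    exact average_le
  have series_le : |-π ^ 2 * (iteratedDeriv 2 f t / (4 * L ^ 2) + f t / 12)| ≤ M * (π ^ 2 / 6) := by
    rw [← (hasSum_iteratedDeriv_two_of_mem_cosSpan hL hf t).tsum_eq]
    exact tsum_of_norm_bounded (hasSum_zeta_two.mul_left M) term_le
  have scaled_le : |iteratedDeriv 2 f t / (4 * L ^ 2) + f t / 12| ≤ M / 6 := by
    rw [abs_mul, abs_neg, abs_of_pos (by positivity), mul_div_left_comm] at series_le
    exact le_of_mul_le_mul_left series_le (by positivity)
  have quotient_le : |iteratedDeriv 2 f t / (4 * L ^ 2)| ≤ M / 4 := by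
    have value_le := abs_le.mp (hM t)
    rw [abs_le] at scaled_le ⊢
    constructor <;> linarith
  rw [abs_div, abs_of_pos (by positivity : 0 < 4 * L ^ 2), div_le_iff₀ (by positivity)]
    at quotient_le
  linarith

theorem abs_sub_map_zero_le_of_even {C : ℝ} (hf : ContDiff ℝ 2 f) (heven : f.Even)
    (hC : ∀ t, |iteratedDeriv 2 f t| ≤ C) (t : ℝ) : |f t - f 0| ≤ C * t ^ 2 / 2 := by
  rcases eq_or_ne 0 t with rfl | ht
  · simp
  have deriv_zero : deriv f 0 = 0 := by
    have odd_deriv : deriv f 0 = -deriv f 0 := by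
      simpa [funext heven] using deriv_comp_neg f 0
    linarith
  have derivWithin_zero : derivWithin f (Set.uIcc 0 t) 0 = 0 := by
    rw [(hf.differentiable two_ne_zero 0).derivWithin
      (uniqueDiffOn_uIcc ht 0 Set.left_mem_uIcc), deriv_zero]
  obtain ⟨ξ, -, taylor⟩ :=
    taylor_mean_remainder_lagrange_iteratedDeriv (n := 1) ht hf.contDiffOn
  have expansion : f t - f 0 = iteratedDeriv 2 f ξ * t ^ 2 / 2 := by
    simpa [taylorWithinEval_succ, derivWithin_zero] using taylor
  rw [expansion, abs_div, abs_mul, abs_two, abs_of_nonneg (sq_nonneg t)]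
  gcongr
  exact hC ξ

theorem abs_sub_map_zero_le_of_mem_cosSpan (hL : 0 < L) (hf : f ∈ cosSpan L)
    (hM : ∀ t, |f t| ≤ M) (t : ℝ) : |f t - f 0| ≤ M * L ^ 2 * t ^ 2 / 2 :=
  abs_sub_map_zero_le_of_even (contDiff_of_mem_cosSpan hf) (even_of_mem_cosSpan hf)
    (abs_iteratedDeriv_two_le_of_mem_cosSpan hL hf hM) t

end Bernstein

section CubeWeight

variable {n : ℕ} {x : Fin n → ℝ} {p : Finset (Fin n) → ℝ}

/-- The mass at `toPM b` of the product probability distribution on `{-1, 1}ⁿ` with mean `x`,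
encoded as a real number so that it is a polynomial in `x`; it is nonnegative for
`x ∈ [-1, 1]ⁿ`. -/
noncomputable def cubeWeight (x : Fin n → ℝ) (b : Fin n → Bool) : ℝ :=
  ∏ i, (1 + toPM b i * x i) / 2

theorem cubeWeight_nonneg (hx : ∀ i, |x i| ≤ 1) (b : Fin n → Bool) : 0 ≤ cubeWeight x b := by
  refine Finset.prod_nonneg fun i _ ↦ ?_
  obtain ⟨hx₁, hx₂⟩ := abs_le.mp (hx i)
  unfold toPM
  split_ifs <;> linarith

theorem sum_cubeWeight_mul_prod (x : Fin n → ℝ) (S : Finset (Fin n)) :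
    ∑ b, cubeWeight x b * ∏ i ∈ S, toPM b i = ∏ i ∈ S, x i := by
  let sign (y : Bool) : ℝ := if y then 1 else -1
  let factor (i : Fin n) (y : Bool) : ℝ :=
    (1 + sign y * x i) / 2 * if i ∈ S then sign y else 1
  calc ∑ b, cubeWeight x b * ∏ i ∈ S, toPM b i
      = ∑ b : Fin n → Bool, ∏ i, factor i (b i) := by
        refine Finset.sum_congr rfl fun b _ ↦ ?_
        rw [Finset.prod_mul_distrib, Finset.prod_ite_mem, Finset.univ_inter]
        rfl
    _ = ∏ i, ∑ y, factor i y := (Fintype.prod_sum factor).symm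
    _ = ∏ i, if i ∈ S then x i else 1 := by
        refine Finset.prod_congr rfl fun i _ ↦ ?_
        by_cases hi : i ∈ S <;> simp [factor, sign, hi] <;> ring
    _ = ∏ i ∈ S, x i := by rw [Finset.prod_ite_mem, Finset.univ_inter]

theorem sum_cubeWeight (x : Fin n → ℝ) : ∑ b, cubeWeight x b = 1 := by
  simpa using sum_cubeWeight_mul_prod x ∅

theorem sum_cubeWeight_mul_evalPoly (x : Fin n → ℝ) (p : Finset (Fin n) → ℝ) :
    ∑ b, cubeWeight x b * evalPoly p (toPM b) = evalPoly p x := by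
  simp only [evalPoly, Finset.mul_sum]
  rw [Finset.sum_comm]
  refine Finset.sum_congr rfl fun S _ ↦ ?_
  simp only [mul_left_comm _ (p S)]
  rw [← Finset.mul_sum, sum_cubeWeight_mul_prod]

theorem sum_cubeWeight_mul_andF (x : Fin n → ℝ) :
    ∑ b, cubeWeight x b * andF b = ∏ i, (1 + x i) / 2 := by
  simp [andF, cubeWeight, toPM]

theorem abs_evalPoly_sub_prod_le {ε : ℝ} (hp : ∀ b, |evalPoly p (toPM b) - andF b| ≤ ε)
    (hx : ∀ i, |x i| ≤ 1) : |evalPoly p x - ∏ i, (1 + x i) / 2| ≤ ε :=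
  calc |evalPoly p x - ∏ i, (1 + x i) / 2|
      = |∑ b, cubeWeight x b * (evalPoly p (toPM b) - andF b)| := by
        simp only [mul_sub, Finset.sum_sub_distrib, sum_cubeWeight_mul_evalPoly,
          sum_cubeWeight_mul_andF]
    _ ≤ ∑ b, cubeWeight x b * |evalPoly p (toPM b) - andF b| := by
        refine (Finset.abs_sum_le_sum_abs _ _).trans_eq (Finset.sum_congr rfl fun b _ ↦ ?_)
        rw [abs_mul, abs_of_nonneg (cubeWeight_nonneg hx b)]
    _ ≤ ∑ b, cubeWeight x b * ε := by
        gcongr with b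
        · exact cubeWeight_nonneg hx b
        · exact hp b
    _ = ε := by rw [← Finset.sum_mul, sum_cubeWeight, one_mul]

end CubeWeight

section CosProduct

variable {ι : Type*} {s : Finset ι}

theorem one_add_sum_le_prod_one_add {R : Type*} [CommSemiring R] [PartialOrder R]
    [IsOrderedRing R] {f : ι → R} (hf : ∀ i ∈ s, 0 ≤ f i) :
    1 + ∑ i ∈ s, f i ≤ ∏ i ∈ s, (1 + f i) := by
  classical
  induction s using Finset.induction_on with
  | empty => simp
  | insert i s hi ih =>
    rw [Finset.forall_mem_insert] at hf
    rw [Finset.prod_insert hi, Finset.sum_insert hi]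
    calc 1 + (f i + ∑ j ∈ s, f j)
        ≤ 1 + (f i + ∑ j ∈ s, f j) + f i * ∑ j ∈ s, f j :=
          le_add_of_nonneg_right (mul_nonneg hf.1 (Finset.sum_nonneg hf.2))
      _ = (1 + f i) * (1 + ∑ j ∈ s, f j) := by ring
      _ ≤ (1 + f i) * ∏ j ∈ s, (1 + f j) :=
          mul_le_mul_of_nonneg_left (ih hf.2) (add_nonneg zero_le_one hf.1)

theorem cos_sq_le_inv_one_add_sq {x : ℝ} (hx : |x| ≤ π / 2) : cos x ^ 2 ≤ (1 + x ^ 2)⁻¹ := by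
  obtain ⟨hx₁, hx₂⟩ := abs_le.mp hx
  calc cos x ^ 2 ≤ (1 / √(x ^ 2 + 1)) ^ 2 := by
        gcongr
        · exact cos_nonneg_of_mem_Icc ⟨hx₁, hx₂⟩
        · exact cos_le_one_div_sqrt_sq_add_one (by linarith [pi_pos]) (by linarith [pi_pos])
    _ = (1 + x ^ 2)⁻¹ := by
        rw [div_pow, sq_sqrt (by positivity), one_pow, one_div, add_comm]

theorem prod_one_add_cos_div_two_le {x : ι → ℝ} (hx : ∀ i ∈ s, |x i| ≤ π) :
    ∏ i ∈ s, (1 + cos (x i)) / 2 ≤ (1 + ∑ i ∈ s, (x i / 2) ^ 2)⁻¹ :=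
  calc ∏ i ∈ s, (1 + cos (x i)) / 2
      = ∏ i ∈ s, cos (x i / 2) ^ 2 := by
        refine Finset.prod_congr rfl fun i _ ↦ ?_
        rw [cos_sq, mul_div_cancel₀ _ two_ne_zero]
        ring
    _ ≤ ∏ i ∈ s, (1 + (x i / 2) ^ 2)⁻¹ := by
        gcongr with i hi
        refine cos_sq_le_inv_one_add_sq ?_
        rw [abs_div, abs_two]
        gcongr
        exact hx i hi
    _ = (∏ i ∈ s, (1 + (x i / 2) ^ 2))⁻¹ := Finset.prod_inv_distrib _
    _ ≤ (1 + ∑ i ∈ s, (x i / 2) ^ 2)⁻¹ := by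
        gcongr
        exact one_add_sum_le_prod_one_add fun i _ ↦ sq_nonneg _

theorem prod_one_add_cos_div_two_mem_Icc (x : ι → ℝ) :
    ∏ i ∈ s, (1 + cos (x i)) / 2 ∈ Set.Icc 0 1 :=
  ⟨Finset.prod_nonneg fun i _ ↦ by linarith [neg_one_le_cos (x i)],
    Finset.prod_le_one (fun i _ ↦ by linarith [neg_one_le_cos (x i)])
      fun i _ ↦ by linarith [cos_le_one (x i)]⟩

theorem prod_one_add_cos_le_half {w : ι → ℝ} (hw : 0 < ∑ i ∈ s, w i ^ 2) :
    ∏ i ∈ s, (1 + cos (w i * (2 / √(∑ i ∈ s, w i ^ 2)))) / 2 ≤ 1 / 2 := by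
  set W := √(∑ i ∈ s, w i ^ 2)
  have W_pos : 0 < W := sqrt_pos.mpr hw
  have W_sq : W ^ 2 = ∑ i ∈ s, w i ^ 2 := sq_sqrt hw.le
  have abs_le_W {i : ι} (hi : i ∈ s) : |w i| ≤ W :=
    abs_le_sqrt (Finset.single_le_sum (f := fun i ↦ w i ^ 2) (fun i _ ↦ sq_nonneg _) hi)
  have angle_le (i : ι) (hi : i ∈ s) : |w i * (2 / W)| ≤ π := by
    rw [abs_mul, abs_of_pos (by positivity : 0 < 2 / W), mul_div_left_comm]
    linarith [pi_gt_three, (div_le_one W_pos).mpr (abs_le_W hi)]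
  have sum_half_angle_sq : ∑ i ∈ s, (w i * (2 / W) / 2) ^ 2 = 1 := by
    have half_angle (i : ι) : (w i * (2 / W) / 2) ^ 2 = w i ^ 2 / W ^ 2 := by ring
    simp only [half_angle]
    rw [← Finset.sum_div, ← W_sq, div_self (by positivity)]
  have bound := prod_one_add_cos_div_two_le angle_le
  rw [sum_half_angle_sq] at bound
  linarith

end CosProduct

section WeightedDegree

theorem sum_sq_pos {ι : Type*} [Fintype ι] {w : ι → ℝ} (hw : w ≠ 0) : 0 < ∑ i, w i ^ 2 := by
  obtain ⟨i, hi⟩ := Function.ne_iff.mp hw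
  exact Finset.sum_pos' (fun i _ ↦ sq_nonneg _) ⟨i, Finset.mem_univ i, sq_pos_of_ne_zero hi⟩

variable {n : ℕ} {w : Fin n → ℝ} {p : Finset (Fin n) → ℝ} {L : ℝ}

theorem evalPoly_cos_mem_cosSpan (hw : ∀ i, 0 ≤ w i)
    (hdeg : ∀ S : Finset (Fin n), p S ≠ 0 → ∑ i ∈ S, w i ≤ L) :
    (fun t ↦ evalPoly p fun i ↦ cos (w i * t)) ∈ cosSpan L := by
  have expand : (fun t ↦ evalPoly p fun i ↦ cos (w i * t)) =
      ∑ S, p S • fun t ↦ ∏ i ∈ S, cos (w i * t) := by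
    ext t
    simp [evalPoly]
  rw [expand]
  refine Submodule.sum_mem _ fun S _ ↦ ?_
  by_cases hS : p S = 0
  · simp [hS]
  · refine Submodule.smul_mem _ _ (cosSpan_mono ?_ (prod_cos_mem_cosSpan S w))
    simpa only [abs_of_nonneg (hw _)] using hdeg S hS

variable {ε : ℝ}

theorem abs_evalPoly_cos_sub_half_le (happrox : ∀ b, |evalPoly p (toPM b) - andF b| ≤ ε)
    (x : Fin n → ℝ) : |(evalPoly p fun i ↦ cos (x i)) - 1 / 2| ≤ 1 / 2 + ε := by
  have approx := abs_le.mp (abs_evalPoly_sub_prod_le happrox fun i ↦ abs_cos_le_one (x i))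
  obtain ⟨prod_nonneg, prod_le_one⟩ := prod_one_add_cos_div_two_mem_Icc (s := Finset.univ) x
  rw [abs_le]
  constructor <;> linarith

theorem evalPoly_one_sub_evalPoly_cos_le (hw : ∀ i, 0 ≤ w i) (hL : 0 < L)
    (hdeg : ∀ S : Finset (Fin n), p S ≠ 0 → ∑ i ∈ S, w i ≤ L)
    (happrox : ∀ b, |evalPoly p (toPM b) - andF b| ≤ ε) (t : ℝ) :
    (evalPoly p fun _ ↦ 1) - (evalPoly p fun i ↦ cos (w i * t)) ≤
      (1 / 2 + ε) * L ^ 2 * t ^ 2 / 2 := by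
  -- Centering at `1 / 2` halves the supremum to which Bernstein's inequality is applied.
  have centered_mem : (fun t ↦ (evalPoly p fun i ↦ cos (w i * t)) - 1 / 2) ∈ cosSpan L :=
    Submodule.sub_mem _ (evalPoly_cos_mem_cosSpan hw hdeg) (const_mem_cosSpan hL.le _)
  have drop := abs_sub_map_zero_le_of_mem_cosSpan hL centered_mem
    (fun t ↦ abs_evalPoly_cos_sub_half_le happrox fun i ↦ w i * t) t
  simp only [mul_zero, cos_zero, sub_sub_sub_cancel_right] at drop
  linarith [(abs_le.mp drop).1]

theorem stmt3_general (hw : ∀ i, 0 ≤ w i) (hw0 : w ≠ 0) (hL : 0 < L)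
    (hdeg : ∀ S : Finset (Fin n), p S ≠ 0 → ∑ i ∈ S, w i ≤ L)
    (happrox : ∀ b, |evalPoly p (toPM b) - andF b| ≤ ε) :
    (1 - 4 * ε) * ∑ i, w i ^ 2 ≤ 2 * (1 + 2 * ε) * L ^ 2 := by
  have norm_sq_pos := sum_sq_pos hw0
  set T := 2 / √(∑ i, w i ^ 2) with T_def
  have T_sq : T ^ 2 = 4 / ∑ i, w i ^ 2 := by
    rw [T_def, div_pow, sq_sqrt norm_sq_pos.le]
    norm_num
  have one_sub_le : 1 - ε ≤ evalPoly p fun _ ↦ 1 := by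
    have approx := abs_evalPoly_sub_prod_le happrox (x := fun _ ↦ 1) fun _ ↦ abs_one.le
    simp only [add_self_div_two, Finset.prod_const_one] at approx
    linarith [(abs_le.mp approx).1]
  have le_half_add : (evalPoly p fun i ↦ cos (w i * T)) ≤ 1 / 2 + ε := by
    have approx := abs_evalPoly_sub_prod_le happrox fun i ↦ abs_cos_le_one (w i * T)
    linarith [(abs_le.mp approx).2, prod_one_add_cos_le_half norm_sq_pos]
  have drop_le := evalPoly_one_sub_evalPoly_cos_le hw hL hdeg happrox T
  have gap_le : 1 / 2 - 2 * ε ≤ (1 + 2 * ε) * L ^ 2 / ∑ i, w i ^ 2 :=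
    calc 1 / 2 - 2 * ε ≤ (1 / 2 + ε) * L ^ 2 * T ^ 2 / 2 := by linarith
      _ = (1 + 2 * ε) * L ^ 2 / ∑ i, w i ^ 2 := by rw [T_sq]; ring
  rw [le_div_iff₀ norm_sq_pos] at gap_le
  linarith

end WeightedDegree

theorem stmt3 (n : ℕ) (hn : 1 ≤ n) (w : Fin n → ℝ) (hw : ∀ i, 0 ≤ w i) (hw0 : w ≠ 0)
    (p : Finset (Fin n) → ℝ)
    (hdeg : ∀ S : Finset (Fin n), p S ≠ 0 →
      ∑ i ∈ S, w i < Real.sqrt (∑ i, (w i) ^ 2) / 2) :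
    ∃ b : Fin n → Bool, 3 / 32 ≤ |evalPoly p (toPM b) - andF b| := by
  by_contra! h
  have norm_sq_pos := sum_sq_pos hw0
  have bound := stmt3_general hw hw0 (half_pos (sqrt_pos.mpr norm_sq_pos))
    (fun S hS ↦ (hdeg S hS).le) fun b ↦ (h b).le
  rw [div_pow, sq_sqrt norm_sq_pos.le] at bound
  linarith
end

section
/- There is a universal constant C > 0 such that: for all integers n, k, K with 1 ≤ k < K ≤ n/64, if μ and ν are symmetric probability distributions on {0,1}^n that are perfectly k-wise indistinguishable, then μ and ν are statistically (K, C·K^{3/2}·exp(−k²/(1156·K)))-wise indistinguishable; that is, for every S ⊆ {1,…,n} with |S| = K, the total variation distance between the marginals μ|_S and ν|_S is at most C·K^{3/2}·exp(−k²/(1156·K)). -/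
open Finset

/-- Hamming weight of a Boolean string. -/
def wt {n : ℕ} (x : Fin n → Bool) : ℕ := (Finset.univ.filter (fun i => x i = true)).card

/-- `μ` is a probability distribution on `{0,1}^n`. -/
def IsProb {n : ℕ} (μ : (Fin n → Bool) → ℝ) : Prop :=
  (∀ x, 0 ≤ μ x) ∧ ∑ x : Fin n → Bool, μ x = 1

/-- `μ` is symmetric: `μ x` depends only on the Hamming weight of `x`. -/
def SymmDist {n : ℕ} (μ : (Fin n → Bool) → ℝ) : Prop := ∀ x y, wt x = wt y → μ x = μ y

/-- The probability, under `μ`, of agreeing with `z` on the coordinates in `S`;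
this describes the marginal distribution `μ|_S`. -/
def marg {n : ℕ} (μ : (Fin n → Bool) → ℝ) (S : Finset (Fin n)) (z : Fin n → Bool) : ℝ :=
  ∑ x : Fin n → Bool, if ∀ i ∈ S, x i = z i then μ x else 0

/-- Perfect `k`-wise indistinguishability: equality of all marginals on sets of
size at most `k`. -/
def PerfIndist {n : ℕ} (μ ν : (Fin n → Bool) → ℝ) (k : ℕ) : Prop :=
  ∀ S : Finset (Fin n), S.card ≤ k → ∀ z, marg μ S z = marg ν S z

/-- `T` is a `{0,1}`-valued statistical test depending only on the coordinates in `S`.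
The total variation distance between `μ|_S` and `ν|_S` is the supremum of
`|E_μ[T] - E_ν[T]|` over all such tests. -/
def TestOn {n : ℕ} (S : Finset (Fin n)) (T : (Fin n → Bool) → ℝ) : Prop :=
  (∀ x, T x = 0 ∨ T x = 1) ∧ ∀ x y, (∀ i ∈ S, x i = y i) → T x = T y

/-!
Averaging a test on `K` coordinates over permutations turns its expectation into that of a mixture
of hypergeometric probabilities, a polynomial of degree at most `K` in the Hamming weight. Perfect
`k`-wise indistinguishability says that polynomials of degree at most `k` in the weight have equal
expectations, so it suffices to approximate this polynomial on `[0, n]` in degree `k`, by truncating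
its Chebyshev expansion. The truncation error is controlled by the maximum on the ellipse with foci
`0` and `n` that is the image of the circle of radius `1 + δ` under the Joukowski map. There `‖z‖ +
‖n - z‖ - n = O(n δ²)`, and Cauchy's estimate for the generating function `(1 + t) ^ z` of the
binomial coefficients, on the circle of radius `K / (n - K)`, bounds the hypergeometric
probabilities by `O(√K exp(O(K δ²)))`. The error is thus of order `exp(O(K δ²)) / (1 + δ) ^ k` up to
powers of `K`, and `δ` is taken proportional to `k / K`.
-/

open Polynomial
open scoped Nat BigOperators

section CauchyEstimate

lemma norm_coeff_mul_pow_le_of_hasFPowerSeriesAt {f : ℂ → ℂ} {a : ℕ → ℂ} {R M : ℝ} (hR : 0 < R)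
    (hfa : HasFPowerSeriesAt f (.ofScalars ℂ a) 0) (hf : DiffContOnCl ℂ f (Metric.ball 0 R))
    (hM : ∀ t, ‖t‖ = R → ‖f t‖ ≤ M) (m : ℕ) : ‖a m‖ * R ^ m ≤ M := by
  have hderiv : iteratedDeriv m f 0 = m ! * a m := by
    obtain ⟨r, hr⟩ := hfa
    rw [iteratedDeriv_eq_iteratedFDeriv, ← hr.factorial_smul 1 m]
    simp
  have hcauchy := Complex.norm_iteratedDeriv_le_of_forall_mem_sphere_norm_le m hR hf
    fun t ht ↦ hM t (mem_sphere_zero_iff_norm.mp ht)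
  rw [hderiv, norm_mul, Complex.norm_natCast, mul_div_assoc] at hcauchy
  have hle := le_of_mul_le_mul_left hcauchy (by positivity)
  rwa [le_div_iff₀ (by positivity)] at hle

lemma hasFPowerSeriesAt_eval (p : ℂ[X]) :
    HasFPowerSeriesAt (fun z ↦ p.eval z) (.ofScalars ℂ p.coeff) 0 := by
  rw [hasFPowerSeriesAt_iff]
  simp only [FormalMultilinearSeries.coeff_ofScalars, zero_add, smul_eq_mul]
  refine .of_forall fun z ↦ ?_
  simp only [eval_eq_sum_range, mul_comm (p.coeff _)]
  exact hasSum_sum_of_ne_finset_zero fun m hm ↦ by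
    rw [coeff_eq_zero_of_natDegree_lt (by simpa using hm), mul_zero]

end CauchyEstimate

section Binomial

lemma one_add_ne_zero_of_norm_lt_one {t : ℂ} (ht : ‖t‖ < 1) : 1 + t ≠ 0 :=
  Complex.slitPlane_ne_zero (Complex.mem_slitPlane_of_norm_lt_one ht)

lemma norm_log_sub_log_le {s : ℝ} (hs : s < 1) {u v : ℂ} (hu : ‖u - 1‖ ≤ s) (hv : ‖v - 1‖ ≤ s) :
    ‖Complex.log u - Complex.log v‖ ≤ ‖u - v‖ / (1 - s) := by
  have hnorm {w : ℂ} (hw : w ∈ Metric.closedBall 1 s) : 1 - s ≤ ‖w‖ := by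
    have := norm_sub_norm_le 1 w
    rw [norm_one, norm_sub_rev] at this
    linarith [mem_closedBall_iff_norm.mp hw]
  have hslit {w : ℂ} (hw : w ∈ Metric.closedBall 1 s) : w ∈ Complex.slitPlane :=
    Complex.ball_one_subset_slitPlane (Metric.closedBall_subset_ball hs hw)
  rw [div_eq_inv_mul]
  refine (convex_closedBall (1 : ℂ) s).norm_image_sub_le_of_norm_hasDerivWithin_le
    (fun w hw ↦ (Complex.hasDerivAt_log (hslit hw)).hasDerivWithinAt) (fun w hw ↦ ?_)
    (mem_closedBall_iff_norm.mpr hv) (mem_closedBall_iff_norm.mpr hu)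
  rw [norm_inv]
  exact inv_anti₀ (by linarith) (hnorm hw)

lemma norm_sub_norm_sq (t : ℂ) : ‖t - (‖t‖ : ℂ)‖ ^ 2 = ‖t‖ * ((1 + ‖t‖) ^ 2 - ‖1 + t‖ ^ 2) := by
  have hsq : ‖t‖ ^ 2 = t.re ^ 2 + t.im ^ 2 := by
    rw [Complex.sq_norm, Complex.normSq_apply]; ring
  simp only [Complex.sq_norm (_ + _), Complex.sq_norm (_ - _), Complex.normSq_apply,
    Complex.sub_re, Complex.sub_im,
    Complex.add_re, Complex.add_im, Complex.one_re, Complex.one_im, Complex.ofReal_re,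
    Complex.ofReal_im]
  linear_combination (-‖t‖ - 1) * hsq

lemma norm_sub_norm_sq_le_log_sub_log {t : ℂ} (ht : ‖t‖ < 1) :
    ‖t - (‖t‖ : ℂ)‖ ^ 2 ≤
      2 * ‖t‖ * (1 + ‖t‖) ^ 2 * (Real.log (1 + ‖t‖) - Real.log ‖1 + t‖) := by
  have hpos : 0 < ‖1 + t‖ := norm_pos_iff.mpr (one_add_ne_zero_of_norm_lt_one ht)
  have hlog := Real.log_le_sub_one_of_pos (x := (‖1 + t‖ / (1 + ‖t‖)) ^ 2) (by positivity)
  rw [Real.log_pow, Real.log_div (by positivity) (by positivity), div_pow] at hlog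
  rw [norm_sub_norm_sq]
  calc ‖t‖ * ((1 + ‖t‖) ^ 2 - ‖1 + t‖ ^ 2)
      = ‖t‖ * (1 + ‖t‖) ^ 2 * (1 - ‖1 + t‖ ^ 2 / (1 + ‖t‖) ^ 2) := by field_simp
    _ ≤ ‖t‖ * (1 + ‖t‖) ^ 2 * (2 * (Real.log (1 + ‖t‖) - Real.log ‖1 + t‖)) := by
      gcongr; push_cast at hlog; linarith
    _ = _ := by ring

lemma norm_log_one_add_sub_log_one_add_norm_sq_le {t : ℂ} (ht : ‖t‖ ≤ 1 / 3) :
    ‖Complex.log (1 + t) - Real.log (1 + ‖t‖)‖ ^ 2 ≤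
      8 * ‖t‖ * -(Complex.log (1 + t) - Real.log (1 + ‖t‖)).re := by
  set u : ℂ := Complex.log (1 + t) - Real.log (1 + ‖t‖) with hu
  have hre : u.re = Real.log ‖1 + t‖ - Real.log (1 + ‖t‖) := by
    simp [hu, Complex.log_re]
  have hlip : ‖u‖ ≤ ‖t - (‖t‖ : ℂ)‖ / (1 - ‖t‖) := by
    have := norm_log_sub_log_le (u := 1 + t) (v := 1 + (‖t‖ : ℂ)) (s := ‖t‖) (by linarith)
      (by simp) (by simp)
    rwa [add_sub_add_left_eq_sub, ← Complex.ofReal_one, ← Complex.ofReal_add,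
      ← Complex.ofReal_log (by positivity), Complex.ofReal_one] at this
  have hgap := norm_sub_norm_sq_le_log_sub_log (t := t) (by linarith)
  have hre_nonpos : u.re ≤ 0 := by
    have hne : 1 + t ≠ 0 := one_add_ne_zero_of_norm_lt_one (by linarith)
    rw [hre, sub_nonpos]
    gcongr
    simpa using norm_add_le 1 t
  calc ‖u‖ ^ 2 ≤ (‖t - (‖t‖ : ℂ)‖ / (1 - ‖t‖)) ^ 2 := by gcongr
    _ ≤ 2 * ‖t‖ * (1 + ‖t‖) ^ 2 * (Real.log (1 + ‖t‖) - Real.log ‖1 + t‖) / (1 - ‖t‖) ^ 2 := by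
      rw [div_pow]
      gcongr
    _ = 2 * ‖t‖ * ((1 + ‖t‖) / (1 - ‖t‖)) ^ 2 * -u.re := by
      rw [hre, div_pow]; ring
    _ ≤ 2 * ‖t‖ * 2 ^ 2 * -u.re := by
      have hratio : (1 + ‖t‖) / (1 - ‖t‖) ≤ 2 := by
        rw [div_le_iff₀ (by linarith)]
        linarith
      have : 0 ≤ (1 + ‖t‖) / (1 - ‖t‖) := div_nonneg (by positivity) (by linarith)
      gcongr
      linarith
    _ = 8 * ‖t‖ * -u.re := by ring

lemma norm_log_one_add_sub_log_one_add_norm_add_le {t : ℂ} (ht : ‖t‖ ≤ 1 / 3) :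
    ‖Complex.log (1 + t) - Real.log (1 + ‖t‖) + (4 * ‖t‖ : ℝ)‖ ≤ 4 * ‖t‖ := by
  have hsq := norm_log_one_add_sub_log_one_add_norm_sq_le ht
  refine (sq_le_sq₀ (norm_nonneg _) (by positivity)).mp ?_
  generalize Complex.log (1 + t) - Real.log (1 + ‖t‖) = u at hsq ⊢
  rw [Complex.sq_norm, Complex.normSq_apply] at hsq ⊢
  rw [Complex.add_re, Complex.add_im, Complex.ofReal_re, Complex.ofReal_im]
  linarith

-- The right-hand side is the support function of the disc of radius `r` centred at `-r`.
lemma re_mul_le_of_norm_add_le {u z : ℂ} {r : ℝ} (hu : ‖u + r‖ ≤ r) :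
    (u * z).re ≤ r * (‖z‖ - z.re) := by
  have h := (Complex.re_le_norm ((u + r) * z)).trans_eq (norm_mul _ _)
  have h' : ‖u + r‖ * ‖z‖ ≤ r * ‖z‖ := by gcongr
  rw [add_mul, Complex.add_re, Complex.re_ofReal_mul] at h
  linarith

lemma norm_one_add_cpow_le {t : ℂ} (ht : ‖t‖ ≤ 1 / 3) (z : ℂ) :
    ‖(1 + t) ^ z‖ ≤ (1 + ‖t‖) ^ z.re * Real.exp (4 * ‖t‖ * (‖z‖ - z.re)) := by
  have hne : 1 + t ≠ 0 := one_add_ne_zero_of_norm_lt_one (by linarith)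
  have hdisc := re_mul_le_of_norm_add_le (z := z) (r := 4 * ‖t‖)
    (norm_log_one_add_sub_log_one_add_norm_add_le ht)
  rw [sub_mul, Complex.sub_re, Complex.re_ofReal_mul] at hdisc
  rw [Complex.cpow_def_of_ne_zero hne, Complex.norm_exp, Real.rpow_def_of_pos (by positivity),
    ← Real.exp_add]
  gcongr
  linarith

theorem norm_choose_mul_pow_le {s : ℝ} (hs : 0 < s) (hs' : s ≤ 1 / 3) (z : ℂ) (w : ℕ) :
    ‖Ring.choose z w‖ * s ^ w ≤ (1 + s) ^ z.re * Real.exp (4 * s * (‖z‖ - z.re)) := by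
  refine norm_coeff_mul_pow_le_of_hasFPowerSeriesAt hs
    Complex.one_add_cpow_hasFPowerSeriesAt_zero ?_ (fun t ht ↦ ?_) w
  · refine DifferentiableOn.diffContOnCl fun t ht ↦ ?_
    have hlt : ‖t‖ < 1 := by
      rw [closure_ball _ hs.ne', mem_closedBall_zero_iff] at ht
      linarith
    exact ((differentiableAt_id.const_add 1).cpow_const
      (Complex.mem_slitPlane_of_norm_lt_one hlt)).differentiableWithinAt
  · subst ht
    exact norm_one_add_cpow_le hs' z

lemma factorial_le_exp_one_mul_sqrt_mul {m : ℕ} (hm : 1 ≤ m) :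
    (m ! : ℝ) ≤ Real.exp 1 * √m * (m / Real.exp 1) ^ m := by
  have hanti : Stirling.stirlingSeq m ≤ Stirling.stirlingSeq 1 := by
    simpa only [Function.comp_apply, Nat.succ_eq_add_one, Nat.sub_add_cancel hm] using
      Stirling.stirlingSeq'_antitone (Nat.zero_le (m - 1))
  rw [Stirling.stirlingSeq_one, Stirling.stirlingSeq, div_le_iff₀ (by positivity),
    Real.sqrt_mul zero_le_two] at hanti
  exact hanti.trans_eq (by field_simp)

lemma add_pow_add_le_choose_mul {K D : ℕ} (hK : 1 ≤ K) (hD : 1 ≤ D) :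
    (K + D : ℝ) ^ (K + D) ≤ 3 * √K * (K + D).choose K * (K ^ K * D ^ D) := by
  have hconst : Real.exp 1 ^ 2 ≤ 3 * √(2 * Real.pi) := by
    have hsqrt : 2.5 ≤ √(2 * Real.pi) := Real.le_sqrt_of_sq_le (by linarith [Real.pi_gt_d2])
    nlinarith [Real.exp_one_lt_d9, Real.exp_pos 1]
  have hstirling := Stirling.le_factorial_stirling (K + D)
  rw [← Nat.add_choose_mul_factorial_mul_factorial, ← Nat.choose_symm_add,
    Real.sqrt_mul (by positivity)] at hstirling
  push_cast at hstirling
  refine le_of_mul_le_mul_left ?_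
    (show 0 < √(2 * Real.pi) * √(K + D) / Real.exp 1 ^ (K + D) by positivity)
  calc √(2 * Real.pi) * √(K + D) / Real.exp 1 ^ (K + D) * (K + D : ℝ) ^ (K + D)
      = √(2 * Real.pi) * √(K + D) * ((K + D) / Real.exp 1) ^ (K + D) := by
        rw [div_pow]; ring
    _ ≤ (K + D).choose K * (Real.exp 1 * √K * (K / Real.exp 1) ^ K) *
        (Real.exp 1 * √D * (D / Real.exp 1) ^ D) := by
      grw [hstirling, factorial_le_exp_one_mul_sqrt_mul hK, factorial_le_exp_one_mul_sqrt_mul hD]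
    _ = Real.exp 1 ^ 2 * √D * (√K * (K + D).choose K * (K ^ K * D ^ D) / Real.exp 1 ^ (K + D)) := by
      rw [div_pow, div_pow, pow_add]; field_simp
    _ ≤ 3 * √(2 * Real.pi) * √(K + D) *
        (√K * (K + D).choose K * (K ^ K * D ^ D) / Real.exp 1 ^ (K + D)) := by
      gcongr
      linarith
    _ = _ := by ring

lemma one_add_div_pow_le_choose_mul {n K : ℕ} (hK : 1 ≤ K) (hKn : K < n) :
    (1 + K / (n - K) : ℝ) ^ n ≤ 3 * √K * n.choose K * (K / (n - K) : ℝ) ^ K := by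
  obtain ⟨D, rfl⟩ := Nat.exists_eq_add_of_le hKn.le
  have hD : (0 : ℝ) < D := by exact_mod_cast (by omega : 0 < D)
  rw [Nat.cast_add, add_sub_cancel_left, one_add_div hD.ne', div_pow, div_le_iff₀ (by positivity),
    add_comm (D : ℝ), div_pow, pow_add (D : ℝ)]
  exact (add_pow_add_le_choose_mul hK (show 1 ≤ D by omega)).trans_eq (by field_simp)

lemma norm_choose_mul_choose_le {n K w : ℕ} (hK : 1 ≤ K) (hn : 4 * K ≤ n) (hw : w ≤ K) (z : ℂ) :
    ‖Ring.choose z w * Ring.choose (n - z) (K - w)‖ ≤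
      3 * √K * n.choose K * Real.exp (16 / 3 * K / n * (‖z‖ + ‖n - z‖ - n)) := by
  have hK' : (1 : ℝ) ≤ K := by exact_mod_cast hK
  have hn' : 4 * (K : ℝ) ≤ n := by exact_mod_cast hn
  set s : ℝ := K / (n - K) with hs
  have hs_pos : 0 < s := div_pos (by linarith) (by linarith)
  have hs_le : s ≤ 1 / 3 := by rw [hs, div_le_iff₀ (by linarith)]; linarith
  have hs_rate : 4 * s ≤ 16 / 3 * K / n := by
    rw [hs, mul_div_assoc', div_le_div_iff₀ (by linarith) (by linarith)]
    nlinarith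
  have htri : 0 ≤ ‖z‖ + ‖n - z‖ - n := by
    have := norm_add_le z (n - z)
    rw [add_sub_cancel, Complex.norm_natCast] at this
    linarith
  refine le_of_mul_le_mul_right ?_ (pow_pos hs_pos K)
  calc ‖Ring.choose z w * Ring.choose (n - z) (K - w)‖ * s ^ K
      = ‖Ring.choose z w‖ * s ^ w * (‖Ring.choose (n - z) (K - w)‖ * s ^ (K - w)) := by
        rw [norm_mul, ← pow_mul_pow_sub s hw]; ring
    _ ≤ (1 + s) ^ z.re * Real.exp (4 * s * (‖z‖ - z.re)) *
        ((1 + s) ^ (n - z).re * Real.exp (4 * s * (‖n - z‖ - (n - z).re))) := by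
      grw [norm_choose_mul_pow_le hs_pos hs_le, norm_choose_mul_pow_le hs_pos hs_le]
    _ = (1 + s) ^ n * Real.exp (4 * s * (‖z‖ + ‖n - z‖ - n)) := by
      rw [mul_mul_mul_comm, ← Real.rpow_add (by positivity), ← Real.exp_add, Complex.sub_re,
        Complex.natCast_re, add_sub_cancel, Real.rpow_natCast]
      ring_nf
    _ ≤ 3 * √K * n.choose K * s ^ K * Real.exp (16 / 3 * K / n * (‖z‖ + ‖n - z‖ - n)) := by
      grw [hs_rate, one_add_div_pow_le_choose_mul hK (by omega)]
    _ = _ := by ring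

end Binomial

section ChebyshevTruncation

lemma exists_eq_sum_smul_of_natDegree_le {F : Type*} [Field F] (S : Sequence F) {p : F[X]} {d : ℕ}
    (hp : p.natDegree ≤ d) : ∃ c : ℕ → F, p = ∑ m ∈ range (d + 1), c m • S m := by
  have hmem : p ∈ Submodule.span F (S '' (range (d + 1) : Finset ℕ)) := by
    rw [coe_range, S.span_degreeLT fun m _ ↦ (leadingCoeff_ne_zero.mpr (S.ne_zero m)).isUnit,
      mem_degreeLT, Nat.cast_succ]
    exact_mod_cast Order.lt_succ_iff.mpr (natDegree_le_iff_degree_le.mp hp)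
  exact (Submodule.mem_span_image_finset_iff_exists_fun' F |>.mp hmem).imp fun _ ↦ Eq.symm

/-- The Joukowski map, which sends the circles `‖w‖ = ρ` to the ellipses with foci `±1` (the
Bernstein ellipses). -/
noncomputable def joukowski (w : ℂ) : ℂ := (w + w⁻¹) / 2

lemma eval_T_joukowski {w : ℂ} (hw : w ≠ 0) (m : ℕ) :
    (Chebyshev.T ℂ m).eval (joukowski w) = (w ^ m + (w ^ m)⁻¹) / 2 := by
  have hcosh : joukowski w = Complex.cosh (Complex.log w) := by
    rw [joukowski, Complex.cosh, Complex.exp_neg, Complex.exp_log hw]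
  rw [hcosh, Chebyshev.T_complex_cosh, Complex.cosh, Complex.exp_neg, Int.cast_natCast,
    Complex.exp_nat_mul, Complex.exp_log hw]

lemma norm_eval_T_le_one (m : ℕ) {x : ℝ} (hx : |x| ≤ 1) :
    ‖(Chebyshev.T ℂ m).eval (x : ℂ)‖ ≤ 1 := by
  rw [← Chebyshev.complex_ofReal_eval_T, Complex.norm_real]
  exact Chebyshev.abs_eval_T_real_le_one m hx

/-- The Chebyshev polynomials of the first kind, as a polynomial sequence. -/
noncomputable def chebyshevSequence : Sequence ℂ where
  elems' m := Chebyshev.T ℂ m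
  degree_eq' m := by rw [Chebyshev.degree_T, Int.natAbs_natCast]

lemma norm_chebyshev_coeff_mul_pow_le {c : ℕ → ℂ} {d l : ℕ} {ρ B : ℝ} (hρ : 0 < ρ)
    (hB : ∀ w, ‖w‖ = ρ →
      ‖∑ m ∈ range (d + 1), c m * (Chebyshev.T ℂ m).eval (joukowski w)‖ ≤ B)
    (hl : 1 ≤ l) (hld : l ≤ d) : ‖c l‖ * ρ ^ l ≤ 2 * B := by
  -- `P` is the Laurent polynomial `w ↦ ∑ m, c m * T m (joukowski w)` multiplied by `w ^ d`.
  let P : ℂ[X] := ∑ m ∈ range (d + 1), C (c m / 2) * (X ^ (d + m) + X ^ (d - m))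
  have heval (w : ℂ) (hw : w ≠ 0) :
      P.eval w = w ^ d * ∑ m ∈ range (d + 1), c m * (Chebyshev.T ℂ m).eval (joukowski w) := by
    simp only [P, eval_finsetSum, mul_sum]
    refine sum_congr rfl fun m hm ↦ ?_
    simp only [eval_T_joukowski hw, eval_mul, eval_C, eval_add, eval_pow, eval_X,
      pow_sub₀ w hw (mem_range_succ_iff.mp hm), pow_add]
    ring
  have hcoeff : P.coeff (d + l) = c l / 2 := by
    have hm (m : ℕ) : (C (c m / 2) * (X ^ (d + m) + X ^ (d - m)) : ℂ[X]).coeff (d + l) =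
        if m = l then c m / 2 else 0 := by
      simp [coeff_X_pow, show d + l ≠ d - m by omega, eq_comm]
    simp [P, hm, hld]
  have hcauchy := norm_coeff_mul_pow_le_of_hasFPowerSeriesAt hρ (hasFPowerSeriesAt_eval P)
    P.differentiable.diffContOnCl (M := ρ ^ d * B) (fun w hw ↦ by
      rw [heval w (norm_pos_iff.mp (hw ▸ hρ)), norm_mul, norm_pow, hw]
      gcongr
      exact hB w hw) (d + l)
  rw [hcoeff, norm_div, Complex.norm_ofNat, pow_add, mul_left_comm] at hcauchy
  have := le_of_mul_le_mul_left hcauchy (by positivity)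
  linarith

theorem exists_natDegree_le_norm_eval_sub_le {p : ℂ[X]} {d : ℕ} (hp : p.natDegree ≤ d) {ρ B : ℝ}
    (hρ : 1 ≤ ρ) (hB : ∀ w, ‖w‖ = ρ → ‖p.eval (joukowski w)‖ ≤ B) (k : ℕ) :
    ∃ q : ℂ[X], q.natDegree ≤ k ∧
      ∀ x : ℝ, |x| ≤ 1 → ‖p.eval (x : ℂ) - q.eval (x : ℂ)‖ ≤ d * (2 * B / ρ ^ k) := by
  obtain ⟨c, rfl⟩ := exists_eq_sum_smul_of_natDegree_le chebyshevSequence hp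
  have hB_nonneg : 0 ≤ B := (norm_nonneg _).trans (hB ρ (Complex.norm_of_nonneg (by linarith)))
  have hc (l : ℕ) (hkl : k < l) (hld : l ≤ d) : ‖c l‖ ≤ 2 * B / ρ ^ k := by
    rw [le_div_iff₀ (by positivity)]
    calc ‖c l‖ * ρ ^ k ≤ ‖c l‖ * ρ ^ l := by gcongr
      _ ≤ 2 * B := norm_chebyshev_coeff_mul_pow_le (by linarith)
        (fun w hw ↦ by simpa [eval_finsetSum, chebyshevSequence] using hB w hw) (by omega) hld
  refine ⟨∑ m ∈ range (d + 1) with m ≤ k, c m • chebyshevSequence m,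
    natDegree_sum_le_of_forall_le _ _ fun m hm ↦ ?_, fun x hx ↦ ?_⟩
  · exact (natDegree_smul_le _ _).trans
      ((chebyshevSequence.natDegree_eq m).trans_le (mem_filter.mp hm).2)
  · rw [← eval_sub, ← sum_filter_add_sum_filter_not _ (· ≤ k), add_sub_cancel_left,
      eval_finsetSum]
    have hcard : #{m ∈ range (d + 1) | ¬m ≤ k} ≤ d := by
      refine (card_le_card fun m hm ↦ ?_).trans_eq (Nat.card_Ioc 0 d)
      simp only [mem_filter, mem_range] at hm
      exact mem_Ioc.mpr (by omega)
    calc _ ≤ ∑ m ∈ range (d + 1) with ¬m ≤ k, 2 * B / ρ ^ k := norm_sum_le_of_le _ fun m hm ↦ by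
          rw [mem_filter, mem_range_succ_iff, not_le] at hm
          rw [eval_smul, norm_smul]
          exact (mul_le_of_le_one_right (norm_nonneg _) (norm_eval_T_le_one m hx)).trans
            (hc m hm.2 hm.1)
      _ ≤ d * (2 * B / ρ ^ k) := by
        rw [sum_const, nsmul_eq_mul]
        gcongr

theorem exists_natDegree_le_norm_eval_sub_le_of_mem_Icc {p : ℂ[X]} {d : ℕ} (hp : p.natDegree ≤ d)
    {N ρ B : ℝ} (hN : 0 < N) (hρ : 1 ≤ ρ)
    (hB : ∀ w, ‖w‖ = ρ → ‖p.eval (N / 2 * (1 + joukowski w))‖ ≤ B) (k : ℕ) :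
    ∃ q : ℂ[X], q.natDegree ≤ k ∧
      ∀ x ∈ Set.Icc 0 N, ‖p.eval (x : ℂ) - q.eval (x : ℂ)‖ ≤ d * (2 * B / ρ ^ k) := by
  have hcomp (q a : ℂ[X]) (ha : a.natDegree ≤ 1) : (q.comp a).natDegree ≤ q.natDegree :=
    natDegree_comp_le.trans (mul_le_of_le_one_right' ha)
  obtain ⟨q, hq, happrox⟩ := exists_natDegree_le_norm_eval_sub_le
    (p := p.comp (C (N / 2 : ℂ) * (1 + X))) ((hcomp p _ (by compute_degree)).trans hp) hρ
    (fun w hw ↦ by simpa [eval_comp] using hB w hw) k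
  refine ⟨q.comp (C (2 / N : ℂ) * X - 1), (hcomp q _ (by compute_degree)).trans hq,
    fun x ⟨hx, hxN⟩ ↦ ?_⟩
  have hx' : |2 / N * x - 1| ≤ 1 := by
    have hle : 2 / N * x ≤ 2 := by
      rw [div_mul_eq_mul_div, div_le_iff₀ hN]; linarith
    rw [abs_le]
    constructor <;> linarith [show 0 ≤ 2 / N * x by positivity]
  have hN' : (N : ℂ) ≠ 0 := mod_cast hN.ne'
  have hback : (N / 2 * (2 / N * x) : ℂ) = x := by field_simp
  simpa [eval_comp, hback] using happrox _ hx'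

end ChebyshevTruncation

section Hypergeometric

lemma norm_one_add_joukowski_add_norm_one_sub_joukowski {u : ℂ} (hu : u ≠ 0) :
    ‖1 + joukowski u‖ + ‖1 - joukowski u‖ = ‖u‖ + ‖u‖⁻¹ := by
  have hadd : 1 + joukowski u = (u + 1) ^ 2 / (2 * u) := by
    rw [joukowski]; field_simp; ring
  have hsub : 1 - joukowski u = -(u - 1) ^ 2 / (2 * u) := by
    rw [joukowski]; field_simp; ring
  rw [hadd, hsub, norm_div, norm_div, norm_neg, norm_pow, norm_pow, norm_mul, Complex.norm_ofNat,
    ← add_div, parallelogram_law_with_norm ℝ, norm_one]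
  field_simp

/-- The binomial coefficients `z ↦ Ring.choose z w`, as a polynomial sequence. -/
noncomputable def chooseSequence : Sequence ℂ where
  elems' w := C (w ! : ℂ)⁻¹ * descPochhammer ℂ w
  degree_eq' w := by
    rw [degree_C_mul (inv_ne_zero (mod_cast w.factorial_ne_zero)),
      degree_eq_natDegree (monic_descPochhammer ℂ w).ne_zero, descPochhammer_natDegree]

lemma eval_chooseSequence (w : ℕ) (z : ℂ) : (chooseSequence w).eval z = Ring.choose z w := by
  rw [Ring.choose_eq_smul, chooseSequence, eval_mul, eval_C, smul_eq_mul, ← aeval_eq_smeval,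
    ← eval_map_algebraMap, descPochhammer_map]

/-- The hypergeometric probabilities as a polynomial: for `j ≤ n` and `w ≤ K`, the value at `j` is
the probability that a uniformly random `K`-subset of an `n`-set meets a fixed `j`-subset in exactly
`w` points. -/
noncomputable def hypergeomPoly (n K w : ℕ) : ℂ[X] :=
  C (n.choose K : ℂ)⁻¹ * (chooseSequence w * (chooseSequence (K - w)).comp (C (n : ℂ) - X))

lemma natDegree_hypergeomPoly_le {n K w : ℕ} (hw : w ≤ K) :
    (hypergeomPoly n K w).natDegree ≤ K := by
  have hlin : (C (n : ℂ) - X).natDegree ≤ 1 := by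
    compute_degree
  calc (hypergeomPoly n K w).natDegree
      ≤ w + (K - w) * (C (n : ℂ) - X).natDegree := by
        refine (natDegree_C_mul_le _ _).trans (natDegree_mul_le.trans_eq ?_)
        rw [natDegree_comp, Sequence.natDegree_eq, Sequence.natDegree_eq]
    _ ≤ w + (K - w) * 1 := by gcongr
    _ = K := by omega

lemma eval_hypergeomPoly (n K w : ℕ) (z : ℂ) : (hypergeomPoly n K w).eval z =
    (n.choose K : ℂ)⁻¹ * (Ring.choose z w * Ring.choose (n - z) (K - w)) := by
  simp [hypergeomPoly, eval_chooseSequence, eval_comp]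

lemma eval_hypergeomPoly_natCast {n K w j : ℕ} (hj : j ≤ n) : (hypergeomPoly n K w).eval (j : ℂ) =
    (j.choose w * (n - j).choose (K - w) / n.choose K : ℝ) := by
  rw [eval_hypergeomPoly, ← Nat.cast_sub hj, Ring.choose_natCast, Ring.choose_natCast]
  push_cast
  ring

lemma norm_eval_hypergeomPoly_le {n K w : ℕ} (hK : 1 ≤ K) (hn : 4 * K ≤ n) (hw : w ≤ K) {δ : ℝ}
    (hδ : 0 ≤ δ) {u : ℂ} (hu : ‖u‖ = 1 + δ) :
    ‖(hypergeomPoly n K w).eval (n / 2 * (1 + joukowski u))‖ ≤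
      3 * √K * Real.exp (8 / 3 * K * δ ^ 2) := by
  set z : ℂ := n / 2 * (1 + joukowski u) with hz
  have hn_pos : (0 : ℝ) < n := by exact_mod_cast (by omega : 0 < n)
  have hchoose : (0 : ℝ) < n.choose K := by exact_mod_cast Nat.choose_pos (by omega)
  have hfoci : ‖z‖ + ‖n - z‖ = n / 2 * (‖u‖ + ‖u‖⁻¹) := by
    rw [show n - z = n / 2 * (1 - joukowski u) by rw [hz]; ring, hz, norm_mul, norm_mul, ← mul_add,
      norm_one_add_joukowski_add_norm_one_sub_joukowski
        (norm_pos_iff.mp (by rw [hu]; linarith)), norm_div, Complex.norm_natCast,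
      Complex.norm_ofNat]
  have hinv : ‖u‖ + ‖u‖⁻¹ ≤ 2 + δ ^ 2 := by
    rw [hu, ← sub_nonneg,
      show 2 + δ ^ 2 - (1 + δ + (1 + δ)⁻¹) = δ ^ 3 / (1 + δ) by field_simp; ring]
    positivity
  rw [eval_hypergeomPoly, norm_mul, norm_inv, Complex.norm_natCast, inv_mul_le_iff₀ hchoose]
  calc ‖Ring.choose z w * Ring.choose (n - z) (K - w)‖
      ≤ 3 * √K * n.choose K * Real.exp (16 / 3 * K / n * (‖z‖ + ‖n - z‖ - n)) :=
        norm_choose_mul_choose_le hK hn hw z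
    _ ≤ 3 * √K * n.choose K * Real.exp (16 / 3 * K / n * (n / 2 * (2 + δ ^ 2) - n)) := by
      rw [hfoci]
      gcongr
    _ = n.choose K * (3 * √K * Real.exp (8 / 3 * K * δ ^ 2)) := by
      rw [show 16 / 3 * K / n * (n / 2 * (2 + δ ^ 2) - n) = 8 / 3 * K * δ ^ 2 by
        field_simp; ring]
      ring

/-- The probability that a test accepts, as a polynomial in the weight of a uniformly random string:
a mixture of hypergeometric probabilities, where `τ w` is the probability of acceptance when the
test reads `w` ones. -/
noncomputable def acceptancePoly (n K : ℕ) (τ : ℕ → ℝ) : ℂ[X] :=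
  ∑ w ∈ range (K + 1), C (τ w : ℂ) * hypergeomPoly n K w

lemma natDegree_acceptancePoly_le (n K : ℕ) (τ : ℕ → ℝ) : (acceptancePoly n K τ).natDegree ≤ K :=
  natDegree_sum_le_of_forall_le _ _ fun _ hw ↦
    (natDegree_C_mul_le _ _).trans (natDegree_hypergeomPoly_le (mem_range_succ_iff.mp hw))

lemma eval_acceptancePoly_natCast {n j : ℕ} (hj : j ≤ n) (K : ℕ) (τ : ℕ → ℝ) :
    (acceptancePoly n K τ).eval (j : ℂ) =
      (∑ w ∈ range (K + 1), τ w * (j.choose w * (n - j).choose (K - w) / n.choose K) : ℝ) := by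
  simp_rw [acceptancePoly, eval_finsetSum, eval_C_mul, eval_hypergeomPoly_natCast hj,
    ← Complex.ofReal_mul, ← Complex.ofReal_sum]

lemma norm_eval_acceptancePoly_le {n K : ℕ} (hK : 1 ≤ K) (hn : 4 * K ≤ n) {τ : ℕ → ℝ}
    (hτ : ∀ w, |τ w| ≤ 1) {δ : ℝ} (hδ : 0 ≤ δ) {u : ℂ} (hu : ‖u‖ = 1 + δ) :
    ‖(acceptancePoly n K τ).eval (n / 2 * (1 + joukowski u))‖ ≤
      (K + 1) * (3 * √K * Real.exp (8 / 3 * K * δ ^ 2)) := by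
  have hcard : (K + 1 : ℝ) = #(range (K + 1)) := by simp
  rw [acceptancePoly, eval_finsetSum, hcard, ← nsmul_eq_mul, ← sum_const]
  refine norm_sum_le_of_le _ fun w hw ↦ ?_
  rw [eval_C_mul, norm_mul, Complex.norm_real]
  exact (mul_le_of_le_one_left (norm_nonneg _) (hτ w)).trans
    (norm_eval_hypergeomPoly_le hK hn (mem_range_succ_iff.mp hw) hδ hu)

theorem exists_natDegree_le_norm_eval_acceptancePoly_sub_le {n K : ℕ} (hK : 1 ≤ K) (hn : 4 * K ≤ n)
    {τ : ℕ → ℝ} (hτ : ∀ w, |τ w| ≤ 1) {δ : ℝ} (hδ : 0 ≤ δ) (k : ℕ) :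
    ∃ q : ℂ[X], q.natDegree ≤ k ∧ ∀ j ≤ n,
      ‖(acceptancePoly n K τ).eval (j : ℂ) - q.eval (j : ℂ)‖ ≤
        6 * K * (K + 1) * √K * (Real.exp (8 / 3 * K * δ ^ 2) / (1 + δ) ^ k) := by
  obtain ⟨q, hq, happrox⟩ := exists_natDegree_le_norm_eval_sub_le_of_mem_Icc
    (natDegree_acceptancePoly_le n K τ) (N := n) (mod_cast (by omega : 0 < n)) (by linarith)
    (fun u hu ↦ norm_eval_acceptancePoly_le hK hn hτ hδ hu) k
  refine ⟨q, hq, fun j hj ↦ (happrox j ⟨by positivity, mod_cast hj⟩).trans_eq (by ring)⟩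

/-- The choice `δ = k / (8 K)` balances `exp (8 K δ² / 3)` against `(1 + δ) ^ k ≥ exp (k δ / 2)`. -/
lemma exp_div_one_add_pow_le {k K : ℕ} (hkK : k < K) :
    Real.exp (8 / 3 * K * (k / (8 * K)) ^ 2) / (1 + k / (8 * K) : ℝ) ^ k ≤
      Real.exp (-k ^ 2 / (48 * K)) := by
  have hK : (0 : ℝ) < K := by exact_mod_cast (by omega : 0 < K)
  have hk : (k : ℝ) ≤ K := by exact_mod_cast hkK.le
  set δ : ℝ := k / (8 * K) with hδ
  have hδ_nonneg : 0 ≤ δ := by positivity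
  have hδ_le : δ ≤ 1 := by rw [hδ, div_le_one (by positivity)]; linarith
  have hexp : Real.exp (k * (δ / 2)) ≤ (1 + δ) ^ k := by
    rw [Real.exp_nat_mul]
    gcongr
    have := Real.abs_exp_sub_one_le (x := δ / 2) (by rw [abs_of_nonneg] <;> linarith)
    rw [abs_of_nonneg (a := δ / 2) (by linarith)] at this
    linarith [le_of_abs_le this]
  rw [div_le_iff₀ (by positivity)]
  calc Real.exp (8 / 3 * K * δ ^ 2)
      = Real.exp (-k ^ 2 / (48 * K)) * Real.exp (k * (δ / 2)) := by
        rw [← Real.exp_add, hδ]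
        congr 1
        field_simp
        ring
    _ ≤ _ := by gcongr

end Hypergeometric

section Symmetrization

variable {n : ℕ}

/-- Subsets of `Fin n` as Boolean strings: `bitString X` has its ones exactly at the positions in
`X`. -/
def bitString : Finset (Fin n) ≃ (Fin n → Bool) where
  toFun X i := decide (i ∈ X)
  invFun x := {i | x i = true}
  left_inv X := by ext; simp
  right_inv x := by ext; simp

lemma wt_bitString (X : Finset (Fin n)) : wt (bitString X) = #X :=
  congrArg card (bitString.symm_apply_apply X)

lemma wt_le (x : Fin n → Bool) : wt x ≤ n :=
  (card_le_univ _).trans_eq (Fintype.card_fin n)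

lemma sum_apply_wt (f : ℕ → ℝ) :
    ∑ x : Fin n → Bool, f (wt x) = ∑ j ∈ range (n + 1), n.choose j * f j := by
  simp_rw [← bitString.sum_comp, wt_bitString]
  rw [← powerset_univ, sum_powerset_apply_card, card_univ, Fintype.card_fin]
  simp_rw [nsmul_eq_mul]

lemma sum_eq_sum_powerset_sum_powerset_compl {α M : Type*} [Fintype α] [DecidableEq α]
    [AddCommMonoid M] (S : Finset α) (f : Finset α → M) :
    ∑ X, f X = ∑ U ∈ S.powerset, ∑ V ∈ Sᶜ.powerset, f (U ∪ V) := by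
  rw [← sum_product']
  refine sum_bij' (fun X _ ↦ (X ∩ S, X ∩ Sᶜ)) (fun p _ ↦ p.1 ∪ p.2) ?_ (by simp) ?_ ?_ ?_
  · simp [inter_subset_right]
  · simp [← inter_union_distrib_left]
  · rintro ⟨U, V⟩ hUV
    rw [mem_product, mem_powerset, mem_powerset] at hUV
    have hU : V ∩ S = ∅ := disjoint_iff_inter_eq_empty.mp (disjoint_compl_left.mono_left hUV.2)
    have hV : U ∩ Sᶜ = ∅ := disjoint_iff_inter_eq_empty.mp (disjoint_compl_right.mono_left hUV.1)
    simp [union_inter_distrib_right, hU, hV, inter_eq_left.mpr hUV.1, inter_eq_left.mpr hUV.2]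
  · simp [← inter_union_distrib_left]

/-- The symmetrization of the test `T` on `S`: its average over the strings that have `w` ones, all
of them in `S`. -/
noncomputable def symmTest (S : Finset (Fin n)) (T : (Fin n → Bool) → ℝ) (w : ℕ) : ℝ :=
  𝔼 U ∈ S.powersetCard w, T (bitString U)

variable {S : Finset (Fin n)} {T μ ν : (Fin n → Bool) → ℝ}

lemma abs_symmTest_le_one (hT : ∀ x, |T x| ≤ 1) (w : ℕ) : |symmTest S T w| ≤ 1 := by
  refine (abs_expect_le _ _).trans ?_
  obtain hempty | hne := (S.powersetCard w).eq_empty_or_nonempty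
  · rw [hempty, expect_empty]
    exact zero_le_one
  · exact expect_le hne fun U _ ↦ hT _

lemma sum_apply_wt_mul_eq_sum_symmTest (hT : DependsOn T (S : Set (Fin n))) (m : ℕ → ℝ) :
    ∑ x, m (wt x) * T x = ∑ w ∈ range (#S + 1), (#S).choose w * symmTest S T w *
      ∑ v ∈ range (n - #S + 1), (n - #S).choose v * m (w + v) := by
  have hsplit : ∑ x, m (wt x) * T x =
      ∑ U ∈ S.powerset, T (bitString U) * ∑ V ∈ Sᶜ.powerset, m (#U + #V) := by
    rw [← bitString.sum_comp, sum_eq_sum_powerset_sum_powerset_compl S]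
    refine sum_congr rfl fun U hU ↦ ?_
    rw [mul_sum]
    refine sum_congr rfl fun V hV ↦ ?_
    rw [mem_powerset] at hU hV
    have hdisj : Disjoint U V := disjoint_compl_right.mono hU hV
    have hagree : T (bitString (U ∪ V)) = T (bitString U) := hT fun i hi ↦ by
      have : i ∉ V := fun h ↦ mem_compl.mp (hV h) hi
      simp [bitString, this]
    rw [wt_bitString, card_union_of_disjoint hdisj, hagree, mul_comm]
  rw [hsplit, sum_powerset]
  refine sum_congr rfl fun w _ ↦ ?_
  have hmean : (#S).choose w * symmTest S T w = ∑ U ∈ S.powersetCard w, T (bitString U) := by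
    rw [symmTest, ← card_powersetCard, ← nsmul_eq_mul, card_smul_expect]
  rw [hmean, sum_mul]
  refine sum_congr rfl fun U hU ↦ ?_
  rw [(mem_powersetCard.mp hU).2, sum_powerset_apply_card (fun v ↦ m (w + v)), card_compl,
    Fintype.card_fin]
  simp_rw [nsmul_eq_mul]

lemma choose_mul_choose_mul_choose {n K w v : ℕ} (hw : w ≤ K) :
    n.choose (w + v) * ((w + v).choose w * (n - (w + v)).choose (K - w)) =
      n.choose K * K.choose w * (n - K).choose v := by
  obtain ⟨a, rfl⟩ := Nat.exists_eq_add_of_le hw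
  have hv := Nat.choose_mul (n := n) (k := w + v) (s := w) (by omega)
  have ha := Nat.choose_mul (n := n) (k := w + a) (s := w) (by omega)
  have hv' := Nat.choose_mul (n := n - w) (k := a + v) (s := v) (by omega)
  have ha' := Nat.choose_mul (n := n - w) (k := a + v) (s := a) (by omega)
  rw [← Nat.choose_symm_add] at hv'
  simp only [Nat.add_sub_cancel_left, Nat.add_sub_cancel, Nat.sub_sub] at *
  rw [← mul_assoc, hv, ha, mul_assoc, mul_assoc, ← hv', ← ha']

lemma sum_choose_mul_choose_mul_choose {K w : ℕ} (hw : w ≤ K) (hK : K ≤ n) (m : ℕ → ℝ) :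
    ∑ j ∈ range (n + 1), n.choose j * (m j * (j.choose w * (n - j).choose (K - w))) =
      n.choose K * K.choose w * ∑ v ∈ range (n - K + 1), (n - K).choose v * m (w + v) := by
  have hsub : Ico w (w + (n - K + 1)) ⊆ range (n + 1) := fun j hj ↦ by
    rw [mem_Ico] at hj
    exact mem_range.mpr (by omega)
  rw [← sum_subset hsub, sum_Ico_eq_sum_range, add_tsub_cancel_left, mul_sum]
  · refine sum_congr rfl fun v _ ↦ ?_
    have := congrArg (Nat.cast : ℕ → ℝ) (choose_mul_choose_mul_choose (n := n) (v := v) hw)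
    push_cast at this
    linear_combination m (w + v) * this
  · intro j hj hj'
    rw [mem_range] at hj
    rw [mem_Ico, not_and_or] at hj'
    have hzero : j.choose w * (n - j).choose (K - w) = 0 := by
      rw [mul_eq_zero, Nat.choose_eq_zero_iff, Nat.choose_eq_zero_iff]
      omega
    rw [← Nat.cast_mul, hzero]
    simp

theorem sum_mul_eq_sum_mul_eval_acceptancePoly (hμ : SymmDist μ)
    (hT : DependsOn T (S : Set (Fin n))) :
    ((∑ x, μ x * T x : ℝ) : ℂ) =
      ∑ x, (μ x : ℂ) * (acceptancePoly n #S (symmTest S T)).eval (wt x : ℂ) := by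
  obtain ⟨m, hm⟩ : ∃ m : ℕ → ℝ, ∀ x, μ x = m (wt x) :=
    ⟨Function.extend wt μ 0, fun x ↦ (Function.FactorsThrough.extend_apply (hμ · ·) 0 x).symm⟩
  have hS : #S ≤ n := by simpa using card_le_univ S
  have hchoose : (n.choose #S : ℝ) ≠ 0 := mod_cast (Nat.choose_pos hS).ne'
  have hhypergeom (w : ℕ) (hw : w ≤ #S) :
      (#S).choose w * ∑ v ∈ range (n - #S + 1), (n - #S).choose v * m (w + v) =
        ∑ x : Fin n → Bool,
          m (wt x) * ((wt x).choose w * (n - wt x).choose (#S - w) / n.choose #S) := by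
    rw [sum_apply_wt fun j ↦ m j * (j.choose w * (n - j).choose (#S - w) / n.choose #S)]
    simp_rw [← mul_div_assoc, ← sum_div]
    rw [sum_choose_mul_choose_mul_choose hw hS, mul_assoc, mul_div_cancel_left₀ _ hchoose]
  simp_rw [eval_acceptancePoly_natCast (wt_le _), ← Complex.ofReal_mul, ← Complex.ofReal_sum, hm,
    sum_apply_wt_mul_eq_sum_symmTest hT, mul_sum]
  rw [sum_comm (s := univ)]
  congr 1
  refine sum_congr rfl fun w hw ↦ ?_
  simp_rw [mul_left_comm (m _) (symmTest S T w), ← mul_sum]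
  rw [← hhypergeom w (mem_range_succ_iff.mp hw)]
  ring

end Symmetrization

section Indistinguishability

variable {n k : ℕ} {μ ν : (Fin n → Bool) → ℝ}

lemma choose_wt (x : Fin n → Bool) (d : ℕ) :
    (wt x).choose d = #{U ∈ powersetCard d univ | ∀ i ∈ U, x i = true} := by
  rw [wt, ← card_powersetCard]
  congr 1
  ext U
  simp [mem_powersetCard, subset_iff, and_comm]

lemma sum_mul_choose_wt (μ : (Fin n → Bool) → ℝ) (d : ℕ) :
    ∑ x, μ x * (wt x).choose d = ∑ U ∈ powersetCard d univ, marg μ U fun _ ↦ true := by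
  simp_rw [marg, choose_wt, card_eq_sum_ones, sum_filter, Nat.cast_sum, mul_sum]
  rw [sum_comm]
  simp

theorem PerfIndist.sum_mul_eval_wt_eq (h : PerfIndist μ ν k) {q : ℂ[X]} (hq : q.natDegree ≤ k) :
    ∑ x, (μ x : ℂ) * q.eval (wt x : ℂ) = ∑ x, (ν x : ℂ) * q.eval (wt x : ℂ) := by
  obtain ⟨c, rfl⟩ := exists_eq_sum_smul_of_natDegree_le chooseSequence hq
  have hmoment (d : ℕ) (hd : d ≤ k) :
      ∑ x, (μ x : ℂ) * (wt x).choose d = ∑ x, (ν x : ℂ) * (wt x).choose d := by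
    have : ∑ x, μ x * (wt x).choose d = ∑ x, ν x * (wt x).choose d := by
      rw [sum_mul_choose_wt, sum_mul_choose_wt]
      exact sum_congr rfl fun U hU ↦ h U ((mem_powersetCard.mp hU).2.trans_le hd) _
    exact_mod_cast congrArg Complex.ofReal this
  simp_rw [eval_finsetSum, eval_smul, eval_chooseSequence, Ring.choose_natCast, smul_eq_mul,
    mul_sum, mul_left_comm _ (c _)]
  rw [sum_comm, sum_comm (s := univ)]
  refine sum_congr rfl fun d hd ↦ ?_
  rw [← mul_sum, ← mul_sum, hmoment d (mem_range_succ_iff.mp hd)]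

lemma IsProb.norm_sum_mul_sub_sum_mul_le (hμ : IsProb μ) (hν : IsProb ν) {f : (Fin n → Bool) → ℂ}
    {ε : ℝ} (hf : ∀ x, ‖f x‖ ≤ ε) : ‖∑ x, (μ x : ℂ) * f x - ∑ x, (ν x : ℂ) * f x‖ ≤ 2 * ε := by
  have hmean {p : (Fin n → Bool) → ℝ} (hp : IsProb p) : ‖∑ x, (p x : ℂ) * f x‖ ≤ ε := by
    calc ‖∑ x, (p x : ℂ) * f x‖ ≤ ∑ x, p x * ε := norm_sum_le_of_le _ fun x _ ↦ by
          rw [norm_mul, Complex.norm_of_nonneg (hp.1 x)]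
          exact mul_le_mul_of_nonneg_left (hf x) (hp.1 x)
      _ = ε := by rw [← sum_mul, hp.2, one_mul]
  linarith [norm_sub_le (∑ x, (μ x : ℂ) * f x) (∑ x, (ν x : ℂ) * f x), hmean hμ, hmean hν]

theorem PerfIndist.norm_sum_mul_sub_sum_mul_le (h : PerfIndist μ ν k) (hμ : IsProb μ)
    (hν : IsProb ν) {p q : ℂ[X]} {ε : ℝ} (hq : q.natDegree ≤ k)
    (hpq : ∀ j ≤ n, ‖p.eval (j : ℂ) - q.eval (j : ℂ)‖ ≤ ε) :
    ‖∑ x, (μ x : ℂ) * p.eval (wt x : ℂ) - ∑ x, (ν x : ℂ) * p.eval (wt x : ℂ)‖ ≤ 2 * ε := by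
  have := hμ.norm_sum_mul_sub_sum_mul_le hν fun x ↦ hpq (wt x) (wt_le x)
  simpa only [mul_sub, sum_sub_distrib, h.sum_mul_eval_wt_eq hq, sub_sub_sub_cancel_right]
    using this

variable {K : ℕ} {S : Finset (Fin n)} {T : (Fin n → Bool) → ℝ}

theorem PerfIndist.abs_sum_mul_sub_sum_mul_le (h : PerfIndist μ ν k) (hkK : k < K)
    (hn : 4 * K ≤ n) (hμ : IsProb μ) (hν : IsProb ν) (hμs : SymmDist μ) (hνs : SymmDist ν)
    (hS : #S = K) (hT : DependsOn T (S : Set (Fin n))) (hT1 : ∀ x, |T x| ≤ 1) :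
    |∑ x, μ x * T x - ∑ x, ν x * T x| ≤
      12 * K * (K + 1) * √K * Real.exp (-k ^ 2 / (48 * K)) := by
  subst hS
  obtain ⟨q, hq, happrox⟩ := exists_natDegree_le_norm_eval_acceptancePoly_sub_le (by omega) hn
    (abs_symmTest_le_one hT1) (δ := k / (8 * #S)) (by positivity) k
  have hbound := h.norm_sum_mul_sub_sum_mul_le hμ hν hq happrox
  rw [← sum_mul_eq_sum_mul_eval_acceptancePoly hμs hT,
    ← sum_mul_eq_sum_mul_eval_acceptancePoly hνs hT, ← Complex.ofReal_sub, Complex.norm_real,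
    Real.norm_eq_abs] at hbound
  grw [hbound, exp_div_one_add_pow_le hkK]
  exact le_of_eq (by ring)

lemma IsProb.abs_sum_mul_sub_sum_mul_le_two (hμ : IsProb μ) (hν : IsProb ν)
    (hT1 : ∀ x, |T x| ≤ 1) : |∑ x, μ x * T x - ∑ x, ν x * T x| ≤ 2 := by
  have := hμ.norm_sum_mul_sub_sum_mul_le hν (f := fun x ↦ (T x : ℂ)) (ε := 1) (by simpa using hT1)
  rw [← Real.norm_eq_abs, ← Complex.norm_real]
  push_cast
  linarith

lemma TestOn.abs_le_one (hT : TestOn S T) (x : Fin n → Bool) : |T x| ≤ 1 := by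
  rcases hT.1 x with hx | hx <;> simp [hx]

lemma TestOn.dependsOn (hT : TestOn S T) : DependsOn T (S : Set (Fin n)) :=
  fun x y ↦ hT.2 x y

end Indistinguishability

theorem stmt4_general {n k K : ℕ} (hkK : k < K) (hn : 4 * K ≤ n) {μ ν : (Fin n → Bool) → ℝ}
    (hμ : IsProb μ) (hν : IsProb ν) (hμs : SymmDist μ) (hνs : SymmDist ν) (h : PerfIndist μ ν k)
    {S : Finset (Fin n)} (hS : #S = K) {T : (Fin n → Bool) → ℝ}
    (hT : DependsOn T (S : Set (Fin n))) (hT1 : ∀ x, |T x| ≤ 1) :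
    |∑ x, μ x * T x - ∑ x, ν x * T x| ≤
      24 * (K : ℝ) ^ ((3 : ℝ) / 2) * Real.exp (-(k : ℝ) ^ 2 / (96 * K)) := by
  have hK : (1 : ℝ) ≤ K := by exact_mod_cast (by omega : 1 ≤ K)
  set t : ℝ := (K : ℝ) ^ ((3 : ℝ) / 2) * Real.exp (-(k : ℝ) ^ 2 / (96 * K)) with ht
  have ht_nonneg : 0 ≤ t := by positivity
  have hsq : t ^ 2 = K ^ 3 * Real.exp (-(k : ℝ) ^ 2 / (48 * K)) := by
    rw [ht, mul_pow, ← Real.rpow_mul_natCast (by positivity), ← Real.exp_nat_mul]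
    congr 1
    · rw [← Real.rpow_natCast]
      norm_num
    · congr 1
      field_simp
      ring
  have htwo := hμ.abs_sum_mul_sub_sum_mul_le_two hν hT1
  have hmain : |∑ x, μ x * T x - ∑ x, ν x * T x| ≤ 24 * t ^ 2 :=
    calc _ ≤ 12 * K * (K + 1) * √K * Real.exp (-k ^ 2 / (48 * K)) :=
          h.abs_sum_mul_sub_sum_mul_le hkK hn hμ hν hμs hνs hS hT hT1
      _ ≤ 12 * K * (K + K) * K * Real.exp (-k ^ 2 / (48 * K)) := by
        gcongr
        exact (Real.sqrt_le_left (by linarith)).mpr (le_self_pow₀ hK two_ne_zero)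
      _ = 24 * t ^ 2 := by rw [hsq]; ring
  rw [mul_assoc, ← ht]
  -- Since `min 2 (24 * t ^ 2) ≤ 24 * t`, the trivial bound halves the power of `K` at the cost of
  -- halving the exponent.
  rcases le_total 1 t with h1 | h1
  · linarith
  · nlinarith

theorem stmt4 :
    ∃ C : ℝ, 0 < C ∧
      ∀ (n k K : ℕ), 1 ≤ k → k < K → (K : ℝ) ≤ (n : ℝ) / 64 →
        ∀ μ ν : (Fin n → Bool) → ℝ, IsProb μ → IsProb ν → SymmDist μ → SymmDist ν →
          PerfIndist μ ν k →
          ∀ S : Finset (Fin n), S.card = K →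
            ∀ T : (Fin n → Bool) → ℝ, TestOn S T →
              |(∑ x : Fin n → Bool, μ x * T x) - ∑ x : Fin n → Bool, ν x * T x| ≤
                C * (K : ℝ) ^ ((3 : ℝ) / 2) * Real.exp (-(k : ℝ) ^ 2 / (1156 * K)) := by
  refine ⟨24, by norm_num, fun n k K _ hkK hKn μ ν hμ hν hμs hνs h S hS T hT ↦
    (stmt4_general hkK ?_ hμ hν hμs hνs h hS hT.dependsOn hT.abs_le_one).trans ?_⟩
  · exact_mod_cast (by linarith [K.cast_nonneg (α := ℝ)] : (4 * K : ℝ) ≤ n)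
  · have hK : 0 < K := by omega
    rw [neg_div, neg_div]
    gcongr
    norm_num
end

section
/- There exist constants c₁, c₂ > 0 such that for every integer n ≥ 2, every real t > 0, every y ∈ {0,1}^n, and every real d with d > √(n·t·log n), there exists a multilinear real polynomial p of degree at most d and weight at most 2^{c₁·n·t·(log n)²/d} such that |p(x) − EQ_y(x)| ≤ n^{−c₂·t} for all x ∈ {0,1}^n. -/
open Finset

/-- Evaluation of the multilinear polynomial with coefficients `c` over the parity
(Fourier) basis, identifying `{0,1}` with `{-1,1}` via `b ↦ (-1)^b`. -/
def evalPM {n : ℕ} (c : Finset (Fin n) → ℝ) (x : Fin n → Bool) : ℝ :=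
  ∑ S : Finset (Fin n), c S * ∏ i ∈ S, (if x i then (-1 : ℝ) else 1)

/-- `EQ_y : {0,1}^n → {0,1}`, the point function of `y`. -/
def EQ {n : ℕ} (y : Fin n → Bool) (x : Fin n → Bool) : ℝ := if x = y then 1 else 0

/-!
Split the `n` coordinates into `m ≈ n / b` blocks of size at most `b`, and let `s(x)` be the number
of blocks on which `x` and `y` differ. The indicator of agreement on a block is a product of at most
`b` factors `(1 ± xᵢ) / 2`, each of weight `1`, so `s` has degree at most `b` and weight at most
`2 m`, and `EQ_y(x) = 1` exactly when `s(x) = 0`.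

It remains to compose `s` with a univariate polynomial `q` such that `q(0) = 1` and `|q(s)| ≤ e⁻ᵏ`
for `s = 1, …, m`. Take the product of two factors. The first kills each `i = 1, …, k` by a
Chebyshev polynomial of degree `O(√(m / i))`, rescaled so that its largest root is `i`; the second
is the `k`-th power of a Chebyshev polynomial of degree `O(√(m / k))`, normalized to be `1` at `0`
and hence at most `1 / 3` on `[k, m]`. Both factors have degree `O(√(m k))`. The weight is
submultiplicative, so `T_r ∘ f` has weight at most `(2 w + 1) ^ r` when `f` has weight `w`. Hence
`q ∘ s` has degree `b * deg q`, while its weight is exponential in `deg q` alone, and the block size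
`b ≈ d² / (n k)` is the largest one that keeps the degree below `d`.
-/

open Polynomial.Chebyshev (T)

/-- The real function `f` on the cube is represented by a multilinear polynomial over the parity
basis of degree at most `d` and weight at most `w`. -/
def HasDegreeWeightLE {n : ℕ} (d : ℕ) (w : ℝ) (f : (Fin n → Bool) → ℝ) : Prop :=
  ∃ p : Finset (Fin n) → ℝ,
    (∀ S, p S ≠ 0 → #S ≤ d) ∧ ∑ S, |p S| ≤ w ∧ ∀ x, evalPM p x = f x

/-- The parity `χ_S`, evaluated under the identification `b ↦ (-1)^b`. -/
def parity {n : ℕ} (S : Finset (Fin n)) (x : Fin n → Bool) : ℝ :=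
  ∏ i ∈ S, if x i then (-1 : ℝ) else 1

lemma parity_symmDiff {n : ℕ} (S T : Finset (Fin n)) (x : Fin n → Bool) :
    parity (symmDiff S T) x = parity S x * parity T x := by
  have parity_eq_prod_univ (U : Finset (Fin n)) :
      parity U x = ∏ i, if i ∈ U then (if x i then (-1 : ℝ) else 1) else 1 := by
    simp only [parity, prod_ite_mem, univ_inter]
  rw [parity_eq_prod_univ, parity_eq_prod_univ S, parity_eq_prod_univ T, ← prod_mul_distrib]
  refine prod_congr rfl fun i _ ↦ ?_
  by_cases hS : i ∈ S <;> by_cases hT : i ∈ T <;> cases x i <;> simp [mem_symmDiff, hS, hT]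

namespace HasDegreeWeightLE

variable {n d d' : ℕ} {w w' : ℝ} {f g : (Fin n → Bool) → ℝ}

lemma mono (hf : HasDegreeWeightLE d w f) (hd : d ≤ d') (hw : w ≤ w') :
    HasDegreeWeightLE d' w' f := by
  obtain ⟨p, hdeg, hweight, heval⟩ := hf
  exact ⟨p, fun S hS ↦ (hdeg S hS).trans hd, hweight.trans hw, heval⟩

lemma weight_nonneg (hf : HasDegreeWeightLE d w f) : 0 ≤ w := by
  obtain ⟨p, -, hweight, -⟩ := hf
  exact (sum_nonneg fun _ _ ↦ abs_nonneg _).trans hweight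

lemma mul_parity {a : ℝ} {S : Finset (Fin n)} (hS : a ≠ 0 → #S ≤ d) :
    HasDegreeWeightLE d |a| (fun x ↦ a * parity S x) := by
  refine ⟨Pi.single S a, fun U hU ↦ ?_, ?_, fun x ↦ ?_⟩
  · obtain rfl : U = S := by
      by_contra hne
      exact hU (by simp [Pi.single_eq_of_ne hne])
    exact hS (by simpa using hU)
  · rw [sum_eq_single S (fun U _ hU ↦ by simp [Pi.single_eq_of_ne hU]) (by simp)]
    simp
  · rw [evalPM, sum_eq_single S (fun U _ hU ↦ by simp [Pi.single_eq_of_ne hU]) (by simp)]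
    simp [parity]

lemma const (a : ℝ) : HasDegreeWeightLE (n := n) d |a| (fun _ ↦ a) := by
  simpa [parity] using mul_parity (n := n) (d := d) (a := a) (S := ∅) (by simp)

lemma add (hf : HasDegreeWeightLE d w f) (hg : HasDegreeWeightLE d w' g) :
    HasDegreeWeightLE d (w + w') (fun x ↦ f x + g x) := by
  obtain ⟨p, hpdeg, hpweight, hpeval⟩ := hf
  obtain ⟨q, hqdeg, hqweight, hqeval⟩ := hg
  refine ⟨p + q, fun S hS ↦ ?_, ?_, fun x ↦ ?_⟩
  · by_cases hp : p S = 0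
    · exact hqdeg S fun hq ↦ hS (by simp [hp, hq])
    · exact hpdeg S hp
  · calc ∑ S, |(p + q) S| ≤ ∑ S, (|p S| + |q S|) := sum_le_sum fun S _ ↦ abs_add_le _ _
      _ ≤ w + w' := by
        rw [sum_add_distrib]
        exact add_le_add hpweight hqweight
  · simp only [← hpeval, ← hqeval, evalPM, Pi.add_apply, add_mul, sum_add_distrib]

lemma sum {ι : Type*} (s : Finset ι) {w : ι → ℝ} {f : ι → (Fin n → Bool) → ℝ}
    (hf : ∀ i ∈ s, HasDegreeWeightLE d (w i) (f i)) :
    HasDegreeWeightLE d (∑ i ∈ s, w i) (fun x ↦ ∑ i ∈ s, f i x) := by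
  classical
  induction s using Finset.induction_on with
  | empty => simpa using const (n := n) (d := d) 0
  | insert a s ha ih =>
    simp only [sum_insert ha]
    exact (hf a (mem_insert_self a s)).add (ih fun i hi ↦ hf i (mem_insert_of_mem hi))

lemma mul (hf : HasDegreeWeightLE d w f) (hg : HasDegreeWeightLE d' w' g) :
    HasDegreeWeightLE (d + d') (w * w') (fun x ↦ f x * g x) := by
  obtain ⟨p, hpdeg, hpweight, hpeval⟩ := hf
  obtain ⟨q, hqdeg, hqweight, hqeval⟩ := hg
  have hterm (S T : Finset (Fin n)) : HasDegreeWeightLE (d + d') |p S * q T|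
      (fun x ↦ p S * q T * parity (symmDiff S T) x) := by
    refine mul_parity fun hpq ↦ ?_
    calc #(symmDiff S T) ≤ #(S ∪ T) := card_le_card symmDiff_le_sup
      _ ≤ #S + #T := card_union_le S T
      _ ≤ d + d' := add_le_add (hpdeg S (left_ne_zero_of_mul hpq))
          (hqdeg T (right_ne_zero_of_mul hpq))
  have hexpand : (fun x ↦ f x * g x) =
      fun x ↦ ∑ S, ∑ T, p S * q T * parity (symmDiff S T) x := by
    ext x
    rw [← hpeval, ← hqeval, evalPM, evalPM, sum_mul_sum]
    refine sum_congr rfl fun S _ ↦ sum_congr rfl fun T _ ↦ ?_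
    rw [parity_symmDiff, parity, parity]
    ring
  rw [hexpand]
  refine (sum univ fun S _ ↦ sum univ fun T _ ↦ hterm S T).mono le_rfl ?_
  simp only [abs_mul, ← sum_mul_sum]
  exact mul_le_mul hpweight hqweight (sum_nonneg fun _ _ ↦ abs_nonneg _)
    ((sum_nonneg fun _ _ ↦ abs_nonneg _).trans hpweight)

lemma const_mul (a : ℝ) (hf : HasDegreeWeightLE d w f) :
    HasDegreeWeightLE d (|a| * w) (fun x ↦ a * f x) := by
  simpa using (const (d := 0) a).mul hf

lemma prod {ι : Type*} (s : Finset ι) {d : ι → ℕ} {w : ι → ℝ} {f : ι → (Fin n → Bool) → ℝ}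
    (hf : ∀ i ∈ s, HasDegreeWeightLE (d i) (w i) (f i)) :
    HasDegreeWeightLE (∑ i ∈ s, d i) (∏ i ∈ s, w i) (fun x ↦ ∏ i ∈ s, f i x) := by
  classical
  induction s using Finset.induction_on with
  | empty => simpa using const (n := n) (d := 0) 1
  | insert a s ha ih =>
    simp only [sum_insert ha, prod_insert ha]
    exact (hf a (mem_insert_self a s)).mul (ih fun i hi ↦ hf i (mem_insert_of_mem hi))

lemma pow (hf : HasDegreeWeightLE d w f) (k : ℕ) :
    HasDegreeWeightLE (k * d) (w ^ k) (fun x ↦ f x ^ k) := by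
  simpa using prod (range k) fun _ _ ↦ hf

lemma chebyshev (hf : HasDegreeWeightLE d w f) (r : ℕ) :
    HasDegreeWeightLE (d * r) ((2 * w + 1) ^ r) (fun x ↦ (T ℝ r).eval (f x)) := by
  have hw := hf.weight_nonneg
  induction r using Nat.twoStepInduction with
  | zero => simpa using const (n := n) (d := 0) 1
  | one => simpa using hf.mono le_rfl (by linarith)
  | more r ih ih' =>
    have hrec : (fun x ↦ (T ℝ ((r + 2 : ℕ) : ℤ)).eval (f x)) = fun x ↦
        2 * (f x * (T ℝ ((r + 1 : ℕ) : ℤ)).eval (f x)) + -1 * (T ℝ (r : ℤ)).eval (f x) := by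
      ext x
      push_cast
      rw [Polynomial.Chebyshev.T_add_two]
      simp only [Polynomial.eval_sub, Polynomial.eval_mul, Polynomial.eval_ofNat,
        Polynomial.eval_X]
      ring
    rw [hrec]
    have hlead := ((hf.mul ih').const_mul 2).mono (d' := d * (r + 2)) (by linarith) le_rfl
    have htail := (ih.const_mul (-1)).mono (d' := d * (r + 2)) (by gcongr; omega) le_rfl
    refine (hlead.add htail).mono le_rfl ?_
    have hpow : 0 ≤ (2 * w + 1) ^ r * w := by positivity
    rw [abs_neg, abs_one, abs_two]
    linarith [show (2 * w + 1) ^ (r + 2) = 2 * (w * (2 * w + 1) ^ (r + 1)) +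
      1 * (2 * w + 1) ^ r + 2 * ((2 * w + 1) ^ r * w) by ring]

end HasDegreeWeightLE

/-- The Chebyshev polynomial `T_r` as a function of `s`, rescaled by the affine change of variable
that maps `[a, a + M]` onto `[-1, 1]` and sends `a` to `1`. -/
noncomputable def rescaledT (r : ℕ) (M a s : ℝ) : ℝ :=
  (T ℝ r).eval (1 + 2 * (a - s) / M)

lemma rescaledT_self (r : ℕ) (M a : ℝ) : rescaledT r M a a = 1 := by
  simp [rescaledT]

lemma abs_rescaledT_le_one (r : ℕ) {M a s : ℝ} (hM : 0 < M) (has : a ≤ s) (hsM : s ≤ a + M) :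
    |rescaledT r M a s| ≤ 1 := by
  apply Polynomial.Chebyshev.abs_eval_T_real_le_one
  have hnonpos : (a - s) / M ≤ 0 := div_nonpos_of_nonpos_of_nonneg (by linarith) hM.le
  have hge : -1 ≤ (a - s) / M := by rw [le_div_iff₀ hM]; linarith
  rw [mul_div_assoc, abs_le]
  constructor <;> linarith

lemma HasDegreeWeightLE.rescaledT {n d : ℕ} {w M a : ℝ} {f : (Fin n → Bool) → ℝ}
    (hf : HasDegreeWeightLE d w f) (r : ℕ) (hM : 0 < M) (ha : |a| ≤ M) (hw : w ≤ 2 * M) :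
    HasDegreeWeightLE (d * r) (15 ^ r) (fun x ↦ rescaledT r M a (f x)) := by
  have haffine : HasDegreeWeightLE d 7 (fun x ↦ 1 + 2 * (a - f x) / M) := by
    have h := (const (d := d) (1 + 2 / M * a)).add (hf.const_mul (-(2 / M)))
    have heq : (fun x ↦ 1 + 2 * (a - f x) / M) = fun x ↦ 1 + 2 / M * a + -(2 / M) * f x := by
      ext x
      ring
    rw [heq]
    refine h.mono le_rfl ?_
    calc |1 + 2 / M * a| + |-(2 / M)| * w ≤ 1 + 2 / M * |a| + 2 / M * w := by
          gcongr
          · refine (abs_add_le _ _).trans_eq ?_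
            rw [abs_one, abs_mul, abs_of_pos (by positivity : 0 < 2 / M)]
          · exact hf.weight_nonneg
          · rw [abs_neg, abs_of_pos (by positivity)]
      _ ≤ 1 + 2 / M * M + 2 / M * (2 * M) := by gcongr
      _ = 7 := by field_simp; norm_num
  exact (haffine.chebyshev r).mono le_rfl (by norm_num)

lemma one_add_sq_mul_le_eval_T {δ : ℝ} (hδ : 0 ≤ δ) (r : ℕ) :
    1 + (r : ℝ) ^ 2 * δ ≤ (T ℝ r).eval (1 + δ) := by
  have hstep (r : ℕ) :
      (T ℝ r).eval (1 + δ) + (2 * r + 1) * δ ≤ (T ℝ ((r + 1 : ℕ) : ℤ)).eval (1 + δ) := by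
    induction r with
    | zero => simp
    | succ r ih =>
      have hone := Polynomial.Chebyshev.one_le_eval_T_real ((r + 1 : ℕ) : ℤ)
        (show 1 ≤ 1 + δ by linarith)
      have hrec : (T ℝ ((r + 1 + 1 : ℕ) : ℤ)).eval (1 + δ) =
          2 * (1 + δ) * (T ℝ ((r + 1 : ℕ) : ℤ)).eval (1 + δ) - (T ℝ r).eval (1 + δ) := by
        push_cast
        rw [add_assoc, one_add_one_eq_two, Polynomial.Chebyshev.T_add_two]
        simp
      rw [hrec]
      push_cast at ih hone ⊢
      linarith [mul_le_mul_of_nonneg_right hone hδ]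
  induction r with
  | zero => simp
  | succ r ih =>
    refine le_trans ?_ (hstep r)
    push_cast
    linarith

lemma exists_nat_div_le_sq_and_le_two_mul_sqrt {m a : ℝ} (ha : 0 < a) (ham : a ≤ m) :
    ∃ r : ℕ, 1 ≤ r ∧ m / a ≤ (r : ℝ) ^ 2 ∧ (r : ℝ) ≤ 2 * √(m / a) := by
  have hone : 1 ≤ √(m / a) := by rwa [Real.one_le_sqrt, one_le_div ha]
  refine ⟨⌈√(m / a)⌉₊, Nat.one_le_ceil_iff.mpr (by linarith), ?_, ?_⟩
  · exact (Real.sqrt_le_left (by positivity)).mp (Nat.le_ceil _)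
  · linarith [Nat.ceil_lt_add_one (Real.sqrt_nonneg (m / a))]

lemma exists_three_le_rescaledT_zero {m a : ℝ} (ha : 0 < a) (ham : a ≤ m) :
    ∃ r : ℕ, (r : ℝ) ≤ 2 * √(m / a) ∧ 3 ≤ rescaledT r m a 0 := by
  obtain ⟨r, -, hsq, hr⟩ := exists_nat_div_le_sq_and_le_two_mul_sqrt ha ham
  have hm : 0 < m := ha.trans_le ham
  refine ⟨r, hr, ?_⟩
  have hprod : 1 ≤ (r : ℝ) ^ 2 * (a / m) := by
    calc (1 : ℝ) = m / a * (a / m) := by field_simp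
      _ ≤ (r : ℝ) ^ 2 * (a / m) := by gcongr
  calc (3 : ℝ) ≤ 1 + (r : ℝ) ^ 2 * (2 * a / m) := by rw [mul_div_assoc]; linarith
    _ ≤ (T ℝ r).eval (1 + 2 * a / m) := one_add_sq_mul_le_eval_T (by positivity) r
    _ = rescaledT r m a 0 := by rw [rescaledT, sub_zero]

lemma exists_mul_rescaledT_le_exp_neg_one {m a : ℝ} (ha : 0 < a) (ham : a ≤ m) :
    ∃ (r : ℕ) (c : ℝ), (r : ℝ) ≤ 2 * √(m / a) ∧ |c| ≤ 1 ∧ c * rescaledT r m a 0 = 1 ∧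
      ∀ s, a ≤ s → s ≤ m → |c * rescaledT r m a s| ≤ Real.exp (-1) := by
  obtain ⟨r, hr, hpeak⟩ := exists_three_le_rescaledT_zero ha ham
  have hpeak_pos : 0 < rescaledT r m a 0 := by linarith
  refine ⟨r, (rescaledT r m a 0)⁻¹, hr, ?_, inv_mul_cancel₀ hpeak_pos.ne', fun s has hsm ↦ ?_⟩
  · rw [abs_inv, abs_of_pos hpeak_pos]
    exact inv_le_one_of_one_le₀ (by linarith)
  · rw [abs_mul, abs_inv, abs_of_pos hpeak_pos, Real.exp_neg]
    calc (rescaledT r m a 0)⁻¹ * |rescaledT r m a s| ≤ (rescaledT r m a 0)⁻¹ * 1 := by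
          gcongr
          exact abs_rescaledT_le_one r (ha.trans_le ham) has (by linarith)
      _ ≤ (Real.exp 1)⁻¹ := by
          rw [mul_one]
          exact inv_anti₀ (Real.exp_pos 1) (by linarith [Real.exp_one_lt_three])

-- The largest root of `T_r` is `cos (2 θ) = 1 - 2 sin² θ` with `θ = π / (4 r)`.
lemma exists_rescaledT_eq_zero {m a : ℝ} (ha : 0 < a) (ham : a ≤ m) :
    ∃ (r : ℕ) (M : ℝ), (r : ℝ) ≤ 2 * √(m / a) ∧ m ≤ M ∧ rescaledT r M 0 a = 0 := by
  obtain ⟨r, hr1, hsq, hr⟩ := exists_nat_div_le_sq_and_le_two_mul_sqrt ha ham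
  have hr0 : (1 : ℝ) ≤ r := by exact_mod_cast hr1
  set θ : ℝ := Real.pi / (4 * r) with hθ
  have hθ_pos : 0 < θ := by positivity
  have hθ_le : θ ≤ 1 / r := by
    rw [hθ, div_le_div_iff₀ (by positivity) (by positivity)]
    nlinarith [Real.pi_le_four]
  have hθ_lt : θ < Real.pi := by
    rw [hθ, div_lt_iff₀ (by positivity)]
    nlinarith [Real.pi_pos]
  have hsin_pos : 0 < Real.sin θ := Real.sin_pos_of_pos_of_lt_pi hθ_pos hθ_lt
  have hsin_le : Real.sin θ ≤ 1 / r := (Real.sin_le hθ_pos.le).trans hθ_le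
  refine ⟨r, a / Real.sin θ ^ 2, hr, ?_, ?_⟩
  · rw [le_div_iff₀ (by positivity)]
    calc m * Real.sin θ ^ 2 ≤ m * (1 / r) ^ 2 := by gcongr; exact ha.le.trans ham
      _ = m / a * (a / r ^ 2) := by field_simp
      _ ≤ r ^ 2 * (a / r ^ 2) := by gcongr
      _ = a := by field_simp
  · have hcos : 1 + 2 * (0 - a) / (a / Real.sin θ ^ 2) = Real.cos (2 * θ) := by
      rw [Real.cos_two_mul, Real.cos_sq']
      field_simp
      ring
    have hangle : ((r : ℤ) : ℝ) * (2 * θ) = Real.pi / 2 := by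
      rw [hθ]
      push_cast
      field_simp
      norm_num
    rw [rescaledT, hcos, Polynomial.Chebyshev.T_real_cos, hangle, Real.cos_pi_div_two]

lemma sum_range_one_div_sqrt_add_one_le (k : ℕ) :
    ∑ i ∈ range k, 1 / √((i : ℝ) + 1) ≤ 2 * √k := by
  induction k with
  | zero => simp
  | succ k ih =>
    have hk : √(k : ℝ) ^ 2 = k := Real.sq_sqrt (by positivity)
    have hk' : √((k : ℝ) + 1) ^ 2 = k + 1 := Real.sq_sqrt (by positivity)
    have hterm : 1 / √((k : ℝ) + 1) ≤ 2 * √((k : ℝ) + 1) - 2 * √(k : ℝ) := by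
      rw [div_le_iff₀ (by positivity)]
      nlinarith [sq_nonneg (√((k : ℝ) + 1) - √(k : ℝ))]
    rw [sum_range_succ]
    push_cast
    linarith

lemma sum_range_sqrt_div_add_one_le {m : ℝ} (hm : 0 ≤ m) (k : ℕ) :
    ∑ i ∈ range k, √(m / (i + 1)) ≤ 2 * √(m * k) := by
  calc ∑ i ∈ range k, √(m / (i + 1)) = √m * ∑ i ∈ range k, 1 / √((i : ℝ) + 1) := by
        simp only [mul_sum, Real.sqrt_div hm, mul_one_div]
    _ ≤ √m * (2 * √k) := by gcongr; exact sum_range_one_div_sqrt_add_one_le k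
    _ = 2 * √(m * k) := by rw [Real.sqrt_mul hm]; ring

section Composition

variable {n b m k : ℕ} {f : (Fin n → Bool) → ℝ}

lemma exists_comp_vanishing (hf : HasDegreeWeightLE b (2 * m) f) (hkm : k ≤ m) :
    ∃ (R : ℕ) (q : ℝ → ℝ), (R : ℝ) ≤ 4 * √(m * k) ∧
      HasDegreeWeightLE (b * R) (15 ^ R) (fun x ↦ q (f x)) ∧ q 0 = 1 ∧
      (∀ s : ℕ, s ≠ 0 → s ≤ k → q s = 0) ∧ ∀ s : ℝ, 0 ≤ s → s ≤ m → |q s| ≤ 1 := by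
  have hroot (i : ℕ) : ∃ (r : ℕ) (M : ℝ), i < k →
      (r : ℝ) ≤ 2 * √(m / (i + 1)) ∧ m ≤ M ∧ rescaledT r M 0 (i + 1) = 0 := by
    by_cases hi : i < k
    · obtain ⟨r, M, h⟩ := exists_rescaledT_eq_zero (m := m) (a := i + 1) (by positivity)
        (by exact_mod_cast Nat.succ_le_of_lt (hi.trans_le hkm))
      exact ⟨r, M, fun _ ↦ h⟩
    · exact ⟨0, 0, fun h ↦ absurd h hi⟩
  choose r M hrM using hroot
  have hM_pos (i : ℕ) (hi : i < k) : 0 < M i :=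
    lt_of_lt_of_le (by exact_mod_cast i.zero_le.trans_lt (hi.trans_le hkm)) (hrM i hi).2.1
  refine ⟨∑ i ∈ range k, r i, fun s ↦ ∏ i ∈ range k, rescaledT (r i) (M i) 0 s, ?_, ?_,
    by simp [rescaledT_self], fun s hs hsk ↦ ?_, fun s hs hsm ↦ ?_⟩
  · push_cast
    calc ∑ i ∈ range k, (r i : ℝ) ≤ ∑ i ∈ range k, 2 * √(m / ((i : ℝ) + 1)) :=
          sum_le_sum fun i hi ↦ (hrM i (mem_range.mp hi)).1
      _ ≤ 4 * √(m * k) := by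
          rw [← mul_sum]
          linarith [sum_range_sqrt_div_add_one_le m.cast_nonneg k]
  · rw [mul_sum, ← prod_pow_eq_pow_sum]
    refine .prod _ fun i hi ↦ ?_
    have hi := mem_range.mp hi
    exact hf.rescaledT (r i) (hM_pos i hi) (by simpa using (hM_pos i hi).le)
      (by linarith [(hrM i hi).2.1])
  · obtain ⟨i, rfl⟩ := Nat.exists_eq_succ_of_ne_zero hs
    exact prod_eq_zero (mem_range.mpr hsk) (by simpa using (hrM i hsk).2.2)
  · rw [abs_prod]
    refine prod_le_one (fun _ _ ↦ abs_nonneg _) fun i hi ↦ ?_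
    have hi := mem_range.mp hi
    exact abs_rescaledT_le_one _ (hM_pos i hi) hs (by linarith [(hrM i hi).2.1])

lemma exists_comp_le_exp_neg (hf : HasDegreeWeightLE b (2 * m) f) (hk : 1 ≤ k) (hkm : k ≤ m) :
    ∃ (R : ℕ) (q : ℝ → ℝ), (R : ℝ) ≤ 2 * √(m * k) ∧
      HasDegreeWeightLE (b * R) (15 ^ R) (fun x ↦ q (f x)) ∧ q 0 = 1 ∧
      ∀ s : ℝ, k ≤ s → s ≤ m → |q s| ≤ Real.exp (-k) := by
  have hk0 : (0 : ℝ) < k := by exact_mod_cast hk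
  have hkm' : (k : ℝ) ≤ m := by exact_mod_cast hkm
  have hm0 : (0 : ℝ) < m := hk0.trans_le hkm'
  obtain ⟨r, c, hr, hc, hzero, hdecay⟩ := exists_mul_rescaledT_le_exp_neg_one hk0 hkm'
  refine ⟨k * r, fun s ↦ (c * rescaledT r m k s) ^ k, ?_, ?_, by simp [hzero],
    fun s hks hsm ↦ ?_⟩
  · calc ((k * r : ℕ) : ℝ) ≤ k * (2 * √(m / k)) := by push_cast; gcongr
      _ = 2 * √(m * k) := by
        rw [Real.sqrt_div (by positivity), Real.sqrt_mul (by positivity)]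
        nth_rewrite 1 [← Real.mul_self_sqrt hk0.le]
        field_simp
  · have hfactor : HasDegreeWeightLE (b * r) (15 ^ r) (fun x ↦ c * rescaledT r m k (f x)) :=
      ((hf.rescaledT r hm0 (by simpa using hkm') le_rfl).const_mul c).mono le_rfl
        (mul_le_of_le_one_left (by positivity) hc)
    refine (hfactor.pow k).mono (le_of_eq (by ring)) (le_of_eq ?_)
    rw [← pow_mul, mul_comm]
  · calc |(c * rescaledT r m k s) ^ k| ≤ Real.exp (-1) ^ k := by
          rw [abs_pow]
          gcongr
          exact hdecay s hks hsm
      _ = Real.exp (-k) := by rw [← Real.exp_nat_mul, mul_neg_one]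

lemma exists_comp_approx_indicator_zero (hf : HasDegreeWeightLE b (2 * m) f) (hk : 1 ≤ k)
    (hkm : k ≤ m) :
    ∃ (R : ℕ) (q : ℝ → ℝ), (R : ℝ) ≤ 6 * √(m * k) ∧
      HasDegreeWeightLE (b * R) (15 ^ R) (fun x ↦ q (f x)) ∧ q 0 = 1 ∧
      ∀ s : ℕ, s ≠ 0 → s ≤ m → |q s| ≤ Real.exp (-k) := by
  obtain ⟨R₁, q₁, hR₁, hdeg₁, hzero₁, hvanish, hle_one⟩ := exists_comp_vanishing hf hkm
  obtain ⟨R₂, q₂, hR₂, hdeg₂, hzero₂, hdecay⟩ := exists_comp_le_exp_neg hf hk hkm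
  refine ⟨R₁ + R₂, fun s ↦ q₁ s * q₂ s, by push_cast; linarith, ?_, by simp [hzero₁, hzero₂],
    fun s hs hsm ↦ ?_⟩
  · rw [mul_add, pow_add]
    exact hdeg₁.mul hdeg₂
  · have hsm' : (s : ℝ) ≤ m := by exact_mod_cast hsm
    change |q₁ s * q₂ s| ≤ Real.exp (-k)
    rcases le_or_gt s k with hsk | hks
    · rw [hvanish s hs hsk, zero_mul, abs_zero]
      exact (Real.exp_pos _).le
    · rw [abs_mul, ← one_mul (Real.exp _)]
      exact mul_le_mul (hle_one s s.cast_nonneg hsm') (hdecay s (by exact_mod_cast hks.le) hsm')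
        (abs_nonneg _) zero_le_one

end Composition

section Blocks

variable {n : ℕ} {ι : Type*} [DecidableEq ι]

/-- The blocks, i.e. the fibres of `block`, on which `x` and `y` differ. -/
def mismatchedBlocks (block : Fin n → ι) (y x : Fin n → Bool) : Finset ι :=
  ({i | x i ≠ y i} : Finset (Fin n)).image block

lemma mismatchedBlocks_eq_empty_iff {block : Fin n → ι} {y x : Fin n → Bool} :
    mismatchedBlocks block y x = ∅ ↔ x = y := by
  simp [mismatchedBlocks, filter_eq_empty_iff, funext_iff]

lemma hasDegreeWeightLE_forall_mem_eq (y : Fin n → Bool) (B : Finset (Fin n)) :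
    HasDegreeWeightLE #B 1 (fun x ↦ if ∀ i ∈ B, x i = y i then (1 : ℝ) else 0) := by
  have hcoord (i : Fin n) :
      HasDegreeWeightLE 1 1 (fun x ↦ if x i = y i then (1 : ℝ) else 0) := by
    have h := (HasDegreeWeightLE.const (n := n) (d := 1) (1 / 2)).add
      (HasDegreeWeightLE.mul_parity (a := if y i then (-1 / 2 : ℝ) else 1 / 2) (S := {i})
        fun _ ↦ (card_singleton i).le)
    convert h using 1
    · cases y i <;> norm_num [abs_of_pos, abs_of_neg]
    · ext x
      cases hx : x i <;> cases hy : y i <;> norm_num [parity, hx]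
  simpa [prod_ite_zero] using HasDegreeWeightLE.prod B fun i _ ↦ hcoord i

lemma hasDegreeWeightLE_EQ (y : Fin n → Bool) : HasDegreeWeightLE n 1 (EQ y) := by
  convert hasDegreeWeightLE_forall_mem_eq y univ using 1
  · simp
  · ext x
    simp [EQ, funext_iff]

lemma hasDegreeWeightLE_card_mismatchedBlocks [Fintype ι] {b : ℕ} {block : Fin n → ι}
    (hb : ∀ j, #{i | block i = j} ≤ b) (y : Fin n → Bool) :
    HasDegreeWeightLE b (2 * Fintype.card ι) (fun x ↦ (#(mismatchedBlocks block y x) : ℝ)) := by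
  have hblock (j : ι) : HasDegreeWeightLE b 2
      (fun x ↦ if j ∈ mismatchedBlocks block y x then (1 : ℝ) else 0) := by
    have h := (HasDegreeWeightLE.const (d := b) 1).add
      (((hasDegreeWeightLE_forall_mem_eq y {i | block i = j}).mono (hb j) le_rfl).const_mul (-1))
    convert h using 1
    · norm_num
    · ext x
      have hmem : j ∈ mismatchedBlocks block y x ↔
          ¬ ∀ i ∈ ({i | block i = j} : Finset (Fin n)), x i = y i := by
        simp [mismatchedBlocks, and_comm]
      rw [if_congr hmem rfl rfl, ite_not]
      split_ifs <;> norm_num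
  simpa [mul_comm] using HasDegreeWeightLE.sum univ fun j _ ↦ hblock j

lemma exists_approx_EQ_of_block [Fintype ι] {b k : ℕ} {block : Fin n → ι}
    (hb : ∀ j, #{i | block i = j} ≤ b) (hk : 1 ≤ k) (hkm : k ≤ Fintype.card ι)
    (y : Fin n → Bool) :
    ∃ (R : ℕ) (f : (Fin n → Bool) → ℝ), (R : ℝ) ≤ 6 * √(Fintype.card ι * k) ∧
      HasDegreeWeightLE (b * R) (15 ^ R) f ∧ ∀ x, |f x - EQ y x| ≤ Real.exp (-k) := by
  obtain ⟨R, q, hR, hdeg, hzero, hdecay⟩ :=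
    exists_comp_approx_indicator_zero (hasDegreeWeightLE_card_mismatchedBlocks hb y) hk hkm
  refine ⟨R, _, hR, hdeg, fun x ↦ ?_⟩
  by_cases hxy : x = y
  · have hcard : #(mismatchedBlocks block y x) = 0 :=
      card_eq_zero.mpr (mismatchedBlocks_eq_empty_iff.mpr hxy)
    rw [hcard, Nat.cast_zero, hzero, EQ, if_pos hxy, sub_self, abs_zero]
    exact Real.exp_nonneg _
  · have hcard : #(mismatchedBlocks block y x) ≠ 0 :=
      mt (fun h ↦ mismatchedBlocks_eq_empty_iff.mp (card_eq_zero.mp h)) hxy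
    simpa [EQ, hxy] using hdecay _ hcard (card_le_univ _)

end Blocks

lemma card_filter_val_div_eq_le {b : ℕ} (hb : 1 ≤ b) (n j : ℕ) :
    #{i : Fin n | i.val / b = j} ≤ b := by
  calc #{i : Fin n | i.val / b = j} ≤ #(Ico (j * b) (j * b + b)) := by
        refine card_le_card_of_injOn Fin.val (fun i hi ↦ ?_) Fin.val_injective.injOn
        obtain rfl : i.val / b = j := by simpa using hi
        rw [coe_Ico, Set.mem_Ico]
        exact ⟨Nat.div_mul_le_self _ _, Nat.lt_div_mul_add hb⟩
    _ = b := by simp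

lemma exists_approx_EQ {n b k : ℕ} (hb : 1 ≤ b) (hk : 1 ≤ k) (hkm : k ≤ n / b + 1)
    (y : Fin n → Bool) :
    ∃ (R : ℕ) (f : (Fin n → Bool) → ℝ), (R : ℝ) ≤ 6 * √((n / b + 1 : ℕ) * k) ∧
      HasDegreeWeightLE (b * R) (15 ^ R) f ∧ ∀ x, |f x - EQ y x| ≤ Real.exp (-k) := by
  let block (i : Fin n) : Fin (n / b + 1) :=
    ⟨i / b, Nat.lt_succ_of_le (Nat.div_le_div_right i.isLt.le)⟩
  have hfibre (j : Fin (n / b + 1)) : #{i | block i = j} ≤ b := by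
    simpa [block, Fin.ext_iff] using card_filter_val_div_eq_le hb n j
  simpa only [Fintype.card_fin] using
    exists_approx_EQ_of_block hfibre hk (by rwa [Fintype.card_fin]) y

lemma exists_blockSize {n k : ℕ} {d : ℝ} (hk : 1 ≤ k) (hd : 0 < d) (hdn : d < n)
    (hkd : 72 * n * k ≤ d ^ 2) :
    ∃ b : ℕ, 1 ≤ b ∧ k * b ≤ n ∧ b * (72 * n * k) ≤ d ^ 2 ∧ d ^ 2 ≤ 2 * b * (72 * n * k) := by
  have hn : (0 : ℝ) < n := hd.trans hdn
  have hden : (0 : ℝ) < 72 * n * k := by positivity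
  set b := ⌊d ^ 2 / (72 * n * k)⌋₊
  have hb : 1 ≤ b := (Nat.one_le_floor_iff _).mpr (by rwa [one_le_div hden])
  have hb_lower : b * (72 * n * k) ≤ d ^ 2 := by
    rw [← le_div_iff₀ hden]
    exact Nat.floor_le (by positivity)
  refine ⟨b, hb, ?_, hb_lower, ?_⟩
  · have hdn_sq : d ^ 2 ≤ n ^ 2 := by gcongr
    have hkb : (k : ℝ) * b ≤ n := by
      refine le_of_mul_le_mul_right ?_ hn
      linarith [show 0 ≤ (k : ℝ) * b * n by positivity]
    exact_mod_cast hkb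
  · have hb' : (1 : ℝ) ≤ b := by exact_mod_cast hb
    rw [← div_le_iff₀ hden]
    linarith [Nat.lt_floor_add_one (d ^ 2 / (72 * n * k))]

lemma exists_approx_EQ_of_sq_le {n k : ℕ} {d : ℝ} (hk : 1 ≤ k) (hd : 0 < d) (hdn : d < n)
    (hkd : 72 * n * k ≤ d ^ 2) (y : Fin n → Bool) :
    ∃ (D R : ℕ) (f : (Fin n → Bool) → ℝ), (D : ℝ) ≤ d ∧ R * d ≤ 144 * n * k ∧
      HasDegreeWeightLE D (15 ^ R) f ∧ ∀ x, |f x - EQ y x| ≤ Real.exp (-k) := by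
  obtain ⟨b, hb, hkb, hb_lower, hb_upper⟩ := exists_blockSize hk hd hdn hkd
  have hkm : k ≤ n / b + 1 := ((Nat.le_div_iff_mul_le hb).mpr hkb).trans (Nat.le_succ _)
  have hbm : b * (n / b + 1) ≤ 2 * n := by
    linarith [Nat.mul_div_le n b, (Nat.le_mul_of_pos_left b hk).trans hkb]
  obtain ⟨R, f, hR, hf, happrox⟩ := exists_approx_EQ hb hk hkm y
  have hbR : (b : ℝ) * R ≤ d := by
    refine le_of_sq_le_sq ?_ hd.le
    calc ((b : ℝ) * R) ^ 2 ≤ ((b : ℝ) * (6 * √((n / b + 1 : ℕ) * k))) ^ 2 := by gcongr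
      _ = (36 * (k : ℝ) * b) * (b * (n / b + 1) : ℕ) := by
          rw [mul_pow, mul_pow, Real.sq_sqrt (by positivity)]
          push_cast
          ring
      _ ≤ (36 * (k : ℝ) * b) * (2 * n : ℕ) := by gcongr
      _ ≤ d ^ 2 := by push_cast; linarith
  refine ⟨b * R, R, f, by exact_mod_cast hbR, ?_, hf, happrox⟩
  refine le_of_mul_le_mul_right ?_ hd
  calc R * d * d = R * d ^ 2 := by ring
    _ ≤ R * (2 * b * (72 * n * k)) := by gcongr
    _ = 144 * n * k * (b * R) := by ring
    _ ≤ 144 * n * k * d := by gcongr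

lemma exists_hasDegreeWeightLE_approx_EQ {n : ℕ} {L d : ℝ} (hL : 72 ≤ L) (hd : 0 < d)
    (hdn : d < n) (hnL : n * L ≤ d ^ 2) (y : Fin n → Bool) :
    ∃ (D : ℕ) (f : (Fin n → Bool) → ℝ), (D : ℝ) ≤ d ∧
      HasDegreeWeightLE D (2 ^ (8 * n * L / d)) f ∧
      ∀ x, |f x - EQ y x| ≤ Real.exp (-(L / 144)) := by
  set k := ⌊L / 72⌋₊
  have hk : 1 ≤ k := (Nat.one_le_floor_iff _).mpr (by linarith)
  have hk_le : (k : ℝ) ≤ L / 72 := Nat.floor_le (by positivity)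
  have hle_k : L / 144 ≤ k := by
    have hk' : (1 : ℝ) ≤ k := by exact_mod_cast hk
    linarith [Nat.lt_floor_add_one (L / 72)]
  have hnk : (n : ℝ) * k ≤ n * (L / 72) := by gcongr
  obtain ⟨D, R, f, hD, hRd, hf, happrox⟩ := exists_approx_EQ_of_sq_le hk hd hdn (by linarith) y
  refine ⟨D, f, hD, hf.mono le_rfl ?_, fun x ↦ (happrox x).trans (by gcongr)⟩
  have hexponent : (4 * R : ℝ) ≤ 8 * n * L / d := by
    rw [le_div_iff₀ hd]
    linarith
  calc (15 : ℝ) ^ R ≤ 16 ^ R := by gcongr; norm_num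
    _ = 2 ^ (4 * R : ℝ) := by rw [Real.rpow_mul zero_le_two, Real.rpow_natCast]; norm_num
    _ ≤ 2 ^ (8 * n * L / d) := Real.rpow_le_rpow_of_exponent_le one_le_two hexponent

theorem stmt8_general {n : ℕ} {L d : ℝ} (hL : 0 ≤ L) (hd : √(n * L) < d) (y : Fin n → Bool) :
    ∃ p : Finset (Fin n) → ℝ, (∀ S, p S ≠ 0 → (#S : ℝ) ≤ d) ∧
      ∑ S, |p S| ≤ (2 : ℝ) ^ (8 * n * L / d) ∧
      ∀ x, |evalPM p x - EQ y x| ≤ Real.exp (-(L / 144)) := by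
  have hd0 : 0 < d := (Real.sqrt_nonneg _).trans_lt hd
  have hweight : (1 : ℝ) ≤ 2 ^ (8 * n * L / d) := Real.one_le_rpow one_le_two (by positivity)
  suffices ∃ (D : ℕ) (f : (Fin n → Bool) → ℝ), (D : ℝ) ≤ d ∧
      HasDegreeWeightLE D (2 ^ (8 * n * L / d)) f ∧
      ∀ x, |f x - EQ y x| ≤ Real.exp (-(L / 144)) by
    obtain ⟨D, f, hD, ⟨p, hdeg, hweight, heval⟩, happrox⟩ := this
    exact ⟨p, fun S hS ↦ le_trans (by exact_mod_cast hdeg S hS) hD, hweight,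
      fun x ↦ heval x ▸ happrox x⟩
  rcases lt_or_ge L 72 with hL72 | hL72
  · refine ⟨0, fun _ ↦ 1 / 2, by simpa using hd0.le, (HasDegreeWeightLE.const _).mono le_rfl ?_,
      fun x ↦ ?_⟩
    · exact (by norm_num [abs_of_pos] : |(1 / 2 : ℝ)| ≤ 1).trans hweight
    · calc |1 / 2 - EQ y x| = 1 / 2 := by rw [EQ]; split_ifs <;> norm_num [abs_of_pos]
        _ ≤ Real.exp (-(L / 144)) := by linarith [Real.add_one_le_exp (-(L / 144))]
  rcases le_or_gt (n : ℝ) d with hnd | hdn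
  · exact ⟨n, EQ y, hnd, (hasDegreeWeightLE_EQ y).mono le_rfl hweight,
      fun x ↦ by simp [Real.exp_nonneg]⟩
  · exact exists_hasDegreeWeightLE_approx_EQ hL72 hd0 hdn ((Real.sqrt_lt' hd0).mp hd).le y

theorem stmt8 :
    ∃ c₁ c₂ : ℝ, 0 < c₁ ∧ 0 < c₂ ∧
      ∀ (n : ℕ), 2 ≤ n →
        ∀ t : ℝ, 0 < t →
          ∀ y : Fin n → Bool,
            ∀ d : ℝ, Real.sqrt ((n : ℝ) * t * Real.log n) < d →
              ∃ p : Finset (Fin n) → ℝ,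
                (∀ S : Finset (Fin n), p S ≠ 0 → (S.card : ℝ) ≤ d) ∧
                (∑ S : Finset (Fin n), |p S|) ≤
                  (2 : ℝ) ^ (c₁ * (n : ℝ) * t * (Real.log n) ^ 2 / d) ∧
                ∀ x, |evalPM p x - EQ y x| ≤ (n : ℝ) ^ (-(c₂ * t)) := by
  refine ⟨16, 1 / 144, by norm_num, by norm_num, fun n hn t ht y d hd ↦ ?_⟩
  have hn' : (2 : ℝ) ≤ n := by exact_mod_cast hn
  have hlog : 1 / 2 ≤ Real.log n :=
    (by linarith [Real.log_two_gt_d9] : 1 / 2 ≤ Real.log 2).trans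
      (Real.log_le_log two_pos hn')
  have hd0 : 0 < d := (Real.sqrt_nonneg _).trans_lt hd
  obtain ⟨p, hdeg, hweight, happrox⟩ :=
    stmt8_general (L := t * Real.log n) (by positivity) (by rwa [← mul_assoc]) y
  refine ⟨p, hdeg, hweight.trans ?_, fun x ↦ (happrox x).trans_eq ?_⟩
  · gcongr 2 ^ (?_ / d)
    · exact one_le_two
    · nlinarith [mul_le_mul_of_nonneg_left hlog (by positivity : 0 ≤ n * t * Real.log n)]
  · rw [Real.rpow_def_of_pos (by positivity)]
    ring_nf
end

section
/- For all integers n, k, K with 2 ≤ k < K ≤ n, there exist symmetric probability distributions μ and ν on {0,1}^n that are perfectly k-wise indistinguishable and satisfy E_{X∼μ}[AND_K(X)] − E_{Y∼ν}[AND_K(Y)] ≥ sqrt(2^{−4K+3} · Σ_{d=k+1}^{K} C(2K, K+d)²), where AND_K(x) = ∏_{i=1}^{K} x_i is the AND of the first K bits of x. -/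
open Finset

/-- `AND_K : {0,1}^n → {0,1}`, the AND of the first `K` bits. -/
def andK (n K : ℕ) (x : Fin n → Bool) : ℝ :=
  if ∀ i : Fin n, (i : ℕ) < K → x i = true then 1 else 0

/-!
Mixtures of product distributions `Bernoulli(t)^n` are symmetric, their marginals on `S` are
mixtures of polynomials in `t` of degree at most `#S`, and `AND_K` has expectation `t ^ K` under
`Bernoulli(t)^n`. Hence it suffices to find nodes `t j ∈ [0, 1]` and signed weights `g j` that
annihilate `1, t, …, t ^ k`: the normalised positive and negative parts of `g` are the mixing
weights of `μ` and `ν`, and the gap is `2 ∑ j, g j * t j ^ K / ∑ j, |g j|`.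

With `t = cos² x` at the nodes `x = π j / (2K + 1)`, the power `t ^ m` is a cosine polynomial in
`2x` of degree `m` with coefficients proportional to `C(2m, m + d)`. Take `g` proportional to
the part of `t ^ K` of frequencies `k < d ≤ K`. Discrete orthogonality gives the vanishing moments
and the value of `∑ j, g j * t j ^ K`, and Cauchy–Schwarz bounds `∑ j, |g j|` by the `ℓ²` norm
of `g`.
-/

open Polynomial Real

section Marginals

variable {n : ℕ}

/-- The probability, as a polynomial in `t`, that independent `Bernoulli(t)` bits agree with `z`
on `S`. -/
noncomputable def agreementPoly (S : Finset (Fin n)) (z : Fin n → Bool) : ℝ[X] :=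
  ∏ i ∈ S, if z i = true then X else 1 - X

lemma eval_agreementPoly (S : Finset (Fin n)) (z : Fin n → Bool) (t : ℝ) :
    (agreementPoly S z).eval t = ∏ i ∈ S, if z i = true then t else 1 - t := by
  rw [agreementPoly, eval_prod]
  exact prod_congr rfl fun i _ => by split_ifs <;> simp

lemma natDegree_agreementPoly_le (S : Finset (Fin n)) (z : Fin n → Bool) :
    (agreementPoly S z).natDegree ≤ #S := by
  have natDegree_factor_le (b : Bool) : (if b = true then X else 1 - X : ℝ[X]).natDegree ≤ 1 := by
    split_ifs <;> compute_degree
  simpa [agreementPoly] using (natDegree_prod_le S _).trans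
    (sum_le_card_nsmul S _ 1 fun i _ => natDegree_factor_le (z i))

/-- The product distribution `Bernoulli(t)^n` on `{0,1}^n`, given by its probability mass
function. -/
noncomputable def bernoulliProd (t : ℝ) (x : Fin n → Bool) : ℝ :=
  (agreementPoly univ x).eval t

lemma bernoulliProd_eq_pow_wt (t : ℝ) (x : Fin n → Bool) :
    bernoulliProd t x = t ^ wt x * (1 - t) ^ (n - wt x) := by
  have card_false : #{i | ¬x i = true} = n - wt x := by
    rw [filter_not, ← compl_eq_univ_sdiff, card_compl, Fintype.card_fin, wt]
  rw [bernoulliProd, eval_agreementPoly, prod_ite, prod_const, prod_const, card_false, wt]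

lemma bernoulliProd_nonneg {t : ℝ} (ht : t ∈ Set.Icc 0 1) (x : Fin n → Bool) :
    0 ≤ bernoulliProd t x := by
  rw [bernoulliProd_eq_pow_wt]
  exact mul_nonneg (pow_nonneg ht.1 _) (pow_nonneg (sub_nonneg.2 ht.2) _)

lemma marg_bernoulliProd (t : ℝ) (S : Finset (Fin n)) (z : Fin n → Bool) :
    marg (bernoulliProd t) S z = (agreementPoly S z).eval t := by
  have sum_bit (i : Fin n) :
      ∑ b : Bool, (if i ∈ S → b = z i then if b = true then t else 1 - t else 0) =
        if i ∈ S then if z i = true then t else 1 - t else 1 := by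
    by_cases hi : i ∈ S <;> cases z i <;> simp [hi]
  calc marg (bernoulliProd t) S z
      = ∑ x : Fin n → Bool, ∏ i,
          if i ∈ S → x i = z i then if x i = true then t else 1 - t else 0 := by
        simp_rw [Fintype.prod_ite_zero, ← eval_agreementPoly]
        rfl
    _ = ∏ i, ∑ b : Bool, if i ∈ S → b = z i then if b = true then t else 1 - t else 0 := by
        rw [prod_univ_sum, Fintype.piFinset_univ]
    _ = (agreementPoly S z).eval t := by
        simp_rw [sum_bit, eval_agreementPoly, prod_ite_mem, univ_inter]

lemma sum_eq_marg_empty (μ : (Fin n → Bool) → ℝ) (z : Fin n → Bool) :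
    ∑ x, μ x = marg μ ∅ z := by
  simp [marg]

lemma sum_mul_andK_eq_marg (μ : (Fin n → Bool) → ℝ) (K : ℕ) :
    ∑ x, μ x * andK n K x = marg μ {i : Fin n | (i : ℕ) < K} fun _ => true := by
  simp [marg, andK]

end Marginals

section Mixture

variable {n : ℕ} {ι : Type*} [Fintype ι]

/-- The combination `∑ j, c j • Bernoulli(t j)^n`, a mixture of product distributions when the
weights `c` form a probability vector. -/
noncomputable def bernoulliMixture (c t : ι → ℝ) (x : Fin n → Bool) : ℝ :=
  ∑ j, c j * bernoulliProd (t j) x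

lemma marg_bernoulliMixture (c t : ι → ℝ) (S : Finset (Fin n)) (z : Fin n → Bool) :
    marg (bernoulliMixture c t) S z = ∑ j, c j * (agreementPoly S z).eval (t j) := by
  simp_rw [← marg_bernoulliProd, marg, bernoulliMixture, ← sum_filter, mul_sum]
  rw [sum_comm]

lemma symmDist_bernoulliMixture (c t : ι → ℝ) : SymmDist (bernoulliMixture (n := n) c t) := by
  intro x y hxy
  simp_rw [bernoulliMixture, bernoulliProd_eq_pow_wt, hxy]

lemma isProb_bernoulliMixture {c t : ι → ℝ} (hc : ∀ j, 0 ≤ c j) (hc_sum : ∑ j, c j = 1)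
    (ht : ∀ j, t j ∈ Set.Icc 0 1) : IsProb (bernoulliMixture (n := n) c t) := by
  refine ⟨fun x => sum_nonneg fun j _ => mul_nonneg (hc j) (bernoulliProd_nonneg (ht j) x), ?_⟩
  simp [sum_eq_marg_empty _ fun _ => true, marg_bernoulliMixture, agreementPoly, hc_sum]

lemma sum_bernoulliMixture_mul_andK {K : ℕ} (hK : K ≤ n) (c t : ι → ℝ) :
    ∑ x, bernoulliMixture c t x * andK n K x = ∑ j, c j * t j ^ K := by
  simp [sum_mul_andK_eq_marg, marg_bernoulliMixture, agreementPoly, Fin.card_filter_val_lt, hK]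

lemma sum_mul_eval_eq_of_moments_eq {R : Type*} [CommSemiring R] {k : ℕ} {c c' t : ι → R}
    (hmoments : ∀ m ≤ k, ∑ j, c j * t j ^ m = ∑ j, c' j * t j ^ m)
    {P : R[X]} (hP : P.natDegree ≤ k) :
    ∑ j, c j * P.eval (t j) = ∑ j, c' j * P.eval (t j) := by
  have sum_mul_eval (a : ι → R) :
      ∑ j, a j * P.eval (t j) = ∑ m ∈ range (k + 1), P.coeff m * ∑ j, a j * t j ^ m := by
    simp_rw [eval_eq_sum_range' (Nat.lt_succ_of_le hP), mul_sum]
    rw [sum_comm]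
    simp_rw [mul_left_comm]
  rw [sum_mul_eval, sum_mul_eval]
  exact sum_congr rfl fun m hm => by rw [hmoments m (Nat.lt_succ_iff.1 (mem_range.1 hm))]

lemma perfIndist_bernoulliMixture {k : ℕ} {c c' t : ι → ℝ}
    (hmoments : ∀ m ≤ k, ∑ j, c j * t j ^ m = ∑ j, c' j * t j ^ m) :
    PerfIndist (bernoulliMixture (n := n) c t) (bernoulliMixture c' t) k := by
  intro S hS z
  rw [marg_bernoulliMixture, marg_bernoulliMixture]
  exact sum_mul_eval_eq_of_moments_eq hmoments ((natDegree_agreementPoly_le S z).trans hS)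

end Mixture

section SignedWeights

variable {ι : Type*} [Fintype ι]

lemma sum_posPart_mul_sub_sum_negPart_mul (g f : ι → ℝ) :
    ∑ j, (g j)⁺ * f j - ∑ j, (g j)⁻ * f j = ∑ j, g j * f j := by
  simp_rw [← sum_sub_distrib, ← sub_mul, posPart_sub_negPart]

lemma sum_negPart_eq_sum_posPart {g : ι → ℝ} (hg : ∑ j, g j = 0) :
    ∑ j, (g j)⁻ = ∑ j, (g j)⁺ := by
  have sum_sub := sum_posPart_mul_sub_sum_negPart_mul g 1
  simp only [Pi.one_apply, mul_one, hg] at sum_sub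
  exact (sub_eq_zero.1 sum_sub).symm

lemma two_mul_sum_posPart_eq_sum_abs {g : ι → ℝ} (hg : ∑ j, g j = 0) :
    2 * ∑ j, (g j)⁺ = ∑ j, |g j| := by
  calc 2 * ∑ j, (g j)⁺ = ∑ j, (g j)⁺ + ∑ j, (g j)⁻ := by
        rw [sum_negPart_eq_sum_posPart hg, two_mul]
    _ = ∑ j, |g j| := by simp_rw [← sum_add_distrib, posPart_add_negPart]

lemma sq_two_mul_sum_posPart_le {g : ι → ℝ} (hg : ∑ j, g j = 0) :
    (2 * ∑ j, (g j)⁺) ^ 2 ≤ Fintype.card ι * ∑ j, g j ^ 2 := by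
  simpa [two_mul_sum_posPart_eq_sum_abs hg] using
    sq_sum_le_card_mul_sum_sq (s := univ) (f := fun j => |g j|)

lemma sum_posPart_pos {g : ι → ℝ} (hg : ∑ j, g j = 0) (hg_ne : g ≠ 0) : 0 < ∑ j, (g j)⁺ := by
  obtain ⟨j, hj⟩ := Function.ne_iff.1 hg_ne
  have sum_abs_pos : 0 < ∑ j, |g j| :=
    sum_pos' (fun j _ => abs_nonneg (g j)) ⟨j, mem_univ j, abs_pos.2 hj⟩
  linarith [two_mul_sum_posPart_eq_sum_abs hg]

theorem exists_perfIndist_andK_gap_ge {n k K : ℕ} (hK : K ≤ n) {g t : ι → ℝ}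
    (ht : ∀ j, t j ∈ Set.Icc 0 1) (hmoments : ∀ m ≤ k, ∑ j, g j * t j ^ m = 0)
    (hpos : 0 < ∑ j, g j * t j ^ K) :
    ∃ μ ν : (Fin n → Bool) → ℝ, IsProb μ ∧ IsProb ν ∧ SymmDist μ ∧ SymmDist ν ∧
      PerfIndist μ ν k ∧
      ∑ x, μ x * andK n K x - ∑ x, ν x * andK n K x ≥
        √(4 * (∑ j, g j * t j ^ K) ^ 2 / (Fintype.card ι * ∑ j, g j ^ 2)) := by
  have hg_sum : ∑ j, g j = 0 := by simpa using hmoments 0 (Nat.zero_le k)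
  have hg_ne : g ≠ 0 := by rintro rfl; simp at hpos
  set s := ∑ j, (g j)⁺ with hs
  have hs_pos : 0 < s := sum_posPart_pos hg_sum hg_ne
  have sum_weights_sub (m : ℕ) : ∑ j, (g j)⁺ / s * t j ^ m - ∑ j, (g j)⁻ / s * t j ^ m =
      (∑ j, g j * t j ^ m) / s := by
    simp_rw [div_mul_eq_mul_div, ← sum_div, ← sub_div, sum_posPart_mul_sub_sum_negPart_mul]
  refine ⟨bernoulliMixture (fun j => (g j)⁺ / s) t, bernoulliMixture (fun j => (g j)⁻ / s) t,
    isProb_bernoulliMixture (fun j => by positivity) ?_ ht,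
    isProb_bernoulliMixture (fun j => by positivity) ?_ ht,
    symmDist_bernoulliMixture _ _, symmDist_bernoulliMixture _ _,
    perfIndist_bernoulliMixture fun m hm => ?_, ?_⟩
  · rw [← sum_div, ← hs, div_self hs_pos.ne']
  · rw [← sum_div, sum_negPart_eq_sum_posPart hg_sum, ← hs, div_self hs_pos.ne']
  · rw [← sub_eq_zero, sum_weights_sub, hmoments m hm, zero_div]
  · rw [sum_bernoulliMixture_mul_andK hK, sum_bernoulliMixture_mul_andK hK, sum_weights_sub]
    refine Real.sqrt_le_iff.2 ⟨by positivity, ?_⟩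
    calc 4 * (∑ j, g j * t j ^ K) ^ 2 / (Fintype.card ι * ∑ j, g j ^ 2)
        ≤ 4 * (∑ j, g j * t j ^ K) ^ 2 / (2 * s) ^ 2 := by
          gcongr
          exact sq_two_mul_sum_posPart_le hg_sum
      _ = ((∑ j, g j * t j ^ K) / s) ^ 2 := by
          field_simp
          ring

end SignedWeights

section CosinePolynomials

lemma cos_mul_two_mul_cos_pow (φ x : ℝ) (n : ℕ) :
    cos φ * (2 * cos x) ^ n = ∑ r ∈ range (n + 1), n.choose r * cos (φ + (2 * r - n) * x) := by
  have exp_expansion : Complex.exp (φ * Complex.I) * (2 * Complex.cos x) ^ n =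
      ∑ r ∈ range (n + 1), n.choose r *
        Complex.exp (((φ + (2 * r - n) * x : ℝ) : ℂ) * Complex.I) := by
    rw [Complex.two_cos, add_pow, mul_sum]
    refine sum_congr rfl fun r hr => ?_
    rw [← Complex.exp_nat_mul, ← Complex.exp_nat_mul, ← Complex.exp_add, mul_comm (Complex.exp _),
      mul_right_comm, ← Complex.exp_add, mul_comm]
    push_cast [Nat.cast_sub (Nat.lt_succ_iff.1 (mem_range.1 hr))]
    ring_nf
  have re_expansion := congrArg Complex.re exp_expansion
  rw [show (2 * Complex.cos x) ^ n = (((2 * cos x) ^ n : ℝ) : ℂ) by push_cast; rfl,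
    Complex.re_mul_ofReal, Complex.exp_ofReal_mul_I_re, Complex.re_sum] at re_expansion
  simpa only [← Complex.ofReal_natCast, Complex.re_ofReal_mul, Complex.exp_ofReal_mul_I_re]
    using re_expansion

/-- The angle `π j / N`; the doubled angles are those of the `N`-th roots of unity. -/
noncomputable def node (N : ℕ) (j : Fin N) : ℝ := π * j / N

lemma sum_cos_node (N : ℕ) (d : ℤ) :
    ∑ j, cos (2 * d * node N j) = if (N : ℤ) ∣ d then (N : ℝ) else 0 := by
  obtain rfl | hN := eq_or_ne N 0
  · simp
  have hζ := Complex.isPrimitiveRoot_exp N hN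
  set ζ := Complex.exp (2 * π * Complex.I / N) with hζ_def
  have cos_eq_re (j : Fin N) : cos (2 * d * node N j) = ((ζ ^ d) ^ (j : ℕ)).re := by
    rw [← Complex.exp_ofReal_mul_I_re, hζ_def, ← Complex.exp_int_mul, ← Complex.exp_nat_mul, node]
    push_cast
    ring_nf
  simp_rw [cos_eq_re, ← Complex.re_sum, Fin.sum_univ_eq_sum_range fun j => (ζ ^ d) ^ j]
  split_ifs with hd
  · simp [(hζ.zpow_eq_one_iff_dvd d).2 hd]
  · have pow_eq_one : (ζ ^ d) ^ N = 1 := by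
      rw [← zpow_natCast, zpow_comm, zpow_natCast, hζ.pow_eq_one, one_zpow]
    rw [geom_sum_eq (mt (hζ.zpow_eq_one_iff_dvd d).1 hd), pow_eq_one]
    simp

lemma sum_cos_node_of_abs_lt {N : ℕ} {d : ℤ} (hd : |d| < N) :
    ∑ j, cos (2 * d * node N j) = if d = 0 then (N : ℝ) else 0 := by
  rw [sum_cos_node]
  congr 1
  exact propext ⟨fun hdvd => Int.eq_zero_of_abs_lt_dvd hdvd hd, fun h => h ▸ dvd_zero _⟩

lemma sum_cos_mul_cos_node {N d e : ℕ} (hd : 0 < d) (hde : d + e < N) :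
    ∑ j, cos (2 * d * node N j) * cos (2 * e * node N j) = if d = e then (N : ℝ) / 2 else 0 := by
  have product_to_sum (x : ℝ) : cos (2 * d * x) * cos (2 * e * x) =
      (cos (2 * (d - e : ℤ) * x) + cos (2 * (d + e : ℤ) * x)) / 2 := by
    rw [eq_div_iff two_ne_zero, mul_comm, ← mul_assoc, two_mul_cos_mul_cos]
    push_cast
    ring_nf
  simp_rw [product_to_sum, ← sum_div, sum_add_distrib]
  rw [sum_cos_node_of_abs_lt (by rw [abs_lt]; lia), sum_cos_node_of_abs_lt (by rw [abs_lt]; lia),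
    if_neg (by lia : ¬(d + e : ℤ) = 0), add_zero, ite_div, zero_div]
  simp only [sub_eq_zero, Nat.cast_inj]

lemma sum_cos_node_mul_pow {N d m : ℕ} (hdm : d + m < N) :
    ∑ j, cos (2 * d * node N j) * (cos (node N j) ^ 2) ^ m =
      N * (2 * m).choose (m + d) / 4 ^ m := by
  -- Expanding with phase `-2dx` leaves only `r = m + d`; for `d > m` this is out of range and the
  -- binomial coefficient vanishes, so no case split on truncated `m - d` arises.
  have expansion (x : ℝ) : cos (2 * d * x) * (cos x ^ 2) ^ m * 4 ^ m =
      ∑ r ∈ range (2 * m + 1), (2 * m).choose r * cos (2 * (r - (m + d : ℕ) : ℤ) * x) := by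
    calc cos (2 * d * x) * (cos x ^ 2) ^ m * 4 ^ m
        = cos (-(2 * d * x)) * (2 * cos x) ^ (2 * m) := by
          rw [cos_neg, pow_mul, mul_pow, mul_pow]
          ring
      _ = _ := by
          rw [cos_mul_two_mul_cos_pow]
          refine sum_congr rfl fun r _ => ?_
          push_cast
          ring_nf
  have sum_frequency (r : ℕ) (hr : r ∈ range (2 * m + 1)) :
      ∑ j, cos (2 * (r - (m + d : ℕ) : ℤ) * node N j) = if r = m + d then (N : ℝ) else 0 := by
    rw [mem_range] at hr
    rw [sum_cos_node_of_abs_lt (by rw [abs_lt]; lia)]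
    simp only [sub_eq_zero, Nat.cast_inj]
  rw [eq_div_iff (by positivity), sum_mul]
  simp_rw [expansion]
  rw [sum_comm]
  simp_rw [← mul_sum]
  rw [sum_congr rfl fun r hr => by rw [sum_frequency r hr]]
  simp_rw [mul_ite, mul_zero, sum_ite_eq', mem_range]
  split_ifs with h
  · ring
  · rw [Nat.choose_eq_zero_of_lt (by lia), Nat.cast_zero, mul_zero]

/-- The cosine polynomial `∑ d ∈ D, a d * cos (2 d x)`, an even Fourier polynomial in `2x` with
frequencies in `D`. -/
noncomputable def cosPoly (D : Finset ℕ) (a : ℕ → ℝ) (x : ℝ) : ℝ :=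
  ∑ d ∈ D, a d * cos (2 * d * x)

lemma sum_cosPoly_node_mul_pow {N m : ℕ} {D : Finset ℕ} (hD : ∀ d ∈ D, d + m < N) (a : ℕ → ℝ) :
    ∑ j, cosPoly D a (node N j) * (cos (node N j) ^ 2) ^ m =
      N * (∑ d ∈ D, a d * (2 * m).choose (m + d)) / 4 ^ m := by
  simp_rw [cosPoly, sum_mul]
  rw [sum_comm, mul_sum, sum_div]
  refine sum_congr rfl fun d hd => ?_
  simp_rw [mul_assoc (a d), ← mul_sum, sum_cos_node_mul_pow (hD d hd)]
  ring

lemma sum_cosPoly_node_sq {N : ℕ} {D : Finset ℕ} (hD_pos : ∀ d ∈ D, 0 < d)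
    (hD : ∀ d ∈ D, 2 * d < N) (a : ℕ → ℝ) :
    ∑ j, cosPoly D a (node N j) ^ 2 = N * (∑ d ∈ D, a d ^ 2) / 2 := by
  have sum_cosPoly_mul_cos (d : ℕ) (hd : d ∈ D) :
      ∑ j, cosPoly D a (node N j) * cos (2 * d * node N j) = a d * (N / 2) := by
    have orthogonality (e : ℕ) (he : e ∈ D) :
        ∑ j, cos (2 * e * node N j) * cos (2 * d * node N j) = if e = d then (N : ℝ) / 2 else 0 :=
      sum_cos_mul_cos_node (hD_pos e he) (by have := hD e he; have := hD d hd; lia)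
    simp_rw [cosPoly, sum_mul]
    rw [sum_comm]
    simp_rw [mul_assoc (a _), ← mul_sum]
    rw [sum_congr rfl fun e he => by rw [orthogonality e he]]
    simp [hd]
  calc ∑ j, cosPoly D a (node N j) ^ 2
      = ∑ d ∈ D, a d * ∑ j, cosPoly D a (node N j) * cos (2 * d * node N j) := by
        simp_rw [mul_sum]
        rw [sum_comm]
        refine sum_congr rfl fun j _ => ?_
        rw [sq]
        nth_rw 2 [cosPoly]
        rw [mul_sum]
        exact sum_congr rfl fun d _ => mul_left_comm _ _ _
    _ = ∑ d ∈ D, a d * (a d * (N / 2)) :=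
        sum_congr rfl fun d hd => by rw [sum_cosPoly_mul_cos d hd]
    _ = N * (∑ d ∈ D, a d ^ 2) / 2 := by
        rw [mul_sum, sum_div]
        exact sum_congr rfl fun d _ => by ring

end CosinePolynomials

section BinomialTail

variable {k K N : ℕ}

/-- `4 ^ K / 2` times the part of `(cos x ^ 2) ^ K` of frequencies `k < d ≤ K` in `2x`; its values
at the nodes are the signed weights defining `μ` and `ν`. -/
noncomputable def cosPowTail (k K : ℕ) : ℝ → ℝ :=
  cosPoly (Icc (k + 1) K) fun d => (2 * K).choose (K + d)

lemma sum_cosPowTail_node_mul_pow_eq_zero (hN : 2 * K < N) {m : ℕ} (hm : m ≤ k) :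
    ∑ j, cosPowTail k K (node N j) * (cos (node N j) ^ 2) ^ m = 0 := by
  have choose_eq_zero (d : ℕ) (hd : d ∈ Icc (k + 1) K) : (2 * m).choose (m + d) = 0 :=
    Nat.choose_eq_zero_of_lt (by grind)
  rw [cosPowTail, sum_cosPoly_node_mul_pow (by grind),
    sum_eq_zero fun d hd => by rw [choose_eq_zero d hd, Nat.cast_zero, mul_zero], mul_zero,
    zero_div]

lemma sum_cosPowTail_node_mul_pow_self (hN : 2 * K < N) :
    ∑ j, cosPowTail k K (node N j) * (cos (node N j) ^ 2) ^ K =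
      N * (∑ d ∈ Icc (k + 1) K, ((2 * K).choose (K + d) : ℝ) ^ 2) / 4 ^ K := by
  rw [cosPowTail, sum_cosPoly_node_mul_pow (by grind)]
  simp_rw [sq]

lemma sum_cosPowTail_node_sq (hN : 2 * K < N) :
    ∑ j, cosPowTail k K (node N j) ^ 2 =
      N * (∑ d ∈ Icc (k + 1) K, ((2 * K).choose (K + d) : ℝ) ^ 2) / 2 :=
  sum_cosPoly_node_sq (by grind) (by grind) _

lemma sum_sq_choose_tail_pos (hkK : k < K) :
    0 < ∑ d ∈ Icc (k + 1) K, ((2 * K).choose (K + d) : ℝ) ^ 2 :=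
  sum_pos' (fun d _ => sq_nonneg _) ⟨K, mem_Icc.2 ⟨hkK, le_rfl⟩, by simp [← two_mul]⟩

end BinomialTail

theorem stmt9_general (n k K : ℕ) (hkK : k < K) (hKn : K ≤ n) :
    ∃ μ ν : (Fin n → Bool) → ℝ, IsProb μ ∧ IsProb ν ∧ SymmDist μ ∧ SymmDist ν ∧
      PerfIndist μ ν k ∧
      (∑ x : Fin n → Bool, μ x * andK n K x) - (∑ x : Fin n → Bool, ν x * andK n K x) ≥
        Real.sqrt ((8 / 2 ^ (4 * K)) *
          ∑ d ∈ Finset.Icc (k + 1) K, (((2 * K).choose (K + d) : ℝ)) ^ 2) := by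
  set Q := ∑ d ∈ Icc (k + 1) K, ((2 * K).choose (K + d) : ℝ) ^ 2
  have hQ : 0 < Q := sum_sq_choose_tail_pos hkK
  have hN : 2 * K < 2 * K + 1 := Nat.lt_succ_self _
  have moment_K := sum_cosPowTail_node_mul_pow_self (k := k) hN
  have gap_eq (N : ℝ) (hN : N ≠ 0) :
      4 * (N * Q / 4 ^ K) ^ 2 / (N * (N * Q / 2)) = 8 / 2 ^ (4 * K) * Q := by
    rw [show (2 : ℝ) ^ (4 * K) = (4 ^ K) ^ 2 by rw [← pow_mul', pow_mul, pow_mul]; norm_num]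
    field_simp
    ring
  have exists_gap := exists_perfIndist_andK_gap_ge (k := k) hKn
    (fun j => ⟨sq_nonneg _, cos_sq_le_one (node (2 * K + 1) j)⟩)
    (fun m hm => sum_cosPowTail_node_mul_pow_eq_zero hN hm)
    (by rw [moment_K]; positivity)
  rwa [moment_K, sum_cosPowTail_node_sq hN, Fintype.card_fin, gap_eq _ (by positivity)]
    at exists_gap

theorem stmt9 (n k K : ℕ) (hk : 2 ≤ k) (hkK : k < K) (hKn : K ≤ n) :
    ∃ μ ν : (Fin n → Bool) → ℝ, IsProb μ ∧ IsProb ν ∧ SymmDist μ ∧ SymmDist ν ∧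
      PerfIndist μ ν k ∧
      (∑ x : Fin n → Bool, μ x * andK n K x) - (∑ x : Fin n → Bool, ν x * andK n K x) ≥
        Real.sqrt ((8 / 2 ^ (4 * K)) *
          ∑ d ∈ Finset.Icc (k + 1) K, (((2 * K).choose (K + d) : ℝ)) ^ 2) :=
  stmt9_general n k K hkK hKn
end

section
/- Let n, K, w be integers with 1 ≤ K, 0 ≤ w ≤ K, and n ≥ 64K, and let p_w be the unique univariate real polynomial of degree at most K with p_w(1 − 2h/n) = C(K,w)·C(n−K,h−w)/C(n,h) for every integer 0 ≤ h ≤ n. Then for every integer k ≥ 1 there exists a univariate real polynomial q of degree at most k such that |p_w(t) − q(t)| ≤ 4·√K·exp(−k²/(1156·K)) for all t ∈ [−1, 1]. -/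
/-- The probability that a uniformly random string in `{0,1}^n` of Hamming weight `h`
has exactly `w` ones among its first `K` coordinates: `C(K,w)·C(n-K,h-w)/C(n,h)`,
where out-of-range binomial coefficients are `0`. -/
noncomputable def pval (n K w h : ℕ) : ℝ :=
  if w ≤ h then (K.choose w : ℝ) * ((n - K).choose (h - w) : ℝ) / (n.choose h : ℝ) else 0

/-!
Substituting `h = n(1 - t)/2`, `p_w` is an explicit product of two falling factorials. On the
ellipse `|1 - x| + |1 + x| ≤ 2(1 + ε)` the factors at `s = n(1 - x)/2` and `n - s` have modulus
essentially at most `|s| + nε - i` and `|n - s| + nε - j`, so by Vandermonde the whole product is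
comparable to a single falling factorial of `n(1 + 3ε)`, and `|p_w| ≤ M exp(4Kε)` there.

In the Joukowski coordinate `x = (z + z⁻¹)/2` a Chebyshev series is a Laurent polynomial in `z`, and
the ellipse is the circle `|z| = e^L` with `1 + ε = cosh L`. Parseval on this circle and
Cauchy–Schwarz bound the Chebyshev tail beyond degree `k` by `2M √K exp(4Kε - kL)`. Since
`ε ≤ L²`, the choice `L = k/(8K)` gives `exp(-k²/(16K))`.
-/

open Polynomial Finset

section Chebyshev

/-- The Chebyshev series with coefficients `c`, truncated after degree `m`. -/
noncomputable def chebyshevSum (c : ℕ → ℝ) (m : ℕ) : ℝ[X] :=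
  ∑ j ∈ range (m + 1), c j • Chebyshev.T ℝ j

/-- The polynomial `z ^ m * f ((z + z⁻¹) / 2)`, where `f = chebyshevSum c m`: clearing the
denominator turns Chebyshev coefficients into ordinary ones. -/
noncomputable def joukowskiLift (c : ℕ → ℝ) (m : ℕ) : ℂ[X] :=
  ∑ j ∈ range (m + 1), C (c j / 2 : ℂ) * (X ^ (m + j) + X ^ (m - j))

theorem exists_eq_chebyshevSum {p : ℝ[X]} {m : ℕ} (hp : p.natDegree ≤ m) :
    ∃ c, p = chebyshevSum c m := by
  have hmem : p ∈ degreeLE ℝ m := mem_degreeLE.2 (degree_le_of_natDegree_le hp)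
  rw [← (Chebyshev.chebyshevTsequence ℝ).span_degreeLE (by simp),
    show Set.Iic m = range (m + 1) by ext; simp,
    Submodule.mem_span_image_finset_iff_exists_fun'] at hmem
  obtain ⟨c, hc⟩ := hmem
  exact ⟨c, hc.symm⟩

theorem natDegree_chebyshevSum_le (c : ℕ → ℝ) (m : ℕ) : (chebyshevSum c m).natDegree ≤ m := by
  refine natDegree_sum_le_of_forall_le _ _ fun j hj ↦ (natDegree_smul_le _ _).trans ?_
  simpa using Nat.lt_succ_iff.1 (mem_range.1 hj)

theorem chebyshevT_eval_joukowski {z : ℂ} (hz : z ≠ 0) (j : ℕ) :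
    (Chebyshev.T ℂ j).eval ((z + z⁻¹) / 2) = (z ^ j + z⁻¹ ^ j) / 2 := by
  have h := Chebyshev.T_complex_cosh (Complex.log z) j
  rwa [Complex.cosh, Complex.cosh, Complex.exp_neg, Complex.exp_neg, Int.cast_natCast,
    Complex.exp_nat_mul, Complex.exp_log hz, ← inv_pow] at h

theorem joukowskiLift_eval (c : ℕ → ℝ) (m : ℕ) {z : ℂ} (hz : z ≠ 0) :
    (joukowskiLift c m).eval z = z ^ m * aeval ((z + z⁻¹) / 2) (chebyshevSum c m) := by
  simp only [joukowskiLift, chebyshevSum, eval_finsetSum, map_sum, map_smul, mul_sum]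
  refine sum_congr rfl fun j hj ↦ ?_
  have hjm : j ≤ m := Nat.lt_succ_iff.1 (mem_range.1 hj)
  simp only [Chebyshev.aeval_T, chebyshevT_eval_joukowski hz, eval_mul, eval_C, eval_add, eval_pow,
    eval_X, pow_add, pow_sub₀ z hz hjm, Complex.real_smul, inv_pow]
  ring

theorem joukowskiLift_coeff_add (c : ℕ → ℝ) {m j : ℕ} (hj : j ∈ Ioc 0 m) :
    (joukowskiLift c m).coeff (m + j) = c j / 2 := by
  obtain ⟨hj0, hjm⟩ := mem_Ioc.1 hj
  rw [joukowskiLift, finsetSum_coeff, sum_eq_single_of_mem j (mem_range.2 (by lia))]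
  · simp [coeff_X_pow, show m + j ≠ m - j by lia]
  · intro i _ hij
    simp [coeff_X_pow, hij.symm, show m + j ≠ m - i by lia]

theorem sum_sq_norm_coeff_mul_pow_le (P : ℂ[X]) {r M : ℝ} (hr : 0 < r)
    (hM : ∀ z : ℂ, ‖z‖ = r → ‖P.eval z‖ ≤ M) (s : Finset ℕ) :
    ∑ i ∈ s, (‖P.coeff i‖ * r ^ i) ^ 2 ≤ M ^ 2 := by
  set Q : ℂ[X] := P.comp (C (r : ℂ) * X)
  have hcoeff (i : ℕ) : ‖Q.coeff i‖ = ‖P.coeff i‖ * r ^ i := by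
    simp [Q, comp_C_mul_X_coeff, abs_of_pos hr]
  have hQ : ∀ z ∈ Metric.sphere (0 : ℂ) |1|, ‖Q.eval z‖ ^ 2 ≤ M ^ 2 := by
    intro z hz
    have hz1 : ‖z‖ = 1 := by simpa using hz
    gcongr
    simpa [Q] using hM (r * z) (by simp [hz1, abs_of_pos hr])
  have hint : CircleIntegrable (fun z ↦ ‖Q.eval z‖ ^ 2) 0 1 :=
    (by fun_prop : Continuous fun z ↦ ‖Q.eval z‖ ^ 2).continuousOn.circleIntegrable'
  calc ∑ i ∈ s, (‖P.coeff i‖ * r ^ i) ^ 2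
      = ∑ i ∈ s, ‖Q.coeff i‖ ^ 2 := by simp only [hcoeff]
    _ ≤ ∑ i ∈ Q.support, ‖Q.coeff i‖ ^ 2 := by
        rw [← sum_filter_ne_zero]
        exact sum_le_sum_of_subset_of_nonneg (fun i hi ↦ by simpa using (mem_filter.1 hi).2)
          fun _ _ _ ↦ sq_nonneg _
    _ = Real.circleAverage (fun z ↦ ‖Q.eval z‖ ^ 2) 0 1 := Q.sum_sq_norm_coeff_eq_circleAverage
    _ ≤ M ^ 2 := Real.circleAverage_mono_on_of_le_circle hint hQ

theorem sum_sq_chebyshevCoeff_mul_pow_le (c : ℕ → ℝ) (m : ℕ) {r M : ℝ} (hr : 0 < r)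
    (hM : ∀ z : ℂ, ‖z‖ = r → ‖aeval ((z + z⁻¹) / 2) (chebyshevSum c m)‖ ≤ M) :
    ∑ j ∈ Ioc 0 m, (c j * r ^ j) ^ 2 ≤ (2 * M) ^ 2 := by
  have hlift (z : ℂ) (hz : ‖z‖ = r) : ‖(joukowskiLift c m).eval z‖ ≤ r ^ m * M := by
    have hz0 : z ≠ 0 := norm_pos_iff.1 (hz ▸ hr)
    rw [joukowskiLift_eval c m hz0, norm_mul, norm_pow, hz]
    gcongr
    exact hM z hz
  have hterm : ∀ j ∈ Ioc 0 m, (‖(joukowskiLift c m).coeff (m + j)‖ * r ^ (m + j)) ^ 2 =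
      (r ^ m / 2) ^ 2 * (c j * r ^ j) ^ 2 := by
    intro j hj
    have hnorm : ‖(c j / 2 : ℂ)‖ = |c j| / 2 := by simp
    rw [joukowskiLift_coeff_add c hj, hnorm, pow_add, mul_pow, div_pow, sq_abs]
    ring
  have hparseval := sum_sq_norm_coeff_mul_pow_le _ hr hlift ((Ioc 0 m).map (addLeftEmbedding m))
  simp only [sum_map, addLeftEmbedding_apply] at hparseval
  rw [sum_congr rfl hterm, ← mul_sum] at hparseval
  refine le_of_mul_le_mul_left (hparseval.trans_eq ?_) (by positivity : 0 < (r ^ m / 2) ^ 2)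
  ring

theorem abs_eval_chebyshevSum_sub_le (c : ℕ → ℝ) {k m : ℕ} (hkm : k ≤ m) {t : ℝ} (ht : |t| ≤ 1) :
    |(chebyshevSum c m).eval t - (chebyshevSum c k).eval t| ≤ ∑ j ∈ Ioc k m, |c j| := by
  have htail : (chebyshevSum c m).eval t - (chebyshevSum c k).eval t =
      ∑ j ∈ Ioc k m, c j * (Chebyshev.T ℝ j).eval t := by
    rw [← Ico_add_one_add_one_eq_Ioc, sum_Ico_eq_sub _ (Nat.add_le_add_right hkm 1)]
    simp only [chebyshevSum, eval_finsetSum, eval_smul, smul_eq_mul]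
  rw [htail]
  refine (abs_sum_le_sum_abs _ _).trans (sum_le_sum fun j _ ↦ ?_)
  rw [abs_mul]
  exact mul_le_of_le_one_right (abs_nonneg _) (Chebyshev.abs_eval_T_real_le_one j ht)

theorem exists_natDegree_le_abs_sub_le_of_norm_le_on_ellipse {p : ℝ[X]} {m : ℕ}
    (hp : p.natDegree ≤ m) {r M : ℝ} (hr : 1 ≤ r)
    (hM : ∀ z : ℂ, ‖z‖ = r → ‖aeval ((z + z⁻¹) / 2) p‖ ≤ M) (k : ℕ) :
    ∃ q : ℝ[X], q.natDegree ≤ k ∧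
      ∀ t : ℝ, |t| ≤ 1 → |p.eval t - q.eval t| ≤ √m * (2 * M / r ^ k) := by
  have hr0 : 0 < r := zero_lt_one.trans_le hr
  have hM0 : 0 ≤ M := (norm_nonneg _).trans (hM r (by simp [abs_of_pos hr0]))
  rcases le_total m k with hmk | hkm
  · exact ⟨p, hp.trans hmk, fun t _ ↦ by rw [sub_self, abs_zero]; positivity⟩
  obtain ⟨c, rfl⟩ := exists_eq_chebyshevSum hp
  refine ⟨chebyshevSum c k, natDegree_chebyshevSum_le c k, fun t ht ↦ ?_⟩
  have hsq : ∑ j ∈ Ioc k m, |c j| ^ 2 ≤ (2 * M / r ^ k) ^ 2 := by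
    rw [div_pow, le_div_iff₀ (by positivity), sum_mul]
    calc ∑ j ∈ Ioc k m, |c j| ^ 2 * (r ^ k) ^ 2
        ≤ ∑ j ∈ Ioc k m, (c j * r ^ j) ^ 2 := by
          refine sum_le_sum fun j hj ↦ ?_
          rw [sq_abs, mul_pow]
          gcongr
          exact (mem_Ioc.1 hj).1.le
      _ ≤ ∑ j ∈ Ioc 0 m, (c j * r ^ j) ^ 2 :=
          sum_le_sum_of_subset_of_nonneg (Ioc_subset_Ioc_left k.zero_le) fun _ _ _ ↦ sq_nonneg _
      _ ≤ (2 * M) ^ 2 := sum_sq_chebyshevCoeff_mul_pow_le c m hr0 hM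
  calc |(chebyshevSum c m).eval t - (chebyshevSum c k).eval t|
      ≤ ∑ j ∈ Ioc k m, |c j| := abs_eval_chebyshevSum_sub_le c hkm ht
    _ ≤ √(m * (2 * M / r ^ k) ^ 2) := by
        refine Real.le_sqrt_of_sq_le (sq_sum_le_card_mul_sum_sq.trans ?_)
        gcongr
        simp
    _ = √m * (2 * M / r ^ k) := by
        rw [Real.sqrt_mul (Nat.cast_nonneg m), Real.sqrt_sq (by positivity)]

end Chebyshev

section Ellipse

theorem norm_one_sub_joukowski_add_norm_one_add_joukowski {z : ℂ} (hz : z ≠ 0) :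
    ‖1 - (z + z⁻¹) / 2‖ + ‖1 + (z + z⁻¹) / 2‖ = ‖z‖ + ‖z‖⁻¹ := by
  have hsub : 1 - (z + z⁻¹) / 2 = -((z - 1) ^ 2 / (2 * z)) := by field_simp; ring
  have hadd : 1 + (z + z⁻¹) / 2 = (z + 1) ^ 2 / (2 * z) := by field_simp; ring
  have hparallelogram := parallelogram_law_with_norm ℝ z 1
  rw [norm_one] at hparallelogram
  have hz' : ‖z‖ ≠ 0 := norm_ne_zero_iff.2 hz
  rw [hsub, hadd, norm_neg, norm_div, norm_div, norm_pow, norm_pow, norm_mul, Complex.norm_ofNat]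
  field_simp
  linarith

theorem cosh_le_one_add_sq {x : ℝ} (hx : |x| ≤ 1) : Real.cosh x ≤ 1 + x ^ 2 := by
  have hx2 : x ^ 2 ≤ 1 := (sq_le_one_iff_abs_le_one x).2 hx
  calc Real.cosh x ≤ Real.exp (x ^ 2 / 2) := Real.cosh_le_exp_half_sq x
    _ ≤ 1 / (1 - x ^ 2 / 2) :=
        Real.exp_bound_div_one_sub_of_interval (by positivity) (by linarith)
    _ ≤ 1 + x ^ 2 := by
        rw [div_le_iff₀ (by linarith)]
        nlinarith [mul_nonneg (sq_nonneg x) (sub_nonneg.2 hx2)]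

theorem exists_natDegree_le_abs_sub_le_of_norm_le_exp {p : ℝ[X]} {m : ℕ} (hp : p.natDegree ≤ m)
    {M A : ℝ} (hA : 0 < A) (hmA : m ≤ 2 * A)
    (hM : ∀ (x : ℂ) (ε : ℝ), 0 ≤ ε → ‖1 - x‖ + ‖1 + x‖ ≤ 2 * (1 + ε) →
      ‖aeval x p‖ ≤ M * Real.exp (A * ε)) (k : ℕ) :
    ∃ q : ℝ[X], q.natDegree ≤ k ∧
      ∀ t : ℝ, |t| ≤ 1 → |p.eval t - q.eval t| ≤ 2 * M * √m * Real.exp (-k ^ 2 / (4 * A)) := by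
  have hM0 : 0 ≤ M := by simpa using (norm_nonneg _).trans (hM 0 0 le_rfl (by norm_num))
  rcases le_total m k with hmk | hkm
  · exact ⟨p, hp.trans hmk, fun t _ ↦ by rw [sub_self, abs_zero]; positivity⟩
  set L : ℝ := k / (2 * A) with hL
  have hL0 : 0 ≤ L := by positivity
  have hL1 : |L| ≤ 1 := by
    rw [abs_of_nonneg hL0, hL, div_le_one₀ (by positivity)]
    exact (Nat.cast_le.2 hkm).trans hmA
  have hellipse (z : ℂ) (hz : ‖z‖ = Real.exp L) :
      ‖aeval ((z + z⁻¹) / 2) p‖ ≤ M * Real.exp (A * L ^ 2) := by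
    have hz0 : z ≠ 0 := norm_pos_iff.1 (hz ▸ Real.exp_pos L)
    refine hM _ _ (sq_nonneg L) ?_
    rw [norm_one_sub_joukowski_add_norm_one_add_joukowski hz0, hz, ← Real.exp_neg]
    linarith [Real.cosh_eq L, cosh_le_one_add_sq hL1]
  obtain ⟨q, hq, happrox⟩ :=
    exists_natDegree_le_abs_sub_le_of_norm_le_on_ellipse hp (Real.one_le_exp hL0) hellipse k
  refine ⟨q, hq, fun t ht ↦ (happrox t ht).trans_eq ?_⟩
  have hexponent : A * L ^ 2 - k * L = -k ^ 2 / (4 * A) := by rw [hL]; field_simp; ring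
  rw [← hexponent, Real.exp_sub, ← Real.exp_nat_mul]
  ring

end Ellipse

section DescPochhammer

theorem norm_sub_natCast_le {s : ℂ} {δ : ℝ} (hδ : 0 ≤ δ) (hs : ‖s‖ - s.re ≤ δ) {i : ℕ}
    (hi : 2 * i ≤ ‖s‖) : ‖s - i‖ ≤ ‖s‖ + δ - i := by
  have hi0 : (0 : ℝ) ≤ i := i.cast_nonneg
  have hsq : ‖s - i‖ ^ 2 = ‖s‖ ^ 2 - 2 * i * s.re + i ^ 2 := by
    simp only [← Complex.normSq_eq_norm_sq, Complex.normSq_apply, Complex.sub_re, Complex.sub_im,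
      Complex.natCast_re, Complex.natCast_im]
    ring
  refine le_of_sq_le_sq ?_ (by linarith)
  nlinarith [mul_le_mul_of_nonneg_left hs hi0, mul_nonneg hδ (sub_nonneg.2 hi)]

theorem norm_descPochhammer_eval_le_descFactorial {s : ℂ} {δ : ℝ} (hδ : 0 ≤ δ)
    (hs : ‖s‖ - s.re ≤ δ) {w : ℕ} (hw : 2 * w ≤ ‖s‖) :
    ‖(descPochhammer ℂ w).eval s‖ ≤ ⌈‖s‖ + δ⌉₊.descFactorial w := by
  rw [descPochhammer_eval_eq_prod_range, norm_prod, Nat.descFactorial_eq_prod_range, Nat.cast_prod]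
  refine prod_le_prod (fun _ _ ↦ norm_nonneg _) fun i hi ↦ ?_
  have hiw : (i : ℝ) ≤ w := Nat.cast_le.2 (mem_range.1 hi).le
  calc ‖s - i‖ ≤ ‖s‖ + δ - i := norm_sub_natCast_le hδ hs (by linarith)
    _ ≤ ⌈‖s‖ + δ⌉₊ - i := by gcongr; exact Nat.le_ceil _
    _ ≤ (⌈‖s‖ + δ⌉₊ - i : ℕ) := sub_le_iff_le_add.2 (mod_cast le_tsub_add)

theorem norm_descPochhammer_eval_mul_two_pow_le_descFactorial {s : ℂ} {w : ℕ} (hw : ‖s‖ ≤ 2 * w) :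
    ‖(descPochhammer ℂ w).eval s‖ * 2 ^ w ≤ (7 * w).descFactorial w := by
  rw [descPochhammer_eval_eq_prod_range, norm_prod, Nat.descFactorial_eq_prod_range, Nat.cast_prod,
    ← card_range w, ← prod_const, card_range, ← prod_mul_distrib]
  refine prod_le_prod (fun _ _ ↦ by positivity) fun i hi ↦ ?_
  have hiw : i < w := mem_range.1 hi
  have hiw' : (i : ℝ) ≤ w := Nat.cast_le.2 hiw.le
  have hnorm : ‖s - i‖ ≤ ‖s‖ + i := by simpa using norm_sub_le s i
  rw [Nat.cast_sub (by lia), Nat.cast_mul, Nat.cast_ofNat]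
  linarith

-- If `‖s‖ < 2w`, the bound `‖s - i‖ ≤ ‖s‖ + δ - i` can fail; replacing `‖s‖` by `7w` costs `7w` in
-- `A`, which the gain `2 ^ w` in the product outweighs once `n ≥ 12K`.
theorem exists_norm_descPochhammer_eval_mul_two_pow_le {s : ℂ} {δ : ℝ} (hδ : 0 ≤ δ)
    (hs : ‖s‖ - s.re ≤ δ) (w : ℕ) :
    ∃ A d : ℕ, (A : ℝ) ≤ ‖s‖ + δ + 1 + 7 * d ∧
      ‖(descPochhammer ℂ w).eval s‖ * 2 ^ d ≤ A.descFactorial w := by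
  rcases le_total (2 * (w : ℝ)) ‖s‖ with hw | hw
  · refine ⟨⌈‖s‖ + δ⌉₊, 0, ?_, ?_⟩
    · simpa using (Nat.ceil_lt_add_one (by positivity : 0 ≤ ‖s‖ + δ)).le
    · simpa using norm_descPochhammer_eval_le_descFactorial hδ hs hw
  · refine ⟨7 * w, w, ?_, norm_descPochhammer_eval_mul_two_pow_le_descFactorial hw⟩
    push_cast
    linarith [norm_nonneg s]

theorem choose_mul_descFactorial_mul_descFactorial_le (A B a b : ℕ) :
    (a + b).choose a * (A.descFactorial a * B.descFactorial b) ≤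
      (A + B).descFactorial (a + b) := by
  have hvandermonde : A.choose a * B.choose b ≤ (A + B).choose (a + b) := by
    rw [Nat.add_choose_eq]
    exact single_le_sum (f := fun ij : ℕ × ℕ ↦ A.choose ij.1 * B.choose ij.2)
      (fun _ _ ↦ Nat.zero_le _) (mem_antidiagonal.2 rfl : (a, b) ∈ antidiagonal (a + b))
  simp only [Nat.descFactorial_eq_factorial_mul_choose]
  calc (a + b).choose a * (a.factorial * A.choose a * (b.factorial * B.choose b))
      = (a + b).choose a * a.factorial * b.factorial * (A.choose a * B.choose b) := by ring
    _ = (a + b).factorial * (A.choose a * B.choose b) := by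
        rw [Nat.choose_symm_add, Nat.add_choose_mul_factorial_mul_factorial]
    _ ≤ (a + b).factorial * (A + B).choose (a + b) := Nat.mul_le_mul_left _ hvandermonde

theorem descFactorial_le_descFactorial_mul_exp {N n K : ℕ} (hKn : K < n) {y : ℝ} (hy : 0 ≤ y)
    (hN : (N : ℝ) ≤ n + y) :
    (N.descFactorial K : ℝ) ≤ n.descFactorial K * Real.exp (K * (y / (n - K))) := by
  have hpos : (0 : ℝ) < n - K := sub_pos.2 (Nat.cast_lt.2 hKn)
  have hpow : Real.exp (K * (y / (n - K))) = ∏ _i ∈ range K, Real.exp (y / (n - K)) := by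
    rw [Real.exp_nat_mul, prod_const, card_range]
  rw [hpow, Nat.descFactorial_eq_prod_range, Nat.descFactorial_eq_prod_range, Nat.cast_prod,
    Nat.cast_prod, ← prod_mul_distrib]
  refine prod_le_prod (fun _ _ ↦ by positivity) fun i hi ↦ ?_
  have hiK : i < K := mem_range.1 hi
  have hiK' : (i : ℝ) ≤ K := Nat.cast_le.2 hiK.le
  rw [Nat.cast_sub (by lia : i ≤ n)]
  calc ((N - i : ℕ) : ℝ) ≤ (n - i) + y := by
        rcases le_total i N with hiN | hNi
        · rw [Nat.cast_sub hiN]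
          linarith
        · rw [Nat.sub_eq_zero_of_le hNi, Nat.cast_zero]
          linarith
    _ ≤ (n - i) + (n - i) * (y / (n - K)) := by
        gcongr
        rw [mul_div_assoc', le_div_iff₀ hpos, mul_comm]
        gcongr
    _ = (n - i) * (y / (n - K) + 1) := by ring
    _ ≤ (n - i) * Real.exp (y / (n - K)) := by
        gcongr
        · linarith
        · exact Real.add_one_le_exp _

theorem mul_div_sub_le_add_mul_log_two {n K : ℝ} (hK : 0 < K) (hn : 12 * K ≤ n) {ε d : ℝ}
    (hε : 0 ≤ ε) (hd : 0 ≤ d) :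
    K * ((3 * (n * ε) + 2 + 7 * d) / (n - K)) ≤ 2 / 11 + 4 * K * ε + d * Real.log 2 := by
  have hlog : 7 / 11 ≤ Real.log 2 := by linarith [Real.log_two_gt_d9]
  have hgap : 11 * K ≤ n - K := by linarith
  suffices K * ((3 * (n * ε) + 2 + 7 * d) / (n - K)) ≤ 2 / 11 + 4 * K * ε + d * (7 / 11) by
    linarith [mul_le_mul_of_nonneg_left hlog hd]
  rw [mul_div_assoc', div_le_iff₀ (by linarith)]
  nlinarith [mul_nonneg hd (sub_nonneg.2 hn), mul_nonneg (mul_nonneg hK.le hε) (sub_nonneg.2 hgap),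
    mul_nonneg (mul_nonneg hK.le hε) hK.le]

theorem choose_mul_norm_descPochhammer_eval_le {n a b : ℕ} (hK : 0 < a + b)
    (hn : 12 * (a + b) ≤ n) {s : ℂ} {ε : ℝ} (hε : 0 ≤ ε) (hs : ‖s‖ + ‖n - s‖ ≤ n * (1 + ε)) :
    (a + b).choose a * (‖(descPochhammer ℂ a).eval s‖ * ‖(descPochhammer ℂ b).eval (n - s)‖) ≤
      n.descFactorial (a + b) * Real.exp (2 / 11 + 4 * (a + b : ℕ) * ε) := by
  have hδ : 0 ≤ n * ε := by positivity
  have hre : ((n : ℂ) - s).re = n - s.re := by simp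
  obtain ⟨A, d, hA, hA'⟩ := exists_norm_descPochhammer_eval_mul_two_pow_le hδ
    (by linarith [Complex.re_le_norm (n - s)] : ‖s‖ - s.re ≤ n * ε) a
  obtain ⟨B, e, hB, hB'⟩ := exists_norm_descPochhammer_eval_mul_two_pow_le hδ
    (by linarith [Complex.re_le_norm s] : ‖n - s‖ - ((n : ℂ) - s).re ≤ n * ε) b
  have hAB : ((A + B : ℕ) : ℝ) ≤ n + (3 * (n * ε) + 2 + 7 * (d + e : ℕ)) := by
    push_cast
    linarith
  have hn' : 12 * ((a + b : ℕ) : ℝ) ≤ n := mod_cast hn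
  have hexponent :=
    mul_div_sub_le_add_mul_log_two (Nat.cast_pos.2 hK) hn' hε (d + e : ℕ).cast_nonneg
  refine le_of_mul_le_mul_right ?_ (by positivity : (0 : ℝ) < 2 ^ (d + e))
  calc (a + b).choose a * (‖(descPochhammer ℂ a).eval s‖ * ‖(descPochhammer ℂ b).eval (n - s)‖) *
        2 ^ (d + e)
      = (a + b).choose a * ((‖(descPochhammer ℂ a).eval s‖ * 2 ^ d) *
          (‖(descPochhammer ℂ b).eval (n - s)‖ * 2 ^ e)) := by ring
    _ ≤ (a + b).choose a * (A.descFactorial a * B.descFactorial b) := by gcongr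
    _ ≤ (A + B).descFactorial (a + b) := by
        exact_mod_cast choose_mul_descFactorial_mul_descFactorial_le A B a b
    _ ≤ n.descFactorial (a + b) * Real.exp ((a + b : ℕ) *
          ((3 * (n * ε) + 2 + 7 * (d + e : ℕ)) / (n - (a + b : ℕ)))) :=
        descFactorial_le_descFactorial_mul_exp (by lia) (by positivity) hAB
    _ ≤ n.descFactorial (a + b) *
          Real.exp (2 / 11 + 4 * (a + b : ℕ) * ε + (d + e : ℕ) * Real.log 2) := by gcongr
    _ = n.descFactorial (a + b) * Real.exp (2 / 11 + 4 * (a + b : ℕ) * ε) * 2 ^ (d + e) := by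
        rw [Real.exp_add, Real.exp_nat_mul, Real.exp_log two_pos]
        ring

end DescPochhammer

section Hypergeometric

theorem descFactorial_mul_descFactorial_mul_choose {n a b h : ℕ} (hn : a + b ≤ n) (hh : h ≤ n)
    (hah : a ≤ h) :
    h.descFactorial a * (n - h).descFactorial b * n.choose h =
      (n - (a + b)).choose (h - a) * n.descFactorial (a + b) := by
  rcases lt_or_ge (n - h) b with hb | hb
  · have hchoose : n - (a + b) < h - a := by lia
    rw [Nat.descFactorial_of_lt hb, Nat.choose_eq_zero_of_lt hchoose, mul_zero, zero_mul, zero_mul]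
  obtain ⟨i, rfl⟩ := Nat.exists_eq_add_of_le hah
  obtain ⟨j, hnh⟩ := Nat.exists_eq_add_of_le hb
  obtain rfl : n = a + i + (b + j) := by lia
  have hsplit : a + i + (b + j) = a + b + (i + j) := by ring
  have hi := Nat.factorial_mul_descFactorial (Nat.le_add_right a i)
  have hj := Nat.factorial_mul_descFactorial (Nat.le_add_right b j)
  have hij := Nat.factorial_mul_descFactorial hn
  have hchoose := Nat.add_choose_mul_factorial_mul_factorial (a + i) (b + j)
  have hchoose' := Nat.add_choose_mul_factorial_mul_factorial i j
  rw [← Nat.choose_symm_add] at hchoose hchoose'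
  rw [Nat.add_sub_cancel_left] at hi hj ⊢
  rw [hsplit, Nat.add_sub_cancel_left, ← hsplit] at hij
  rw [show a + i + (b + j) - (a + b) = i + j by lia, Nat.add_sub_cancel_left]
  refine Nat.eq_of_mul_eq_mul_left (by positivity : 0 < i.factorial * j.factorial) ?_
  calc i.factorial * j.factorial *
        ((a + i).descFactorial a * (b + j).descFactorial b * (a + i + (b + j)).choose (a + i))
      = (a + i + (b + j)).choose (a + i) * (i.factorial * (a + i).descFactorial a) *
          (j.factorial * (b + j).descFactorial b) := by ring
    _ = (i + j).choose i * i.factorial * j.factorial * (a + i + (b + j)).descFactorial (a + b) := by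
        rw [hi, hj, hchoose, hchoose', hij]
    _ = i.factorial * j.factorial *
          ((i + j).choose i * (a + i + (b + j)).descFactorial (a + b)) := by ring

theorem pval_eq_descFactorial {n a b h : ℕ} (hn : a + b ≤ n) (hh : h ≤ n) :
    pval n (a + b) a h = (a + b).choose a / n.descFactorial (a + b) *
      (h.descFactorial a * (n - h).descFactorial b) := by
  rw [pval]
  split_ifs with hah
  · have hdesc : (n.descFactorial (a + b) : ℝ) ≠ 0 :=
      Nat.cast_ne_zero.2 (Nat.descFactorial_pos.2 hn).ne'
    have hchoose : (n.choose h : ℝ) ≠ 0 := Nat.cast_ne_zero.2 (Nat.choose_pos hh).ne'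
    have hkey : (h.descFactorial a * (n - h).descFactorial b * n.choose h : ℝ) =
        (n - (a + b)).choose (h - a) * n.descFactorial (a + b) :=
      mod_cast descFactorial_mul_descFactorial_mul_choose hn hh hah
    field_simp
    linear_combination -((a + b).choose a : ℝ) * hkey
  · rw [Nat.descFactorial_of_lt (not_le.1 hah), Nat.cast_zero, zero_mul, mul_zero]

/-- The polynomial `p_w` of the theorem, for `K = a + b` and `w = a`: substituting `h = n(1 - t)/2`
in `C(a + b, a) · h(h-1)⋯(h-a+1) · (n-h)(n-h-1)⋯(n-h-b+1) / (n(n-1)⋯(n-a-b+1))`. -/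
noncomputable def hypergeometricPoly (n a b : ℕ) : ℝ[X] :=
  C ((a + b).choose a / n.descFactorial (a + b) : ℝ) *
    ((descPochhammer ℝ a).comp (C (n / 2 : ℝ) * (1 - X)) *
      (descPochhammer ℝ b).comp (C (n / 2 : ℝ) * (1 + X)))

theorem natDegree_hypergeometricPoly_le (n a b : ℕ) :
    (hypergeometricPoly n a b).natDegree ≤ a + b := by
  have hcomp (m : ℕ) {l : ℝ[X]} (hl : l.natDegree ≤ 1) :
      ((descPochhammer ℝ m).comp l).natDegree ≤ m := by
    refine natDegree_comp_le.trans ?_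
    rw [descPochhammer_natDegree]
    exact (Nat.mul_le_mul_left m hl).trans_eq (mul_one m)
  refine (natDegree_C_mul_le _ _).trans (natDegree_mul_le_of_le (hcomp a ?_) (hcomp b ?_)) <;>
    compute_degree

theorem hypergeometricPoly_eval {n a b h : ℕ} (hn0 : n ≠ 0) (hn : a + b ≤ n) (hh : h ≤ n) :
    (hypergeometricPoly n a b).eval (1 - 2 * h / n : ℝ) = pval n (a + b) a h := by
  have hn0' : (n : ℝ) ≠ 0 := Nat.cast_ne_zero.2 hn0
  have hones : (n / 2 * (1 - (1 - 2 * h / n)) : ℝ) = h := by field_simp; ring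
  have hzeros : (n / 2 * (1 + (1 - 2 * h / n)) : ℝ) = (n - h : ℕ) := by
    rw [Nat.cast_sub hh]; field_simp; ring
  simp only [hypergeometricPoly, eval_mul, eval_C, eval_comp, eval_sub, eval_add, eval_one, eval_X,
    hones, hzeros, descPochhammer_eval_eq_descFactorial, pval_eq_descFactorial hn hh]

theorem eq_hypergeometricPoly {n a b : ℕ} (hn0 : n ≠ 0) (hn : a + b ≤ n) {p : ℝ[X]}
    (hdeg : p.natDegree ≤ a + b)
    (hp : ∀ h : ℕ, h ≤ n → p.eval (1 - 2 * h / n : ℝ) = pval n (a + b) a h) :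
    p = hypergeometricPoly n a b := by
  have hn0' : (n : ℝ) ≠ 0 := Nat.cast_ne_zero.2 hn0
  refine eq_of_natDegree_lt_card_of_eval_eq p _ (ι := Fin (n + 1))
    (f := fun h ↦ 1 - 2 * (h : ℕ) / n) ?_ ?_ ?_
  · intro i j hij
    simpa [hn0', Fin.ext_iff] using hij
  · intro h
    have hh : (h : ℕ) ≤ n := Nat.lt_succ_iff.1 h.isLt
    rw [hp h hh, hypergeometricPoly_eval hn0 hn hh]
  · rw [Fintype.card_fin]
    exact Nat.lt_succ_iff.2
      ((max_le hdeg (natDegree_hypergeometricPoly_le n a b)).trans hn)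

theorem norm_aeval_hypergeometricPoly_le {n a b : ℕ} (hK : 0 < a + b) (hn : 12 * (a + b) ≤ n)
    (x : ℂ) (ε : ℝ) (hε : 0 ≤ ε) (hx : ‖1 - x‖ + ‖1 + x‖ ≤ 2 * (1 + ε)) :
    ‖aeval x (hypergeometricPoly n a b)‖ ≤
      Real.exp (2 / 11) * Real.exp (4 * (a + b : ℕ) * ε) := by
  have hdesc : (0 : ℝ) < n.descFactorial (a + b) :=
    Nat.cast_pos.2 (Nat.descFactorial_pos.2 (by lia))
  have haeval (m : ℕ) (y : ℂ) : aeval y (descPochhammer ℝ m) = (descPochhammer ℂ m).eval y := by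
    rw [← descPochhammer_map (algebraMap ℝ ℂ), eval_map_algebraMap]
  set s : ℂ := n / 2 * (1 - x) with hs
  have hns : (n : ℂ) / 2 * (1 + x) = n - s := by rw [hs]; ring
  have hfoci : ‖s‖ + ‖n - s‖ ≤ n * (1 + ε) := by
    rw [← hns, hs, norm_mul, norm_mul, ← mul_add, norm_div, Complex.norm_natCast,
      Complex.norm_ofNat]
    calc n / 2 * (‖1 - x‖ + ‖1 + x‖) ≤ n / 2 * (2 * (1 + ε)) := by gcongr
      _ = n * (1 + ε) := by ring
  have hnorm : ‖aeval x (hypergeometricPoly n a b)‖ = (a + b).choose a *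
      (‖(descPochhammer ℂ a).eval s‖ * ‖(descPochhammer ℂ b).eval (n - s)‖) /
        n.descFactorial (a + b) := by
    simp only [hypergeometricPoly, map_mul, aeval_C, map_div₀, map_natCast, aeval_comp,
      Complex.coe_algebraMap, Complex.ofReal_ofNat, aeval_sub, map_one, aeval_X, ← hs, haeval,
      map_add, hns, Complex.norm_mul, Complex.norm_div, RCLike.norm_natCast]
    ring
  rw [hnorm, ← Real.exp_add, div_le_iff₀' hdesc]
  exact choose_mul_norm_descPochhammer_eval_le hK hn hε hfoci

end Hypergeometric

theorem stmt10_general (n K w : ℕ) (hK : 1 ≤ K) (hw : w ≤ K) (hn : 12 * K ≤ n)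
    (p : ℝ[X]) (hdeg : p.natDegree ≤ K)
    (hp : ∀ h : ℕ, h ≤ n → p.eval (1 - 2 * (h : ℝ) / (n : ℝ)) = pval n K w h) (k : ℕ) :
    ∃ q : ℝ[X], q.natDegree ≤ k ∧ ∀ t : ℝ, -1 ≤ t → t ≤ 1 →
      |p.eval t - q.eval t| ≤ 3 * √K * Real.exp (-(k : ℝ) ^ 2 / (16 * K)) := by
  obtain ⟨b, rfl⟩ := Nat.exists_eq_add_of_le hw
  obtain rfl := eq_hypergeometricPoly (by lia) (by lia) hdeg hp
  have hK' : (0 : ℝ) < (w + b : ℕ) := Nat.cast_pos.2 hK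
  obtain ⟨q, hq, happrox⟩ := exists_natDegree_le_abs_sub_le_of_norm_le_exp hdeg
    (by positivity : (0 : ℝ) < 4 * (w + b : ℕ)) (by linarith)
    (norm_aeval_hypergeometricPoly_le hK hn) k
  refine ⟨q, hq, fun t ht ht' ↦ (happrox t (abs_le.2 ⟨ht, ht'⟩)).trans ?_⟩
  have hconst : 2 * Real.exp (2 / 11) ≤ 3 := by
    linarith [Real.exp_bound_div_one_sub_of_interval (x := 2 / 11) (by norm_num) (by norm_num)]
  rw [← mul_assoc, show (4 * 4 : ℝ) = 16 by norm_num]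
  gcongr

theorem stmt10 (n K w : ℕ) (hK : 1 ≤ K) (hw : w ≤ K) (hn : 64 * K ≤ n)
    (p : Polynomial ℝ) (hdeg : p.natDegree ≤ K)
    (hp : ∀ h : ℕ, h ≤ n → p.eval (1 - 2 * (h : ℝ) / (n : ℝ)) = pval n K w h) :
    ∀ k : ℕ, 1 ≤ k →
      ∃ q : Polynomial ℝ, q.natDegree ≤ k ∧
        ∀ t : ℝ, -1 ≤ t → t ≤ 1 →
          |p.eval t - q.eval t| ≤
            4 * Real.sqrt (K : ℝ) * Real.exp (-(k : ℝ) ^ 2 / (1156 * (K : ℝ))) := by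
  intro k _
  obtain ⟨q, hq, happrox⟩ := stmt10_general n K w hK hw (by lia) p hdeg hp k
  refine ⟨q, hq, fun t ht ht' ↦ (happrox t ht ht').trans ?_⟩
  rw [neg_div, neg_div]
  gcongr <;> norm_num
end
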